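/- arXiv:1601.02205 — 3 statements merged into one kernel-verified Lean document; each statement's English description precedes it below -/
import Mathlib

section
/- For Lebesgue-almost every x ∈ [0,1), the limit lim_{n→∞} (1/n)·log q_n(x) exists and equals π²/(12·log 2). -/
open Filter MeasureTheory Real Topology

/-- `cfQ a n` is the continued fraction denominator `Q_{n-1}` of the sequence
`a 1, a 2, …` (so `cfQ a 0 = Q_{-1} = 0`, `cfQ a 1 = Q_0 = 1`, and
`Q_n = a_n Q_{n-1} + Q_{n-2}` for `n ≥ 1`). -/
def cfQ (a : ℕ → ℕ) : ℕ → ℤ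
  | 0 => 0
  | 1 => 1
  | n + 2 => (a (n + 1) : ℤ) * cfQ a (n + 1) + cfQ a n

/-- The Gauss map `T x = 1/x − ⌊1/x⌋` for `x ≠ 0`, `T 0 = 0`
(note `(0 : ℝ)⁻¹ = 0` in Lean, so `Int.fract x⁻¹` covers both cases). -/
noncomputable def gaussMap (x : ℝ) : ℝ := Int.fract x⁻¹

/-- The `n`-th partial quotient of `x` (for `n ≥ 1`):
`a_1(x) = ⌊1/x⌋` and `a_n(x) = a_1(T^{n−1} x)`. -/
noncomputable def pq (x : ℝ) (n : ℕ) : ℕ := (⌊(gaussMap^[n - 1] x)⁻¹⌋).toNat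

/-- The denominator `q_n(x)` of the `n`-th convergent `[a_1(x), …, a_n(x)]`. -/
noncomputable def qden (x : ℝ) (n : ℕ) : ℤ := cfQ (pq x) (n + 1)


/-! ### Part 1: arithmetic of the denominators -/

lemma gaussMap_nonneg (x : ℝ) : 0 ≤ gaussMap x := Int.fract_nonneg _
lemma gaussMap_lt_one (x : ℝ) : gaussMap x < 1 := Int.fract_lt_one _

lemma gaussMap_irrational {x : ℝ} (hx : Irrational x) : Irrational (gaussMap x) := by
  unfold gaussMap Int.fract
  exact (irrational_inv_iff.mpr hx).sub_intCast _

lemma iter_good {x : ℝ} (hx : Irrational x) (h0 : 0 < x) (h1 : x < 1) (n : ℕ) :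
    Irrational (gaussMap^[n] x) ∧ 0 < gaussMap^[n] x ∧ gaussMap^[n] x < 1 := by
  induction n with
  | zero => exact ⟨hx, h0, h1⟩
  | succ n ih =>
    rw [Function.iterate_succ_apply']
    have h := gaussMap_irrational ih.1
    exact ⟨h, lt_of_le_of_ne (gaussMap_nonneg _) (Ne.symm h.ne_zero), gaussMap_lt_one _⟩

lemma pq_cast {x : ℝ} (hx : Irrational x) (h0 : 0 < x) (h1 : x < 1) (n : ℕ) :
    1 ≤ pq x (n + 1) ∧
      (pq x (n + 1) : ℝ) = (gaussMap^[n] x)⁻¹ - gaussMap^[n + 1] x := by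
  obtain ⟨_, hp, hl⟩ := iter_good hx h0 h1 n
  have h2 : (1 : ℤ) ≤ ⌊(gaussMap^[n] x)⁻¹⌋ := by
    rw [Int.le_floor]
    push_cast
    exact (one_le_inv₀ hp).mpr hl.le
  have h3 : ((pq x (n + 1) : ℕ) : ℤ) = ⌊(gaussMap^[n] x)⁻¹⌋ := by
    unfold pq
    simp only [Nat.add_sub_cancel]
    exact Int.toNat_of_nonneg (by omega)
  refine ⟨by omega, ?_⟩
  rw [Function.iterate_succ_apply']
  have h4 : (pq x (n + 1) : ℝ) = ((⌊(gaussMap^[n] x)⁻¹⌋ : ℤ) : ℝ) := by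
    rw [← h3]; simp
  rw [h4]
  unfold gaussMap
  rw [Int.fract]
  ring

lemma cfQ_facts {x : ℝ} (hx : Irrational x) (h0 : 0 < x) (h1 : x < 1) (n : ℕ) :
    0 ≤ cfQ (pq x) n ∧ cfQ (pq x) n ≤ cfQ (pq x) (n + 1) ∧ 1 ≤ cfQ (pq x) (n + 1) := by
  induction n with
  | zero => simp [cfQ]
  | succ n ih =>
    obtain ⟨i1, i2, i3⟩ := ih
    have ha : (1 : ℤ) ≤ (pq x (n + 1) : ℤ) := by exact_mod_cast (pq_cast hx h0 h1 n).1
    have : cfQ (pq x) (n + 2) = (pq x (n + 1) : ℤ) * cfQ (pq x) (n + 1) + cfQ (pq x) n := rfl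
    refine ⟨by omega, ?_, ?_⟩ <;> rw [this] <;> nlinarith

lemma cfQ_prod {x : ℝ} (hx : Irrational x) (h0 : 0 < x) (h1 : x < 1) (n : ℕ) :
    Real.log ((cfQ (pq x) (n + 1) : ℝ) + cfQ (pq x) n * gaussMap^[n] x)
      = ∑ k ∈ Finset.range n, -Real.log (gaussMap^[k] x) := by
  induction n with
  | zero => simp [cfQ]
  | succ n ih =>
    rw [Finset.sum_range_succ, ← ih]
    obtain ⟨_, hp, hl⟩ := iter_good hx h0 h1 n
    have e : ((cfQ (pq x) (n + 1 + 1) : ℝ) + cfQ (pq x) (n + 1) * gaussMap^[n + 1] x)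
       = ((cfQ (pq x) (n + 1) : ℝ) + cfQ (pq x) n * gaussMap^[n] x) * (gaussMap^[n] x)⁻¹ := by
      have : cfQ (pq x) (n + 1 + 1) = (pq x (n + 1) : ℤ) * cfQ (pq x) (n + 1) + cfQ (pq x) n := rfl
      rw [this]
      push_cast
      rw [(pq_cast hx h0 h1 n).2]
      field_simp
      ring
    obtain ⟨i1, i2, i3⟩ := cfQ_facts hx h0 h1 n
    have j1 : (0 : ℝ) ≤ cfQ (pq x) n := by exact_mod_cast i1
    have j3 : (1 : ℝ) ≤ cfQ (pq x) (n + 1) := by exact_mod_cast i3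
    have := mul_nonneg j1 hp.le
    rw [e, Real.log_mul (by linarith) (by positivity), Real.log_inv]

lemma qden_bounds {x : ℝ} (hx : Irrational x) (h0 : 0 < x) (h1 : x < 1) (n : ℕ) :
    Real.log (qden x n) ≤ ∑ k ∈ Finset.range n, -Real.log (gaussMap^[k] x) ∧
    (∑ k ∈ Finset.range n, -Real.log (gaussMap^[k] x)) - Real.log 2 ≤ Real.log (qden x n) := by
  rw [← cfQ_prod hx h0 h1 n]
  unfold qden
  obtain ⟨_, hp, hl⟩ := iter_good hx h0 h1 n
  obtain ⟨i1, i2, i3⟩ := cfQ_facts hx h0 h1 n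
  have j1 : (0 : ℝ) ≤ cfQ (pq x) n := by exact_mod_cast i1
  have j2 : (cfQ (pq x) n : ℝ) ≤ cfQ (pq x) (n + 1) := by exact_mod_cast i2
  have j3 : (1 : ℝ) ≤ cfQ (pq x) (n + 1) := by exact_mod_cast i3
  have := mul_nonneg j1 hp.le
  constructor
  · exact Real.log_le_log (by linarith) (by linarith)
  · rw [sub_le_iff_le_add, ← Real.log_mul (by linarith) (by norm_num)]
    exact Real.log_le_log (by linarith) (by nlinarith)

/-! ### Part 2: the transfer operator on monotone functions -/

/-- Weights of the normalized transfer operator. -/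
noncomputable def gw (k : ℕ) (x : ℝ) : ℝ := (1 + x) / ((k + 1 + x) * (k + 2 + x))

/-- Inverse branches of the Gauss map. -/
noncomputable def gb (k : ℕ) (x : ℝ) : ℝ := (k + 1 + x)⁻¹

/-- The normalized transfer operator. -/
noncomputable def gP (f : ℝ → ℝ) (x : ℝ) : ℝ := ∑' k : ℕ, gw k x * f (gb k x)

lemma gw_nonneg (k : ℕ) {x : ℝ} (hx : 0 ≤ x) : 0 ≤ gw k x := by
  unfold gw; positivity

lemma gb_mem (k : ℕ) {x : ℝ} (hx : 0 ≤ x) : gb k x ∈ Set.Ioc (0:ℝ) 1 := by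
  unfold gb
  refine ⟨by positivity, inv_le_one_of_one_le₀ ?_⟩
  have : (0:ℝ) ≤ k := by positivity
  linarith

lemma gw_sum (N : ℕ) {x : ℝ} (hx : 0 ≤ x) :
    ∑ k ∈ Finset.range N, gw k x = N / (N + 1 + x) := by
  induction N with
  | zero => simp
  | succ n ih =>
    rw [Finset.sum_range_succ, ih]
    unfold gw
    have h1 : (n : ℝ) + 1 + x ≠ 0 := by positivity
    have h2 : (n : ℝ) + 2 + x ≠ 0 := by positivity
    have h3 : (n : ℝ) + 1 + 1 + x ≠ 0 := by positivity
    push_cast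
    field_simp
    ring

lemma gw_hasSum {x : ℝ} (hx : 0 ≤ x) : HasSum (fun k => gw k x) 1 := by
  rw [hasSum_iff_tendsto_nat_of_nonneg (fun k => gw_nonneg k hx)]
  simp_rw [gw_sum _ hx]
  have := tendsto_natCast_div_add_atTop (𝕜 := ℝ) (1 + x)
  simpa [add_assoc] using this

/-- growth condition at zero -/
def Grow (C : ℝ) (f : ℝ → ℝ) : Prop := ∀ t ∈ Set.Ioc (0:ℝ) 1, |f t| ≤ C / √t

lemma grow_gb {C : ℝ} {f : ℝ → ℝ} (hf : Grow C f) (k : ℕ) {x : ℝ} (hx : 0 ≤ x) :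
    |f (gb k x)| ≤ C * √(k + 1 + x) := by
  have := hf _ (gb_mem k hx)
  unfold gb at *
  rwa [Real.sqrt_inv, div_inv_eq_mul] at this

lemma gP_summable {C : ℝ} {f : ℝ → ℝ} (hf : Grow C f) {x : ℝ} (hx : x ∈ Set.Icc (0:ℝ) 1)
    {y : ℝ} (hy : y ∈ Set.Icc (0:ℝ) 1) :
    Summable (fun k => gw k x * f (gb k y)) := by
  have hC : 0 ≤ C := by
    have := hf 1 (by simp)
    simp at this
    exact (abs_nonneg _).trans this
  have hs : Summable (fun k : ℕ => (2 * C * √2) * (1 / ((k + 1 : ℕ) : ℝ) ^ (3/2 : ℝ))) := by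
    apply Summable.mul_left
    exact (summable_nat_add_iff 1).mpr (Real.summable_one_div_nat_rpow.mpr (by norm_num))
  refine Summable.of_norm_bounded hs (fun k => ?_)
  rw [Real.norm_eq_abs, abs_mul, abs_of_nonneg (gw_nonneg k hx.1)]
  have h1 := grow_gb hf k hy.1
  have hk : (0:ℝ) < (k:ℝ) + 1 := by positivity
  have h2 : √((k:ℝ) + 1 + y) ≤ √2 * √((k:ℝ) + 1) := by
    rw [← Real.sqrt_mul (by norm_num)]
    apply Real.sqrt_le_sqrt
    have : (0:ℝ) ≤ k := by positivity
    linarith [hy.2]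
  have h3 : gw k x ≤ 2 / ((k:ℝ) + 1) ^ 2 := by
    unfold gw
    have := hx.1
    have := hx.2
    apply div_le_div₀ (by norm_num) (by linarith) (by positivity)
    nlinarith
  have h4 : ((k + 1 : ℕ) : ℝ) ^ (3/2 : ℝ) = ((k:ℝ) + 1) ^ 2 / √((k:ℝ) + 1) := by
    push_cast
    rw [Real.sqrt_eq_rpow, ← Real.rpow_natCast, ← Real.rpow_sub hk]
    norm_num
  rw [h4, one_div_div]
  calc gw k x * |f (gb k y)| ≤ 2 / ((k:ℝ) + 1) ^ 2 * (C * (√2 * √((k:ℝ) + 1))) := by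
        gcongr
        exact h1.trans (by gcongr)
    _ = _ := by ring

lemma abel_lemma {w v g : ℕ → ℝ} {A B : ℝ} (hg : Monotone g)
    (hD : ∀ N, 0 ≤ ∑ k ∈ Finset.range N, (w k - v k))
    (hlim : Tendsto (fun N => (∑ k ∈ Finset.range N, (w k - v k)) * g N) atTop (𝓝 0))
    (hA : HasSum (fun k => w k * g k) A) (hB : HasSum (fun k => v k * g k) B) : A ≤ B := by
  have key : ∀ N, ∑ k ∈ Finset.range N, (w k * g k - v k * g k)
      ≤ (∑ k ∈ Finset.range N, (w k - v k)) * g N := by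
    intro N
    induction N with
    | zero => simp
    | succ n ih =>
      have h1 := hD (n + 1)
      have h2 := mul_le_mul_of_nonneg_left (hg (Nat.le_succ n)) h1
      simp only [Finset.sum_range_succ] at *
      simp only [Nat.succ_eq_add_one] at h2
      nlinarith
  have h := le_of_tendsto_of_tendsto' (hA.sub hB).tendsto_sum_nat hlim key
  linarith

lemma gP_mono {C : ℝ} {f : ℝ → ℝ} (hf : Grow C f) (ha : AntitoneOn f (Set.Ioc 0 1)) :
    MonotoneOn (gP f) (Set.Icc 0 1) := by
  intro x hx y hy hxy
  have hC : 0 ≤ C := by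
    have := hf 1 (by simp)
    simp at this
    exact (abs_nonneg _).trans this
  have s1 := gP_summable hf hx hx
  have s2 := gP_summable hf hx hy
  have s3 := gP_summable hf hy hy
  have step1 : gP f x ≤ ∑' k, gw k x * f (gb k y) := by
    refine s1.tsum_le_tsum (fun k => ?_) s2
    refine mul_le_mul_of_nonneg_left ?_ (gw_nonneg k hx.1)
    refine ha (gb_mem k hy.1) (gb_mem k hx.1) ?_
    unfold gb
    have := hx.1
    gcongr
  refine step1.trans ?_
  refine abel_lemma (g := fun k => f (gb k y)) ?_ ?_ ?_ s2.hasSum s3.hasSum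
  · intro i j hij
    refine ha (gb_mem _ hy.1) (gb_mem _ hy.1) ?_
    unfold gb
    have := hy.1
    have : (i:ℝ) ≤ j := by exact_mod_cast hij
    gcongr
  · intro N
    rw [Finset.sum_sub_distrib, gw_sum _ hx.1, gw_sum _ hy.1, sub_nonneg]
    have := hx.1
    gcongr
  · have hl : Tendsto (fun N : ℕ => (C * √2) * (1 / √((N:ℝ) + 1))) atTop (𝓝 0) := by
      rw [← mul_zero (C * √2)]
      apply Tendsto.const_mul
      apply Tendsto.div_atTop tendsto_const_nhds
      exact Real.tendsto_sqrt_atTop.comp (tendsto_atTop_add_const_right _ _ tendsto_natCast_atTop_atTop)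
    refine squeeze_zero_norm (fun N => ?_) hl
    rw [Finset.sum_sub_distrib, gw_sum _ hx.1, gw_sum _ hy.1, norm_mul, Real.norm_eq_abs,
      Real.norm_eq_abs]
    have h1 := grow_gb hf N hy.1
    have hk : (0:ℝ) < (N:ℝ) + 1 := by positivity
    have hN : (0:ℝ) ≤ N := by positivity
    have h2 : √((N:ℝ) + 1 + y) ≤ √2 * √((N:ℝ) + 1) := by
      rw [← Real.sqrt_mul (by norm_num)]
      apply Real.sqrt_le_sqrt
      linarith [hy.2]
    have h3 : |(N:ℝ) / (N + 1 + x) - N / (N + 1 + y)| ≤ 1 / ((N:ℝ) + 1) := by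
      have a1 := hx.1
      have a2 := hy.1
      have a3 := hy.2
      have e : (N:ℝ) / (N + 1 + x) - N / (N + 1 + y)
          = (N * (y - x)) / ((N + 1 + x) * (N + 1 + y)) := by
        have : (N:ℝ) + 1 + x ≠ 0 := by positivity
        have : (N:ℝ) + 1 + y ≠ 0 := by positivity
        field_simp
        ring
      rw [e, abs_of_nonneg (div_nonneg (mul_nonneg hN (by linarith)) (by positivity)),
        div_le_div_iff₀ (by positivity) hk]
      have : N * (y - x) ≤ N := by nlinarith
      have : ((N:ℝ) + 1) * (N + 1) ≤ (N + 1 + x) * (N + 1 + y) :=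
        mul_le_mul (by linarith) (by linarith) hk.le (by positivity)
      nlinarith
    calc _ ≤ 1 / ((N:ℝ) + 1) * (C * (√2 * √((N:ℝ) + 1))) := by
          gcongr
          exact h1.trans (by gcongr)
      _ = C * √2 * (√((N:ℝ) + 1) / ((N:ℝ) + 1)) := by ring
      _ = _ := by rw [Real.sqrt_div_self', one_div]

lemma gP_neg (f : ℝ → ℝ) : gP (fun t => -f t) = fun t => -gP f t := by
  funext x
  unfold gP
  rw [← tsum_neg]
  simp

/-- monotone or antitone with oscillation at most `D`. -/
def Osc (D : ℝ) (f : ℝ → ℝ) : Prop :=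
  (MonotoneOn f (Set.Icc 0 1) ∨ AntitoneOn f (Set.Icc 0 1)) ∧ |f 1 - f 0| ≤ D

lemma Osc.grow {D : ℝ} {f : ℝ → ℝ} (h : Osc D f) : Grow (|f 0| + |f 1|) f := by
  intro t ht
  have ht' : t ∈ Set.Icc (0:ℝ) 1 := ⟨ht.1.le, ht.2⟩
  have h0 : (0:ℝ) ∈ Set.Icc (0:ℝ) 1 := by simp
  have h1 : (1:ℝ) ∈ Set.Icc (0:ℝ) 1 := by simp
  have hb : |f t| ≤ |f 0| + |f 1| := by
    rcases h.1 with h | h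
    · have a := h h0 ht' ht.1.le
      have b := h ht' h1 ht.2
      rw [abs_le]
      constructor <;> linarith [neg_abs_le (f 0), le_abs_self (f 1), abs_nonneg (f 0), abs_nonneg (f 1)]
    · have a := h h0 ht' ht.1.le
      have b := h ht' h1 ht.2
      rw [abs_le]
      constructor <;> linarith [neg_abs_le (f 1), le_abs_self (f 0), abs_nonneg (f 0), abs_nonneg (f 1)]
  refine hb.trans ?_
  rw [le_div_iff₀ (Real.sqrt_pos.mpr ht.1)]
  have : √t ≤ 1 := Real.sqrt_le_one.mpr ht.2
  nlinarith [abs_nonneg (f 0), abs_nonneg (f 1)]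

lemma gP_contract {D C : ℝ} {f : ℝ → ℝ} (hf : Grow C f) (ha : AntitoneOn f (Set.Icc 0 1))
    (hD : |f 1 - f 0| ≤ D) : Osc (D / 2) (gP f) := by
  have hm := gP_mono hf (ha.mono Set.Ioc_subset_Icc_self)
  refine ⟨Or.inl hm, ?_⟩
  have h0 : (0:ℝ) ∈ Set.Icc (0:ℝ) 1 := by simp
  have h1 : (1:ℝ) ∈ Set.Icc (0:ℝ) 1 := by simp
  rw [abs_of_nonneg (sub_nonneg.mpr (hm h0 h1 zero_le_one))]
  have s0 := gP_summable hf h0 h0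
  have s1 := gP_summable hf h1 h1
  have e0 : gP f 0 = 1 / 2 * f 1 + ∑' k, gw (k + 1) 0 * f (gb (k + 1) 0) := by
    unfold gP
    rw [s0.tsum_eq_zero_add]
    congr 1
    unfold gw gb
    norm_num
  have e1 : ∀ k, gw k 1 * f (gb k 1) = 2 * (gw (k + 1) 0 * f (gb (k + 1) 0)) := by
    intro k
    have : gb k 1 = gb (k + 1) 0 := by unfold gb; push_cast; ring_nf
    rw [this, ← mul_assoc]
    congr 1
    unfold gw
    push_cast
    ring_nf
  have e2 : gP f 1 = 2 * ∑' k, gw (k + 1) 0 * f (gb (k + 1) 0) := by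
    unfold gP
    rw [← tsum_mul_left]
    exact tsum_congr e1
  have hs : HasSum (fun k => gw (k + 1) 0) (1 / 2) := by
    have := (gw_hasSum (le_refl (0:ℝ)))
    rw [← hasSum_nat_add_iff' 1] at this
    have e : (1:ℝ) - ∑ i ∈ Finset.range 1, gw i 0 = 1 / 2 := by
      simp [gw]; norm_num
    rwa [e] at this
  have hle : ∑' k, gw (k + 1) 0 * f (gb (k + 1) 0) ≤ 1 / 2 * f 0 := by
    rw [← (hs.mul_right (f 0)).tsum_eq]
    refine Summable.tsum_le_tsum (fun k => ?_) ((summable_nat_add_iff 1).mpr s0)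
      (hs.mul_right (f 0)).summable
    refine mul_le_mul_of_nonneg_left ?_ (gw_nonneg _ le_rfl)
    have := gb_mem (k + 1) (le_refl (0:ℝ))
    exact ha h0 ⟨this.1.le, this.2⟩ this.1.le
  rw [e0, e2]
  linarith [neg_abs_le (f 1 - f 0)]

lemma Osc.gP {D : ℝ} {f : ℝ → ℝ} (h : Osc D f) : Osc (D / 2) (gP f) := by
  rcases h.1 with hm | ha
  · have hg := h.grow
    have hg' : Grow (|f 0| + |f 1|) (fun t => -f t) := by
      intro t ht
      simpa using hg t ht
    have hD : |(-f 1) - (-f 0)| ≤ D := by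
      have := h.2
      rw [abs_sub_comm] at this
      convert this using 2
      ring
    have h2 := gP_contract hg' hm.neg hD
    rw [gP_neg] at h2
    refine ⟨?_, ?_⟩
    · rcases h2.1 with h3 | h3
      · right
        intro x hx y hy hxy
        have := h3 hx hy hxy
        simp only at this
        linarith
      · left
        intro x hx y hy hxy
        have := h3 hx hy hxy
        simp only at this
        linarith
    · have := h2.2
      rw [abs_sub_comm]
      convert this using 2
      ring
  · exact gP_contract h.grow ha h.2

lemma Osc.iter {D : ℝ} {f : ℝ → ℝ} (h : Osc D f) (n : ℕ) :
    Osc (D / 2 ^ n) (_root_.gP^[n] f) := by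
  induction n with
  | zero => simpa using h
  | succ n ih =>
    rw [Function.iterate_succ_apply', pow_succ, ← div_div]
    exact ih.gP

lemma log_grow : Grow 2 (fun t => -Real.log t) := by
  intro t ht
  rw [le_div_iff₀ (Real.sqrt_pos.mpr ht.1), abs_neg]
  have := Real.abs_log_mul_self_rpow_lt t (1/2) ht.1 ht.2 (by norm_num)
  rw [abs_mul, ← Real.sqrt_eq_rpow, abs_of_nonneg (Real.sqrt_nonneg t)] at this
  linarith

lemma log_anti : AntitoneOn (fun t => -Real.log t) (Set.Ioc (0:ℝ) 1) := by
  intro x hx y hy hxy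
  exact neg_le_neg (Real.log_le_log hx.1 hxy)

/-- the log function after one application -/
lemma gP_log_osc : ∃ D, Osc D (gP (fun t => -Real.log t)) :=
  ⟨_, Or.inl (gP_mono log_grow log_anti), le_rfl⟩

/-! ### Part 3: Gauss measure and duality -/

/-- density of the Gauss measure -/
noncomputable def gd (x : ℝ) : ENNReal := ENNReal.ofReal (1 / (1 + x) / Real.log 2)

/-- The Gauss measure. -/
noncomputable def gmu : Measure ℝ := (volume.restrict (Set.Ioc (0:ℝ) 1)).withDensity gd

/-- transfer operator, extended nonnegative version. -/
noncomputable def gL (F : ℝ → ENNReal) (x : ℝ) : ENNReal :=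
  ∑' k : ℕ, ENNReal.ofReal (gw k x) * F (gb k x)

lemma gd_meas : Measurable gd := by unfold gd; fun_prop
lemma gb_meas (k : ℕ) : Measurable (gb k) := by unfold gb; fun_prop
lemma gw_meas (k : ℕ) : Measurable (gw k) := by unfold gw; fun_prop
lemma gaussMap_meas : Measurable gaussMap := by
  unfold gaussMap
  exact measurable_fract.comp measurable_inv

lemma gL_meas {F : ℝ → ENNReal} (hF : Measurable F) : Measurable (gL F) := by
  unfold gL
  exact Measurable.tsum
    (fun k => (gw_meas k).ennreal_ofReal.mul (hF.comp (gb_meas k)))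

lemma gL_iter_meas {F : ℝ → ENNReal} (hF : Measurable F) (n : ℕ) : Measurable (gL^[n] F) := by
  induction n with
  | zero => exact hF
  | succ n ih => rw [Function.iterate_succ_apply']; exact gL_meas ih

lemma lint_gmu {G : ℝ → ENNReal} (hG : Measurable G) :
    ∫⁻ x, G x ∂gmu = ∫⁻ x in Set.Ioc (0:ℝ) 1, gd x * G x := by
  unfold gmu
  rw [lintegral_withDensity_eq_lintegral_mul _ gd_meas hG]
  rfl

lemma gaussMap_gb (k : ℕ) {y : ℝ} (hy : y ∈ Set.Ico (0:ℝ) 1) : gaussMap (gb k y) = y := by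
  unfold gaussMap gb
  rw [inv_inv]
  have : (k:ℝ) + 1 + y = y + ((k + 1 : ℕ) : ℝ) := by push_cast; ring
  rw [this, Int.fract_add_natCast, Int.fract_eq_self.mpr hy]

lemma gb_inj (k : ℕ) : Set.InjOn (gb k) (Set.Ico (0:ℝ) 1) := by
  intro x hx y hy h
  rw [← gaussMap_gb k hx, h, gaussMap_gb k hy]

lemma gb_union : Set.Ioc (0:ℝ) 1 = ⋃ k : ℕ, gb k '' Set.Ico (0:ℝ) 1 := by
  ext x
  simp only [Set.mem_iUnion, Set.mem_image]
  constructor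
  · rintro ⟨h0, h1⟩
    have h2 : 1 ≤ x⁻¹ := (one_le_inv₀ h0).mpr h1
    have h3 : 1 ≤ ⌊x⁻¹⌋₊ := Nat.le_floor (by simpa using h2)
    refine ⟨⌊x⁻¹⌋₊ - 1, x⁻¹ - ⌊x⁻¹⌋₊, ⟨?_, ?_⟩, ?_⟩
    · linarith [Nat.floor_le (zero_le_one.trans h2)]
    · linarith [Nat.lt_floor_add_one x⁻¹]
    · unfold gb
      rw [Nat.cast_sub h3]
      push_cast
      ring_nf
      exact inv_inv x
  · rintro ⟨k, y, hy, rfl⟩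
    exact gb_mem k hy.1

lemma gb_deriv (k : ℕ) {y : ℝ} (hy : y ∈ Set.Ico (0:ℝ) 1) :
    HasDerivWithinAt (gb k) (-((k:ℝ) + 1 + y)⁻¹ ^ 2) (Set.Ico 0 1) y := by
  have hne : (k:ℝ) + 1 + y ≠ 0 := by have := hy.1; positivity
  have h := ((hasDerivAt_id y).const_add ((k:ℝ) + 1)).inv hne
  have h2 : HasDerivAt (gb k) (-((k:ℝ) + 1 + y)⁻¹ ^ 2) y := by
    refine HasDerivAt.congr_deriv (f := gb k) h ?_
    rw [neg_div, inv_pow, one_div, id_eq]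
  exact h2.hasDerivWithinAt

lemma dual {F G : ℝ → ENNReal} (hF : Measurable F) (hG : Measurable G) :
    ∫⁻ x, F x * G (gaussMap x) ∂gmu = ∫⁻ x, gL F x * G x ∂gmu := by
  have m1 : Measurable (fun x => F x * G (gaussMap x)) := hF.mul (hG.comp gaussMap_meas)
  have m2 : Measurable (fun x => gL F x * G x) := (gL_meas hF).mul hG
  rw [lint_gmu m1, lint_gmu m2]
  nth_rw 1 [gb_union]
  rw [← Measure.restrict_congr_set (Ico_ae_eq_Ioc (μ := (volume : Measure ℝ)) (a := (0:ℝ)) (b := 1))]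
  rw [lintegral_iUnion]
  · have : ∀ x, gd x * (gL F x * G x)
        = ∑' k : ℕ, gd x * (ENNReal.ofReal (gw k x) * F (gb k x) * G x) := by
      intro x
      unfold gL
      rw [ENNReal.tsum_mul_left, ENNReal.tsum_mul_right]
    simp_rw [this]
    rw [lintegral_tsum]
    · refine tsum_congr (fun k => ?_)
      rw [lintegral_image_eq_lintegral_abs_deriv_mul measurableSet_Ico
        (fun y hy => gb_deriv k hy) (gb_inj k)]
      refine setLIntegral_congr_fun measurableSet_Ico (fun y hy => ?_)
      rw [gaussMap_gb k hy]
      have hy0 := hy.1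
      have hl : 0 < Real.log 2 := Real.log_pos (by norm_num)
      have key : ENNReal.ofReal |-((k:ℝ) + 1 + y)⁻¹ ^ 2| * gd (gb k y)
          = gd y * ENNReal.ofReal (gw k y) := by
        unfold gd
        rw [← ENNReal.ofReal_mul (abs_nonneg _), ← ENNReal.ofReal_mul (by positivity)]
        congr 1
        rw [abs_neg, abs_of_nonneg (by positivity)]
        unfold gw gb
        have : (k:ℝ) + 1 + y ≠ 0 := by positivity
        have : (k:ℝ) + 2 + y ≠ 0 := by positivity
        have : (k:ℝ) + 1 + y + 1 ≠ 0 := by positivity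
        field_simp
        ring
      rw [← mul_assoc, key]
      ring
    · intro k
      exact (gd_meas.mul (((gw_meas k).ennreal_ofReal.mul (hF.comp (gb_meas k))).mul hG)).aemeasurable
  · intro k
    exact measurableSet_Ico.image_of_continuousOn_injOn
      (fun y hy => (gb_deriv k hy).continuousWithinAt) (gb_inj k)
  · intro i j hij
    rw [Function.onFun, Set.disjoint_left]
    rintro _ ⟨x, hx, rfl⟩ ⟨y, hy, h⟩
    apply hij
    have hxy : y = x := by rw [← gaussMap_gb j hy, h, gaussMap_gb i hx]
    subst hxy
    unfold gb at h
    have := inv_injective h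
    have : (j:ℝ) = i := by linarith
    exact_mod_cast this.symm

lemma dual_iter {F G : ℝ → ENNReal} (hF : Measurable F) (hG : Measurable G) (n : ℕ) :
    ∫⁻ x, F x * G (gaussMap^[n] x) ∂gmu = ∫⁻ x, gL^[n] F x * G x ∂gmu := by
  induction n generalizing F with
  | zero => rfl
  | succ n ih =>
    simp only [Function.iterate_succ_apply]
    rw [← ih (gL_meas hF)]
    exact dual hF (hG.comp (gaussMap_meas.iterate n))

lemma gmu_ae {p : ℝ → Prop} (h : ∀ x ∈ Set.Ioc (0:ℝ) 1, p x) : ∀ᵐ x ∂gmu, p x := by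
  unfold gmu
  refine (withDensity_absolutelyContinuous _ _).ae_le ?_
  filter_upwards [ae_restrict_mem measurableSet_Ioc] with x hx using h x hx

lemma gL_one {x : ℝ} (hx : 0 ≤ x) : gL (fun _ => 1) x = 1 := by
  unfold gL
  simp_rw [mul_one]
  rw [← ENNReal.ofReal_tsum_of_nonneg (fun k => gw_nonneg k hx) (gw_hasSum hx).summable,
    (gw_hasSum hx).tsum_eq, ENNReal.ofReal_one]

lemma gauss_mp : MeasurePreserving gaussMap gmu gmu := by
  refine ⟨gaussMap_meas, ?_⟩
  ext s hs
  rw [Measure.map_apply gaussMap_meas hs, ← lintegral_indicator_one hs,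
    ← lintegral_indicator_one (gaussMap_meas hs)]
  have h := dual (F := fun _ => 1) (G := s.indicator 1) measurable_const
    (measurable_one.indicator hs)
  simp only [one_mul] at h
  have e : ∀ᵐ x ∂gmu, gL (fun _ => 1) x * s.indicator 1 x = s.indicator (1 : ℝ → ENNReal) x :=
    gmu_ae (fun x hx => by rw [gL_one hx.1.le, one_mul])
  rw [lintegral_congr_ae e] at h
  exact h

lemma gmu_int {f : ℝ → ℝ} {I : ℝ} (hf : Measurable f) (hpos : ∀ x ∈ Set.Ioc (0:ℝ) 1, 0 ≤ f x)
    (hi : IntervalIntegrable (fun x => f x / (1 + x)) volume 0 1)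
    (hI : ∫ x in (0:ℝ)..1, f x / (1 + x) = I) :
    ∫⁻ x, ENNReal.ofReal (f x) ∂gmu = ENNReal.ofReal (I / Real.log 2) := by
  have hl : 0 < Real.log 2 := Real.log_pos (by norm_num)
  rw [lint_gmu hf.ennreal_ofReal]
  have : ∀ x ∈ Set.Ioc (0:ℝ) 1, gd x * ENNReal.ofReal (f x)
      = ENNReal.ofReal (f x / (1 + x) / Real.log 2) := by
    intro x hx
    have := hx.1
    unfold gd
    rw [← ENNReal.ofReal_mul (by positivity)]
    congr 1
    ring
  rw [setLIntegral_congr_fun measurableSet_Ioc this, ← ofReal_integral_eq_lintegral_ofReal]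
  · rw [integral_div, ← intervalIntegral.integral_of_le zero_le_one, hI]
  · rw [intervalIntegrable_iff_integrableOn_Ioc_of_le zero_le_one] at hi
    exact hi.div_const _
  · filter_upwards [ae_restrict_mem measurableSet_Ioc] with x hx
    have := hx.1
    have := hpos x hx
    simp only [Pi.zero_apply]
    positivity

lemma gmu_prob : IsProbabilityMeasure gmu := by
  constructor
  have hc : ContinuousOn (fun x : ℝ => 1 / (1 + x)) (Set.uIcc 0 1) := by
    apply ContinuousOn.div continuousOn_const (by fun_prop)
    intro x hx
    rw [Set.uIcc_of_le zero_le_one] at hx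
    linarith [hx.1]
  have h := gmu_int (f := fun _ => 1) (I := Real.log 2) measurable_const (fun _ _ => zero_le_one)
    hc.intervalIntegrable (by
      rw [intervalIntegral.integral_eq_sub_of_hasDerivAt (f := fun x => Real.log (1 + x))]
      · norm_num
      · intro x hx
        rw [Set.uIcc_of_le zero_le_one] at hx
        exact ((hasDerivAt_id x).const_add 1).log (by have := hx.1; simp only [id]; linarith)
      · exact hc.intervalIntegrable)
  have hl : 0 < Real.log 2 := Real.log_pos (by norm_num)
  rw [div_self hl.ne'] at h
  simpa using h


/-! ### Part 4: a law of large numbers from decay of correlations -/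

lemma var_bound {Ω : Type*} [MeasurableSpace Ω] {μ : Measure Ω} {Y : ℕ → Ω → ℝ} {K : ℝ}
    (hK : 0 ≤ K) (hY : ∀ i, MemLp (Y i) 2 μ)
    (hc : ∀ i j, i ≤ j → ∫ ω, Y i ω * Y j ω ∂μ ≤ K * (2 ^ i / 2 ^ j)) (n : ℕ) :
    ∫ ω, (∑ i ∈ Finset.range n, Y i ω) ^ 2 ∂μ ≤ 3 * K * n := by
  have hS : ∀ n, MemLp (fun ω => ∑ i ∈ Finset.range n, Y i ω) 2 μ := fun n =>
    memLp_finsetSum _ (fun i _ => hY i)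
  induction n with
  | zero => simp
  | succ n ih =>
    have e : ∀ ω, (∑ i ∈ Finset.range (n + 1), Y i ω) ^ 2
        = ((∑ i ∈ Finset.range n, Y i ω) ^ 2 + 2 * ∑ i ∈ Finset.range n, Y i ω * Y n ω)
          + Y n ω * Y n ω := by
      intro ω
      rw [Finset.sum_range_succ, ← Finset.sum_mul]
      ring
    have i1 : Integrable (fun ω => (∑ i ∈ Finset.range n, Y i ω) ^ 2) μ := (hS n).integrable_sq
    have i2 : ∀ i j, Integrable (fun ω => Y i ω * Y j ω) μ := fun i j =>
      (hY i).integrable_mul (hY j)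
    have i3 : Integrable (fun ω => 2 * ∑ i ∈ Finset.range n, Y i ω * Y n ω) μ :=
      (integrable_finsetSum _ (fun i _ => i2 i n)).const_mul 2
    simp_rw [e]
    have i4 : Integrable (fun ω => (∑ i ∈ Finset.range n, Y i ω) ^ 2
        + 2 * ∑ i ∈ Finset.range n, Y i ω * Y n ω) μ := i1.add i3
    rw [integral_add i4 (i2 n n), integral_add i1 i3, integral_const_mul,
      integral_finsetSum _ (fun i _ => i2 i n)]
    have h1 : ∑ i ∈ Finset.range n, ∫ ω, Y i ω * Y n ω ∂μ ≤ K := by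
      calc _ ≤ ∑ i ∈ Finset.range n, K * (2 ^ i / 2 ^ n) :=
            Finset.sum_le_sum (fun i hi => hc i n (Finset.mem_range.mp hi).le)
        _ = K * ((2 ^ n - 1) / 2 ^ n) := by
            rw [← Finset.mul_sum, ← Finset.sum_div, geom_sum_eq (by norm_num)]
            norm_num
        _ ≤ K * 1 := by
            gcongr
            rw [div_le_one (by positivity)]
            linarith
        _ = K := mul_one K
    have h2 := hc n n le_rfl
    rw [div_self (by positivity), mul_one] at h2
    push_cast
    linarith

lemma lln {Ω : Type*} [MeasurableSpace Ω] {μ : Measure Ω} {Y : ℕ → Ω → ℝ} {K : ℝ} (c : ℝ)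
    (hK : 0 ≤ K) (hY : ∀ i, MemLp (Y i) 2 μ)
    (hc : ∀ i j, i ≤ j → ∫ ω, Y i ω * Y j ω ∂μ ≤ K * (2 ^ i / 2 ^ j))
    (hpos : ∀ᵐ ω ∂μ, ∀ i, 0 ≤ Y i ω + c) :
    ∀ᵐ ω ∂μ, Tendsto (fun n : ℕ => (∑ i ∈ Finset.range n, (Y i ω + c)) / n) atTop (𝓝 c) := by
  have hS : ∀ n, MemLp (fun ω => ∑ i ∈ Finset.range n, Y i ω) 2 μ := fun n =>
    memLp_finsetSum _ (fun i _ => hY i)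
  have hInt : ∀ k : ℕ, ∫⁻ ω, ENNReal.ofReal
      (((∑ i ∈ Finset.range (k ^ 2), Y i ω) / ((k ^ 2 : ℕ) : ℝ)) ^ 2) ∂μ
      ≤ ENNReal.ofReal (3 * K * (1 / (k : ℝ) ^ 2)) := by
    intro k
    have hI : Integrable (fun ω => ((∑ i ∈ Finset.range (k ^ 2), Y i ω) / ((k ^ 2 : ℕ) : ℝ)) ^ 2) μ := by
      simp_rw [div_pow]
      exact (hS _).integrable_sq.div_const _
    rw [← ofReal_integral_eq_lintegral_ofReal hI (Eventually.of_forall (fun ω => sq_nonneg _))]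
    apply ENNReal.ofReal_le_ofReal
    simp_rw [div_pow]
    rw [integral_div]
    rcases Nat.eq_zero_or_pos k with rfl | hk
    · simp
    · have hk' : (0:ℝ) < k := by exact_mod_cast hk
      rw [div_le_iff₀ (by positivity)]
      refine (var_bound hK hY hc (k ^ 2)).trans (le_of_eq ?_)
      push_cast
      field_simp
  have hsum : ∑' k : ℕ, ∫⁻ ω, ENNReal.ofReal
      (((∑ i ∈ Finset.range (k ^ 2), Y i ω) / ((k ^ 2 : ℕ) : ℝ)) ^ 2) ∂μ ≠ ⊤ := by
    refine ne_top_of_le_ne_top ?_ (ENNReal.tsum_le_tsum hInt)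
    exact ((Real.summable_one_div_nat_pow.mpr (by norm_num)).mul_left _).tsum_ofReal_ne_top
  have hmeas : ∀ k : ℕ, AEMeasurable (fun ω => ENNReal.ofReal
      (((∑ i ∈ Finset.range (k ^ 2), Y i ω) / ((k ^ 2 : ℕ) : ℝ)) ^ 2)) μ := fun k =>
    (((hS (k ^ 2)).aestronglyMeasurable.aemeasurable.div_const _).pow_const 2).ennreal_ofReal
  rw [← lintegral_tsum hmeas] at hsum
  have hfin := ae_lt_top' (AEMeasurable.tsum hmeas) hsum
  filter_upwards [hfin, hpos] with ω hω hp
  have t1 := ENNReal.tendsto_atTop_zero_of_tsum_ne_top hω.ne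
  have t2 : Tendsto (fun k : ℕ => ((∑ i ∈ Finset.range (k ^ 2), Y i ω) / ((k ^ 2 : ℕ) : ℝ)) ^ 2)
      atTop (𝓝 0) := by
    have := (ENNReal.tendsto_toReal ENNReal.zero_ne_top).comp t1
    simpa [Function.comp_def, ENNReal.toReal_ofReal, sq_nonneg] using this
  have t3 : Tendsto (fun k : ℕ => ((∑ i ∈ Finset.range (k ^ 2), Y i ω) / ((k ^ 2 : ℕ) : ℝ)))
      atTop (𝓝 0) := by
    have := t2.sqrt
    simp_rw [Real.sqrt_sq_eq_abs, Real.sqrt_zero] at this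
    exact tendsto_zero_iff_abs_tendsto_zero _ |>.mpr this
  refine tendsto_div_of_monotone_of_exists_subseq_tendsto_div _ c ?_ ?_
  · intro a b hab
    exact Finset.sum_le_sum_of_subset_of_nonneg (Finset.range_mono hab) (fun i _ _ => hp i)
  · intro a ha
    refine ⟨fun k => k ^ 2, ?_, tendsto_pow_atTop (by norm_num), ?_⟩
    · obtain ⟨m, hm⟩ := exists_nat_gt (3 / (a - 1))
      filter_upwards [eventually_ge_atTop (max m 1)] with k hk
      have k1 : (1:ℝ) ≤ k := by exact_mod_cast (le_max_right m 1).trans hk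
      have k2 : (m:ℝ) ≤ k := by exact_mod_cast (le_max_left m 1).trans hk
      have k3 : 3 ≤ (a - 1) * k := by
        have := hm.trans_le k2
        rw [div_lt_iff₀ (by linarith)] at this
        linarith
      push_cast
      nlinarith
    · have t4 := t3.add_const c
      rw [zero_add] at t4
      refine t4.congr' ?_
      filter_upwards [eventually_ge_atTop 1] with k hk
      have hk' : ((k ^ 2 : ℕ) : ℝ) ≠ 0 := by positivity
      rw [Finset.sum_add_distrib, Finset.sum_const, Finset.card_range, nsmul_eq_mul]
      field_simp

/-! ### Part 5: the constants -/

lemma pow_log_integrable (k : ℕ) :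
    IntervalIntegrable (fun x : ℝ => x ^ k * (-Real.log x)) volume 0 1 :=
  (intervalIntegral.intervalIntegrable_log').neg.continuousOn_mul (by fun_prop)

lemma pow_log_integral (k : ℕ) :
    ∫ x in (0:ℝ)..1, x ^ k * (-Real.log x) = 1 / ((k:ℝ) + 1) ^ 2 := by
  have hk : (k:ℝ) + 1 ≠ 0 := by positivity
  rw [intervalIntegral.integral_eq_sub_of_hasDerivAt_of_le zero_le_one
    (f := fun x => x ^ (k + 1) / ((k:ℝ) + 1) ^ 2 - x ^ k * (x * Real.log x) / ((k:ℝ) + 1))]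
  · simp
  · have := Real.continuous_mul_log
    apply Continuous.continuousOn
    fun_prop
  · intro x hx
    have hx0 : x ≠ 0 := hx.1.ne'
    have e : (fun x : ℝ => x ^ (k + 1) / ((k:ℝ) + 1) ^ 2 - x ^ k * (x * Real.log x) / ((k:ℝ) + 1))
      = fun x : ℝ => x ^ (k + 1) / ((k:ℝ) + 1) ^ 2 - x ^ (k + 1) * Real.log x / ((k:ℝ) + 1) := by
      funext x; ring
    rw [e]
    have d1 := hasDerivAt_pow (k + 1) x
    have d2 := Real.hasDerivAt_log hx0
    have d := (d1.div_const (((k:ℝ) + 1) ^ 2)).sub ((d1.mul d2).div_const ((k:ℝ) + 1))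
    refine HasDerivAt.congr_deriv d ?_
    rw [Nat.add_sub_cancel]
    push_cast
    field_simp
    ring
  · exact pow_log_integrable k

lemma hasSum_of_eq {f g : ℕ → ℝ} {a : ℝ} (h : ∀ k, f k = g k) (hg : HasSum g a) :
    HasSum f a := by
  rw [show f = g from funext h]
  exact hg

lemma alt_zeta : HasSum (fun k : ℕ => (-1:ℝ) ^ k * (1 / ((k:ℝ) + 1) ^ 2)) (π ^ 2 / 12) := by
  have hz : HasSum (fun k : ℕ => 1 / ((k:ℝ) + 1) ^ 2) (π ^ 2 / 6) := by
    have := (hasSum_nat_add_iff' 1).mpr hasSum_zeta_two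
    simpa using this
  have hs : Summable (fun k : ℕ => (-1:ℝ) ^ k * (1 / ((k:ℝ) + 1) ^ 2)) := by
    refine Summable.of_norm_bounded hz.summable (fun k => ?_)
    rw [norm_mul, norm_pow, norm_neg, norm_one, one_pow, one_mul, Real.norm_of_nonneg (by positivity)]
  have h1 : HasSum (fun k : ℕ => 1 / ((k:ℝ) + 1) ^ 2 - (-1:ℝ) ^ k * (1 / ((k:ℝ) + 1) ^ 2))
      (π ^ 2 / 12) := by
    have he : HasSum (fun k : ℕ => 1 / (((2 * k : ℕ):ℝ) + 1) ^ 2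
        - (-1:ℝ) ^ (2 * k) * (1 / (((2 * k : ℕ):ℝ) + 1) ^ 2)) 0 := by
      refine hasSum_of_eq (fun k => ?_) hasSum_zero
      rw [pow_mul]; norm_num
    have ho : HasSum (fun k : ℕ => 1 / (((2 * k + 1 : ℕ):ℝ) + 1) ^ 2
        - (-1:ℝ) ^ (2 * k + 1) * (1 / (((2 * k + 1 : ℕ):ℝ) + 1) ^ 2)) (π ^ 2 / 12) := by
      have h3 := hz.mul_left (1 / 2)
      rw [show (1 / 2 : ℝ) * (π ^ 2 / 6) = π ^ 2 / 12 by ring] at h3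
      refine hasSum_of_eq (fun k => ?_) h3
      · rw [Odd.neg_one_pow ⟨k, rfl⟩]
        push_cast
        have : (k:ℝ) + 1 ≠ 0 := by positivity
        have : 2 * (k:ℝ) + 1 + 1 ≠ 0 := by positivity
        field_simp
        ring
    have h4 := HasSum.even_add_odd (f := fun k : ℕ => 1 / ((k:ℝ) + 1) ^ 2
      - (-1:ℝ) ^ k * (1 / ((k:ℝ) + 1) ^ 2)) he ho
    rwa [zero_add] at h4
  have h2 := hz.sub h1
  rw [show π ^ 2 / 6 - π ^ 2 / 12 = π ^ 2 / 12 by ring] at h2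
  exact hasSum_of_eq (fun k => by ring) h2

lemma log_div_integrable :
    IntervalIntegrable (fun x : ℝ => -Real.log x / (1 + x)) volume 0 1 := by
  simp_rw [div_eq_mul_inv]
  apply (intervalIntegral.intervalIntegrable_log').neg.mul_continuousOn
  apply ContinuousOn.inv₀ (by fun_prop)
  intro x hx
  rw [Set.uIcc_of_le zero_le_one] at hx
  linarith [hx.1]

lemma log_div_integral : ∫ x in (0:ℝ)..1, -Real.log x / (1 + x) = π ^ 2 / 12 := by
  rw [intervalIntegral.integral_of_le zero_le_one]
  have hF : ∀ k : ℕ, Integrable (fun x : ℝ => (-1:ℝ) ^ k * (x ^ k * (-Real.log x)))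
      (volume.restrict (Set.Ioc (0:ℝ) 1)) := fun k =>
    ((intervalIntegrable_iff_integrableOn_Ioc_of_le zero_le_one).mp
      (pow_log_integrable k)).const_mul _
  have hv : ∀ k : ℕ, ∫ x in Set.Ioc (0:ℝ) 1, x ^ k * (-Real.log x) = 1 / ((k:ℝ) + 1) ^ 2 := by
    intro k
    rw [← intervalIntegral.integral_of_le zero_le_one, pow_log_integral]
  have hn : ∀ k : ℕ, ∫ x in Set.Ioc (0:ℝ) 1, ‖(-1:ℝ) ^ k * (x ^ k * (-Real.log x))‖
      = 1 / ((k:ℝ) + 1) ^ 2 := by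
    intro k
    rw [← hv k]
    refine setIntegral_congr_fun measurableSet_Ioc (fun x hx => ?_)
    have h1 : 0 ≤ x ^ k := pow_nonneg hx.1.le _
    have h2 : 0 ≤ -Real.log x := by linarith [Real.log_nonpos hx.1.le hx.2]
    rw [norm_mul, norm_pow, norm_neg, norm_one, one_pow, one_mul,
      Real.norm_of_nonneg (mul_nonneg h1 h2)]
  have hz : Summable (fun k : ℕ => 1 / ((k:ℝ) + 1) ^ 2) := by
    have := (summable_nat_add_iff 1).mpr hasSum_zeta_two.summable
    simpa using this
  have key := hasSum_integral_of_summable_integral_norm hF (by simp_rw [hn]; exact hz)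
  simp_rw [integral_const_mul, hv] at key
  have := key.unique alt_zeta
  rw [← this]
  refine setIntegral_congr_fun measurableSet_Ioc (fun x hx => ?_)
  rcases eq_or_lt_of_le hx.2 with h | h
  · subst h; simp
  · have hg := hasSum_geometric_of_abs_lt_one (r := -x) (by rw [abs_neg, abs_of_pos hx.1]; exact h)
    have := (hg.mul_right (-Real.log x)).tsum_eq
    rw [div_eq_mul_inv, mul_comm]
    rw [sub_neg_eq_add] at this
    rw [← this]
    refine tsum_congr (fun k => ?_)
    rw [neg_pow x]
    ring

lemma log_sq_integrable :
    IntervalIntegrable (fun x : ℝ => Real.log x ^ 2 / (1 + x)) volume 0 1 := by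
  have h := (intervalIntegral.intervalIntegrable_rpow' (a := 0) (b := 1)
    (r := -(1/2)) (by norm_num)).const_mul 16
  refine h.mono_fun' (Measurable.aestronglyMeasurable
    ((Real.measurable_log.pow_const 2).div (measurable_const.add measurable_id))) ?_
  rw [Set.uIoc_of_le zero_le_one]
  filter_upwards [ae_restrict_mem measurableSet_Ioc] with x hx
  have hx0 := hx.1
  have h1 := Real.abs_log_mul_self_rpow_lt x (1/4) hx.1 hx.2 (by norm_num)
  rw [Real.norm_of_nonneg (by positivity)]
  have h2 : (Real.log x * x ^ (1/4 : ℝ)) ^ 2 ≤ 16 := by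
    rw [← sq_abs]
    nlinarith [abs_nonneg (Real.log x * x ^ (1/4 : ℝ))]
  have h3 : (x ^ (1/4 : ℝ)) ^ 2 = x ^ (1/2 : ℝ) := by
    rw [← Real.rpow_natCast, ← Real.rpow_mul hx0.le]; norm_num
  rw [mul_pow, h3] at h2
  have h4 : Real.log x ^ 2 ≤ 16 * x ^ (-(1/2) : ℝ) := by
    rw [Real.rpow_neg hx0.le, ← div_eq_mul_inv, le_div_iff₀ (by positivity)]
    exact h2
  refine le_trans (div_le_self (sq_nonneg _) (by linarith)) h4

/-! ### Part 6: decay of correlations and conclusion -/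

lemma neglog_nonneg {x : ℝ} (h0 : 0 ≤ x) (h1 : x ≤ 1) : 0 ≤ -Real.log x := by
  linarith [Real.log_nonpos h0 h1]

lemma neglog_meas : Measurable (fun x : ℝ => -Real.log x) := Real.measurable_log.neg

lemma gL_gP {C : ℝ} {f : ℝ → ℝ} {F : ℝ → ENNReal} (hf : Grow C f)
    (hpos : ∀ t ∈ Set.Ioc (0:ℝ) 1, 0 ≤ f t)
    (hF : ∀ t ∈ Set.Ioc (0:ℝ) 1, F t = ENNReal.ofReal (f t)) {x : ℝ}
    (hx : x ∈ Set.Icc (0:ℝ) 1) : gL F x = ENNReal.ofReal (gP f x) ∧ 0 ≤ gP f x := by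
  have hn : ∀ k, 0 ≤ gw k x * f (gb k x) := fun k =>
    mul_nonneg (gw_nonneg k hx.1) (hpos _ (gb_mem k hx.1))
  refine ⟨?_, tsum_nonneg hn⟩
  unfold gL gP
  rw [ENNReal.ofReal_tsum_of_nonneg hn (gP_summable hf hx hx)]
  refine tsum_congr (fun k => ?_)
  rw [hF _ (gb_mem k hx.1), ENNReal.ofReal_mul (gw_nonneg k hx.1)]

lemma gL_iter_eq {D : ℝ} {h : ℝ → ℝ} {H : ℝ → ENNReal} (hO : Osc D h)
    (hH : ∀ t ∈ Set.Icc (0:ℝ) 1, H t = ENNReal.ofReal (h t) ∧ 0 ≤ h t) (n : ℕ) :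
    ∀ x ∈ Set.Icc (0:ℝ) 1, gL^[n] H x = ENNReal.ofReal (gP^[n] h x) ∧ 0 ≤ gP^[n] h x := by
  induction n with
  | zero => exact hH
  | succ n ih =>
    intro x hx
    rw [Function.iterate_succ_apply', Function.iterate_succ_apply']
    exact gL_gP (hO.iter n).grow (fun t ht => (ih t ⟨ht.1.le, ht.2⟩).2)
      (fun t ht => (ih t ⟨ht.1.le, ht.2⟩).1) hx

/-- mean value of `-log` -/
noncomputable def levyC : ℝ := π ^ 2 / 12 / Real.log 2

lemma levyC_pos : 0 < levyC := by
  have hl : 0 < Real.log 2 := Real.log_pos (by norm_num)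
  unfold levyC; positivity

/-- `-log` as an extended nonnegative function -/
noncomputable def lF (x : ℝ) : ENNReal := ENNReal.ofReal (-Real.log x)

lemma lF_meas : Measurable lF := neglog_meas.ennreal_ofReal

lemma lF_int : ∫⁻ x, lF x ∂gmu = ENNReal.ofReal levyC :=
  gmu_int neglog_meas (fun _ hx => neglog_nonneg hx.1.le hx.2) log_div_integrable log_div_integral

lemma iter_bound : ∃ D : ℝ, 0 ≤ D ∧ ∀ n : ℕ, ∀ x ∈ Set.Icc (0:ℝ) 1,
    gL^[n + 1] lF x ≤ ENNReal.ofReal (levyC + D / 2 ^ n) := by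
  obtain ⟨D, hD⟩ := gP_log_osc
  refine ⟨D, (abs_nonneg _).trans hD.2, fun n x hx => ?_⟩
  have := gmu_prob
  have hit := gL_iter_eq (H := gL lF) hD (fun t ht => gL_gP log_grow
    (fun _ hx => neglog_nonneg hx.1.le hx.2) (fun _ _ => rfl) ht) n
  have hO := hD.iter n
  set h := gP^[n] (gP (fun t => -Real.log t)) with hh
  rw [Function.iterate_succ_apply]
  have h0 : (0:ℝ) ∈ Set.Icc (0:ℝ) 1 := by simp
  have h1 : (1:ℝ) ∈ Set.Icc (0:ℝ) 1 := by simp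
  have hmin : ∃ m, ∀ y ∈ Set.Icc (0:ℝ) 1, m ≤ h y ∧ h y ≤ m + D / 2 ^ n := by
    have := abs_le.mp hO.2
    rcases hO.1 with hm | hm
    · refine ⟨h 0, fun y hy => ⟨hm h0 hy hy.1, ?_⟩⟩
      linarith [hm hy h1 hy.2]
    · refine ⟨h 1, fun y hy => ⟨hm hy h1 hy.2, ?_⟩⟩
      linarith [hm h0 hy hy.1]
  obtain ⟨m, hm⟩ := hmin
  have hmc : m ≤ levyC := by
    have e := dual_iter (F := lF) (G := fun _ => 1) lF_meas measurable_const (n + 1)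
    simp only [mul_one] at e
    rw [lF_int, Function.iterate_succ_apply] at e
    have : ENNReal.ofReal m ≤ ENNReal.ofReal levyC := by
      rw [e]
      calc ENNReal.ofReal m = ∫⁻ _, ENNReal.ofReal m ∂gmu := by simp
        _ ≤ _ := by
          apply lintegral_mono_ae
          refine gmu_ae (fun y hy => ?_)
          have hy' : y ∈ Set.Icc (0:ℝ) 1 := ⟨hy.1.le, hy.2⟩
          rw [(hit y hy').1]
          exact ENNReal.ofReal_le_ofReal (hm y hy').1
    exact (ENNReal.ofReal_le_ofReal_iff levyC_pos.le).mp this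
  rw [(hit x hx).1]
  apply ENNReal.ofReal_le_ofReal
  linarith [(hm x hx).2]

lemma lF_sq : ∃ J : ℝ, 0 ≤ J ∧ ∫⁻ x, lF x * lF x ∂gmu = ENNReal.ofReal J := by
  have h := gmu_int (f := fun x => Real.log x ^ 2) (by fun_prop) (fun _ _ => sq_nonneg _)
    log_sq_integrable rfl
  have hl : 0 < Real.log 2 := Real.log_pos (by norm_num)
  refine ⟨(∫ x in (0:ℝ)..1, Real.log x ^ 2 / (1 + x)) / Real.log 2, ?_, ?_⟩
  rotate_left
  · rw [← h]
    apply lintegral_congr_ae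
    refine gmu_ae (fun x hx => ?_)
    unfold lF
    simp only
    rw [← ENNReal.ofReal_mul (neglog_nonneg hx.1.le hx.2)]
    congr 1
    ring
  · refine div_nonneg (intervalIntegral.integral_nonneg zero_le_one (fun x hx => ?_)) hl.le
    have := hx.1
    positivity

lemma iter_mem {x : ℝ} (hx : x ∈ Set.Ioc (0:ℝ) 1) (k : ℕ) :
    0 ≤ gaussMap^[k] x ∧ gaussMap^[k] x ≤ 1 := by
  cases k with
  | zero => exact ⟨hx.1.le, hx.2⟩
  | succ k =>
    rw [Function.iterate_succ_apply']
    exact ⟨gaussMap_nonneg _, (gaussMap_lt_one _).le⟩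

lemma corr : ∃ K : ℝ, 0 ≤ K ∧ ∀ i m : ℕ,
    ∫⁻ x, lF (gaussMap^[i] x) * lF (gaussMap^[i + m] x) ∂gmu
      ≤ ENNReal.ofReal (levyC ^ 2 + K / 2 ^ m) := by
  obtain ⟨D, hD0, hD⟩ := iter_bound
  obtain ⟨J, hJ0, hJ⟩ := lF_sq
  have hc := levyC_pos
  refine ⟨2 * D * levyC + J, by positivity, fun i m => ?_⟩
  have e : ∫⁻ x, lF (gaussMap^[i] x) * lF (gaussMap^[i + m] x) ∂gmu
      = ∫⁻ x, lF x * lF (gaussMap^[m] x) ∂gmu := by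
    have hm : Measurable (fun x => lF x * lF (gaussMap^[m] x)) :=
      lF_meas.mul (lF_meas.comp (gaussMap_meas.iterate m))
    rw [← (gauss_mp.iterate i).lintegral_comp hm]
    refine lintegral_congr (fun x => ?_)
    rw [add_comm i m, Function.iterate_add_apply]
  rw [e]
  cases m with
  | zero =>
    simp only [Function.iterate_zero, id]
    rw [hJ]
    apply ENNReal.ofReal_le_ofReal
    have : 0 ≤ 2 * D * levyC := by positivity
    simp only [pow_zero, div_one]
    nlinarith
  | succ m =>
    rw [dual_iter lF_meas lF_meas]
    calc _ ≤ ∫⁻ x, ENNReal.ofReal (levyC + D / 2 ^ m) * lF x ∂gmu := by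
          apply lintegral_mono_ae
          refine gmu_ae (fun y hy => ?_)
          gcongr
          exact hD m y ⟨hy.1.le, hy.2⟩
      _ = ENNReal.ofReal ((levyC + D / 2 ^ m) * levyC) := by
          rw [lintegral_const_mul _ lF_meas, lF_int, ← ENNReal.ofReal_mul (by positivity)]
      _ ≤ _ := by
          apply ENNReal.ofReal_le_ofReal
          have : 0 ≤ J / 2 ^ (m + 1) := by positivity
          have e2 : D / 2 ^ m * levyC = 2 * D * levyC / 2 ^ (m + 1) := by
            rw [pow_succ]; field_simp
          rw [add_div, add_mul, e2]
          nlinarith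

lemma levy_sum : ∀ᵐ x ∂gmu, Tendsto
    (fun n : ℕ => (∑ i ∈ Finset.range n, -Real.log (gaussMap^[i] x)) / n) atTop (𝓝 levyC) := by
  have := gmu_prob
  obtain ⟨K, hK, hcorr⟩ := corr
  obtain ⟨J, hJ0, hJ⟩ := lF_sq
  have hc := levyC_pos
  -- square integrability
  have hmem0 : MemLp (fun x => -Real.log x) 2 gmu := by
    rw [memLp_two_iff_integrable_sq neglog_meas.aestronglyMeasurable]
    refine ⟨(neglog_meas.pow_const 2).aestronglyMeasurable, ?_⟩
    rw [hasFiniteIntegral_iff_ofReal (Eventually.of_forall (fun x => sq_nonneg _))]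
    refine lt_of_le_of_lt (le_of_eq ?_) (hJ.trans_lt ENNReal.ofReal_lt_top)
    apply lintegral_congr_ae
    refine gmu_ae (fun x hx => ?_)
    unfold lF
    simp only
    rw [← ENNReal.ofReal_mul (neglog_nonneg hx.1.le hx.2), pow_two]
  have hmem : ∀ k, MemLp (fun x => -Real.log (gaussMap^[k] x)) 2 gmu := fun k =>
    hmem0.comp_measurePreserving (gauss_mp.iterate k)
  have hmean : ∀ k, ∫ x, -Real.log (gaussMap^[k] x) ∂gmu = levyC := by
    intro k
    rw [integral_eq_lintegral_of_nonneg_ae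
      (gmu_ae (fun x hx => neglog_nonneg (iter_mem hx k).1 (iter_mem hx k).2))
      (hmem k).aestronglyMeasurable]
    have := (gauss_mp.iterate k).lintegral_comp lF_meas
    rw [lF_int] at this
    unfold lF at this
    rw [this, ENNReal.toReal_ofReal hc.le]
  have hInt : ∀ k, Integrable (fun x => -Real.log (gaussMap^[k] x)) gmu := fun k =>
    (hmem k).integrable (by norm_num)
  have hprod : ∀ i m, ∫ x, -Real.log (gaussMap^[i] x) * -Real.log (gaussMap^[i + m] x) ∂gmu
      ≤ levyC ^ 2 + K / 2 ^ m := by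
    intro i m
    rw [integral_eq_lintegral_of_nonneg_ae
      (gmu_ae (fun x hx => mul_nonneg (neglog_nonneg (iter_mem hx i).1 (iter_mem hx i).2)
        (neglog_nonneg (iter_mem hx _).1 (iter_mem hx _).2)))
      ((hmem i).aestronglyMeasurable.mul (hmem (i + m)).aestronglyMeasurable)]
    refine ENNReal.toReal_le_of_le_ofReal (by positivity) (le_trans (le_of_eq ?_) (hcorr i m))
    apply lintegral_congr_ae
    refine gmu_ae (fun x hx => ?_)
    unfold lF
    simp only
    rw [← ENNReal.ofReal_mul (neglog_nonneg (iter_mem hx i).1 (iter_mem hx i).2)]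
  have := lln (μ := gmu) (Y := fun k x => -Real.log (gaussMap^[k] x) - levyC) levyC hK
    (fun i => (hmem i).sub (memLp_const _)) ?_ ?_
  · simpa using this
  · intro i j hij
    obtain ⟨m, rfl⟩ := Nat.exists_eq_add_of_le hij
    have ip : Integrable (fun x => -Real.log (gaussMap^[i] x) * -Real.log (gaussMap^[i + m] x)) gmu :=
      (hmem i).integrable_mul (hmem (i + m))
    have e : ∀ x, (-Real.log (gaussMap^[i] x) - levyC) * (-Real.log (gaussMap^[i + m] x) - levyC)
        = (-Real.log (gaussMap^[i] x) * -Real.log (gaussMap^[i + m] x)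
            - levyC * -Real.log (gaussMap^[i] x))
          - (levyC * -Real.log (gaussMap^[i + m] x) - levyC ^ 2) := by
      intro x; ring
    simp_rw [e]
    have j1 : Integrable (fun x => levyC * -Real.log (gaussMap^[i] x)) gmu := (hInt i).const_mul _
    have j2 : Integrable (fun x => levyC * -Real.log (gaussMap^[i + m] x)) gmu :=
      (hInt (i + m)).const_mul _
    have j3 : Integrable (fun x => -Real.log (gaussMap^[i] x) * -Real.log (gaussMap^[i + m] x)
            - levyC * -Real.log (gaussMap^[i] x)) gmu := ip.sub j1
    have j4 : Integrable (fun x => levyC * -Real.log (gaussMap^[i + m] x) - levyC ^ 2) gmu :=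
      j2.sub (integrable_const _)
    rw [integral_sub j3 j4, integral_sub ip j1, integral_sub j2 (integrable_const _),
      integral_const_mul, integral_const_mul, hmean, hmean, integral_const]
    have h := hprod i m
    have e3 : K * (2 ^ i / 2 ^ (i + m)) = K / 2 ^ m := by
      rw [pow_add]; field_simp
    rw [e3]
    simp only [probReal_univ, one_smul]
    nlinarith
  · refine gmu_ae (fun x hx i => ?_)
    have := neglog_nonneg (iter_mem hx i).1 (iter_mem hx i).2
    simpa using this

/-- **Lévy's theorem.** For Lebesgue-almost every `x ∈ [0,1)`, the limit
`lim_{n→∞} (1/n) log q_n(x)` exists and equals `π² / (12 log 2)`. -/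
theorem levy_constant :
    ∀ᵐ x ∂(volume.restrict (Set.Ico (0:ℝ) 1)),
      Tendsto (fun n : ℕ => (1 / (n : ℝ)) * Real.log ((qden x n : ℝ))) atTop
        (𝓝 (π ^ 2 / (12 * Real.log 2))) := by
  have h := levy_sum
  unfold gmu at h
  rw [ae_withDensity_iff gd_meas,
    ← Measure.restrict_congr_set (Ico_ae_eq_Ioc (μ := (volume : Measure ℝ)) (a := (0:ℝ)) (b := 1))] at h
  have hirr : ∀ᵐ x ∂(volume.restrict (Set.Ico (0:ℝ) 1)), Irrational x :=
    (Set.countable_range ((↑) : ℚ → ℝ)).ae_notMem _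
  filter_upwards [h, hirr, ae_restrict_mem measurableSet_Ico] with x hx hi hI
  have h0 : 0 < x := lt_of_le_of_ne hI.1 (Ne.symm hi.ne_zero)
  have hl : 0 < Real.log 2 := Real.log_pos (by norm_num)
  have hlim := hx (by
    unfold gd
    rw [ne_eq, ENNReal.ofReal_eq_zero, not_le]
    positivity)
  have e : π ^ 2 / (12 * Real.log 2) = levyC := by
    unfold levyC
    rw [div_div]
  rw [e]
  have hlow : Tendsto (fun n : ℕ => (∑ i ∈ Finset.range n, -Real.log (gaussMap^[i] x)) / n
      - Real.log 2 / n) atTop (𝓝 levyC) := by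
    have := hlim.sub (tendsto_const_div_atTop_nhds_zero_nat (Real.log 2))
    rwa [sub_zero] at this
  refine tendsto_of_tendsto_of_tendsto_of_le_of_le hlow hlim (fun n => ?_) (fun n => ?_)
  · have := (qden_bounds hi h0 hI.2 n).2
    simp only
    rw [← sub_div, one_div, ← div_eq_inv_mul]
    gcongr
  · have := (qden_bounds hi h0 hI.2 n).1
    simp only
    rw [one_div, ← div_eq_inv_mul]
    gcongr
end

section
/- For every δ > 0 there exist N > 0, B > 0 and α > 0 such that for all n ≥ N, the Lebesgue measure of the set of irrational x ∈ [0,1) with |(1/n)·log q_n(x) − π²/(12·log 2)| ≥ δ is at most B·exp(−α·n). -/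
open Filter MeasureTheory Real Topology

namespace LC

/-- transition weights of the Gauss chain -/
noncomputable def pk (k : ℕ) (x : ℝ) : ℝ := (1 + x) / ((k + 1 + x) * (k + 2 + x))

/-- inverse branches of the Gauss map -/
noncomputable def yk (k : ℕ) (x : ℝ) : ℝ := (k + 1 + x)⁻¹

/-- the normalised transfer operator -/
noncomputable def P (f : ℝ → ℝ) (x : ℝ) : ℝ :=
  (∑' k, ENNReal.ofReal (pk k x * f (yk k x))).toReal

lemma pk_nonneg (k : ℕ) {x : ℝ} (hx : 0 ≤ x) : 0 ≤ pk k x := by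
  unfold pk; positivity

lemma yk_pos (k : ℕ) {x : ℝ} (hx : 0 ≤ x) : 0 < yk k x := by
  unfold yk; positivity

lemma yk_le_one (k : ℕ) {x : ℝ} (hx : 0 ≤ x) : yk k x ≤ 1 := by
  unfold yk
  apply inv_le_one_of_one_le₀
  have : (0:ℝ) ≤ k := Nat.cast_nonneg k
  linarith

lemma measurable_pk (k : ℕ) : Measurable (pk k) := by
  unfold pk; fun_prop

lemma measurable_yk (k : ℕ) : Measurable (yk k) := by
  unfold yk; fun_prop

lemma measurable_P {f : ℝ → ℝ} (hf : Measurable f) : Measurable (P f) := by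
  unfold P
  apply Measurable.ennreal_toReal
  apply Measurable.tsum
  intro k
  exact ((measurable_pk k).mul (hf.comp (measurable_yk k))).ennreal_ofReal

lemma P_eq {f : ℝ → ℝ} {x : ℝ} (h : ∀ k, 0 ≤ pk k x * f (yk k x)) :
    P f x = ∑' k, pk k x * f (yk k x) := by
  unfold P
  rw [ENNReal.tsum_toReal_eq (fun _ => ENNReal.ofReal_ne_top)]
  exact tsum_congr fun k => ENNReal.toReal_ofReal (h k)

lemma P_nonneg (f : ℝ → ℝ) (x : ℝ) : 0 ≤ P f x := ENNReal.toReal_nonneg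

lemma pk_sum_range (x : ℝ) (hx : 0 ≤ x) (n : ℕ) :
    ∑ k ∈ Finset.range n, pk k x = 1 - (1 + x) / (n + 1 + x) := by
  induction n with
  | zero =>
    have : 1 + x ≠ 0 := by positivity
    simp [div_self this]
  | succ n ih =>
    rw [Finset.sum_range_succ, ih]
    unfold pk
    push_cast
    have h1 : (n:ℝ) + 1 + x ≠ 0 := by positivity
    have h2 : (n:ℝ) + 2 + x ≠ 0 := by positivity
    have h3 : (n:ℝ) + 1 + 1 + x ≠ 0 := by positivity
    field_simp
    ring

lemma hasSum_pk {x : ℝ} (hx : 0 ≤ x) : HasSum (fun k => pk k x) 1 := by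
  rw [hasSum_iff_tendsto_nat_of_nonneg (fun k => pk_nonneg k hx)]
  simp_rw [pk_sum_range x hx]
  have : Tendsto (fun n : ℕ => (1 + x) / ((n:ℝ) + 1 + x)) atTop (𝓝 0) := by
    apply Tendsto.const_div_atTop
    apply tendsto_atTop_add_const_right
    apply tendsto_atTop_add_const_right
    exact tendsto_natCast_atTop_atTop
  simpa using tendsto_const_nhds.sub this

/-- Lipschitz on the unit interval -/
def Lip (f : ℝ → ℝ) (Λ : ℝ) : Prop :=
  ∀ x y, 0 ≤ x → x ≤ y → y ≤ 1 → |f x - f y| ≤ Λ * (y - x)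

lemma Lip.abs {f : ℝ → ℝ} {Λ : ℝ} (h : Lip f Λ) {x y : ℝ} (hx : 0 ≤ x) (hx1 : x ≤ 1)
    (hy : 0 ≤ y) (hy1 : y ≤ 1) : |f x - f y| ≤ Λ * |x - y| := by
  rcases le_total x y with hxy | hxy
  · have := h x y hx hxy hy1
    rwa [abs_sub_comm x y, abs_of_nonneg (sub_nonneg.2 hxy)]
  · have := h y x hy hxy hx1
    rwa [abs_sub_comm, abs_of_nonneg (sub_nonneg.2 hxy)]

lemma Lip.nonneg {f : ℝ → ℝ} {Λ : ℝ} (h : Lip f Λ) : 0 ≤ Λ := by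
  have := h 0 1 le_rfl zero_le_one le_rfl
  have h2 := abs_nonneg (f 0 - f 1)
  linarith

lemma Lip.bound {f : ℝ → ℝ} {Λ : ℝ} (h : Lip f Λ) {x : ℝ} (hx : 0 ≤ x) (hx1 : x ≤ 1) :
    |f x| ≤ |f 0| + Λ := by
  have := h 0 x le_rfl hx hx1
  have h0 := h.nonneg
  have h3 : Λ * (x - 0) ≤ Λ := by nlinarith
  have h4 : |f x| - |f 0| ≤ |f x - f 0| := abs_sub_abs_le_abs_sub _ _
  rw [abs_sub_comm] at h4
  linarith

lemma summable_pk_mul {f : ℝ → ℝ} {Λ : ℝ} (h : Lip f Λ) {x : ℝ} (hx : 0 ≤ x) :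
    Summable (fun k => pk k x * f (yk k x)) := by
  apply Summable.of_norm_bounded (g := fun k => pk k x * (|f 0| + Λ))
  · exact (hasSum_pk hx).summable.mul_right _
  · intro k
    rw [Real.norm_eq_abs, abs_mul, abs_of_nonneg (pk_nonneg k hx)]
    exact mul_le_mul_of_nonneg_left (h.bound (yk_pos k hx).le (yk_le_one k hx)) (pk_nonneg k hx)

lemma pk_zero {x : ℝ} (hx : 0 ≤ x) : pk 0 x = 1 / (2 + x) := by
  unfold pk
  have : 1 + x ≠ 0 := by positivity
  have : 2 + x ≠ 0 := by positivity
  push_cast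
  simp only [zero_add]
  field_simp

lemma pk_mono {k : ℕ} (hk : 2 ≤ k) {x y : ℝ} (hx : 0 ≤ x) (hxy : x ≤ y) (hy : y ≤ 1) :
    pk k x ≤ pk k y := by
  unfold pk
  have hk' : (2:ℝ) ≤ k := by exact_mod_cast hk
  have hy0 : 0 ≤ y := hx.trans hxy
  rw [div_le_div_iff₀ (by positivity) (by positivity)]
  obtain ⟨a, ha⟩ : ∃ a : ℝ, a = k - 2 := ⟨_, rfl⟩
  have ha0 : 0 ≤ a := by linarith
  have hk2 : (k:ℝ) = a + 2 := by linarith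
  rw [hk2]
  obtain ⟨d, hd⟩ : ∃ d : ℝ, d = y - x := ⟨_, rfl⟩
  have hd0 : 0 ≤ d := by linarith
  have hxy1 : x * y ≤ 1 := by nlinarith
  have : (1 + y) * ((a + 2 + 1 + x) * (a + 2 + 2 + x)) - (1 + x) * ((a + 2 + 1 + y) * (a + 2 + 2 + y))
      = (y - x) * (a ^ 2 + 5 * a + 5 - x - y - x * y) := by ring
  have h2 : 0 ≤ (y - x) * (a ^ 2 + 5 * a + 5 - x - y - x * y) := by
    apply mul_nonneg (by linarith)
    nlinarith
  linarith

lemma yk_sub (k : ℕ) {x y : ℝ} (hx : 0 ≤ x) (hy : 0 ≤ y) :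
    yk k x - yk k y = (y - x) / ((k + 1 + x) * (k + 1 + y)) := by
  unfold yk
  have h1 : (k:ℝ) + 1 + x ≠ 0 := by positivity
  have h2 : (k:ℝ) + 1 + y ≠ 0 := by positivity
  field_simp
  ring

lemma yk_abs_le (k : ℕ) {x y : ℝ} (hx : 0 ≤ x) (hxy : x ≤ y) :
    |yk k x - yk k y| ≤ (y - x) * (if k = 0 then 1 else 1 / 4) := by
  have hy : 0 ≤ y := hx.trans hxy
  rw [yk_sub k hx hy, abs_of_nonneg (by apply div_nonneg (by linarith) (by positivity)), div_eq_mul_inv]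
  apply mul_le_mul_of_nonneg_left _ (by linarith)
  split_ifs with hk
  · subst hk
    apply inv_le_one_of_one_le₀
    push_cast
    nlinarith
  · have : (1:ℝ) ≤ k := by exact_mod_cast Nat.one_le_iff_ne_zero.2 hk
    rw [one_div]
    apply inv_anti₀ (by norm_num)
    nlinarith

lemma yk_one_dist (k : ℕ) {y : ℝ} (hy : 0 ≤ y) : |yk k y - yk 1 y| ≤ 1 / 2 := by
  have h1 : yk 1 y ≤ 1 / 2 := by
    unfold yk
    rw [one_div]
    apply inv_anti₀ (by norm_num)
    push_cast; linarith
  have h1' := yk_pos 1 hy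
  by_cases hk : k = 0
  · subst hk
    have : yk 0 y - yk 1 y = 1 / ((1 + y) * (2 + y)) := by
      unfold yk
      have : 1 + y ≠ 0 := by positivity
      have : 2 + y ≠ 0 := by positivity
      have : 1 + 1 + y ≠ 0 := by positivity
      push_cast
      simp only [zero_add]
      field_simp
      ring
    rw [this, abs_of_nonneg (by positivity)]
    apply one_div_le_one_div_of_le (by norm_num)
    nlinarith
  · have hk1 : (1:ℝ) ≤ k := by exact_mod_cast Nat.one_le_iff_ne_zero.2 hk
    have h2 : yk k y ≤ 1 / 2 := by
      unfold yk
      rw [one_div]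
      apply inv_anti₀ (by norm_num)
      linarith
    have h3 := yk_pos k hy
    rw [abs_le]; constructor <;> linarith

/-- contraction of the Lipschitz seminorm -/
lemma P_contract {f : ℝ → ℝ} {Λ : ℝ} (h : Lip f Λ) (hf : ∀ x, 0 ≤ f x ∨ x ≤ 0 ∨ 1 < x) :
    Lip (P f) (31 / 36 * Λ) := by
  intro x y hx hxy hy1
  have hy : 0 ≤ y := hx.trans hxy
  have hx1 : x ≤ 1 := hxy.trans hy1
  have hΛ := h.nonneg
  have hpos : ∀ z, 0 ≤ z → ∀ k, 0 ≤ pk k z * f (yk k z) := by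
    intro z hz k
    apply mul_nonneg (pk_nonneg k hz)
    rcases hf (yk k z) with h | h | h
    · exact h
    · exact absurd h (not_le.2 (yk_pos k hz))
    · exact absurd h (not_lt.2 (yk_le_one k hz))
  rw [P_eq (hpos x hx), P_eq (hpos y hy)]
  have hsx := summable_pk_mul h hx
  have hsy := summable_pk_mul h hy
  set c := f (yk 1 y) with hc
  have hcsum : HasSum (fun k => (pk k x - pk k y) * c) 0 := by
    have := ((hasSum_pk hx).sub (hasSum_pk hy)).mul_right c
    simpa using this
  have hS : HasSum (fun k => (pk k x * f (yk k x) - pk k y * f (yk k y)) - (pk k x - pk k y) * c)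
      ((∑' k, pk k x * f (yk k x)) - (∑' k, pk k y * f (yk k y)) - 0) :=
    (hsx.hasSum.sub hsy.hasSum).sub hcsum
  rw [sub_zero] at hS
  rw [← hS.tsum_eq]
  set c0 : ℝ := (y - x) * (3 / 4) * pk 0 x + (y - x) / 8 + (pk 0 x - pk 0 y) / 2 with hc0
  set c1 : ℝ := - ((pk 1 y - pk 1 x) / 2) with hc1
  have hE : HasSum (fun k : ℕ => Λ * ((y - x) / 4 * pk k x + (pk k y - pk k x) * (1 / 2) +
      (if k = 0 then c0 else 0) + (if k = 1 then c1 else 0)))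
      (Λ * ((y - x) / 4 * 1 + (1 - 1) * (1 / 2) + c0 + c1)) := by
    apply HasSum.mul_left
    apply HasSum.add
    · apply HasSum.add
      · apply HasSum.add
        · exact (hasSum_pk hx).mul_left _
        · exact ((hasSum_pk hy).sub (hasSum_pk hx)).mul_right _
      · exact hasSum_ite_eq 0 c0
    · exact hasSum_ite_eq 1 c1
  have hb : ∀ k : ℕ, ‖(pk k x * f (yk k x) - pk k y * f (yk k y)) - (pk k x - pk k y) * c‖ ≤
      Λ * ((y - x) / 4 * pk k x + (pk k y - pk k x) * (1 / 2) +
      (if k = 0 then c0 else 0) + (if k = 1 then c1 else 0)) := by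
    intro k
    have e : (pk k x * f (yk k x) - pk k y * f (yk k y)) - (pk k x - pk k y) * c =
        pk k x * (f (yk k x) - f (yk k y)) + (pk k x - pk k y) * (f (yk k y) - c) := by ring
    rw [e, Real.norm_eq_abs]
    have t1 : |pk k x * (f (yk k x) - f (yk k y))| ≤
        pk k x * (Λ * ((y - x) * (if k = 0 then 1 else 1 / 4))) := by
      rw [abs_mul, abs_of_nonneg (pk_nonneg k hx)]
      apply mul_le_mul_of_nonneg_left _ (pk_nonneg k hx)
      refine (h.abs (yk_pos k hx).le (yk_le_one k hx) (yk_pos k hy).le (yk_le_one k hy)).trans ?_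
      exact mul_le_mul_of_nonneg_left (yk_abs_le k hx hxy) hΛ
    have t2 : |f (yk k y) - c| ≤ Λ * (1 / 2) := by
      refine (h.abs (yk_pos k hy).le (yk_le_one k hy) (yk_pos 1 hy).le (yk_le_one 1 hy)).trans ?_
      exact mul_le_mul_of_nonneg_left (yk_one_dist k hy) hΛ
    refine (abs_add_le _ _).trans ?_
    rw [abs_mul (pk k x - pk k y)]
    rcases Nat.lt_or_ge k 2 with hk | hk
    · interval_cases k
      · simp only [if_true] at t1 ⊢
        have hd : |pk 0 x - pk 0 y| ≤ (y - x) / 4 := by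
          rw [pk_zero hx, pk_zero hy]
          have : 1 / (2 + x) - 1 / (2 + y) = (y - x) / ((2 + x) * (2 + y)) := by
            have h1 : 2 + x ≠ 0 := by positivity
            have h2 : 2 + y ≠ 0 := by positivity
            field_simp
            ring
          rw [this, abs_of_nonneg (by apply div_nonneg (by linarith) (by positivity))]
          apply div_le_div_of_nonneg_left (by linarith) (by norm_num)
          nlinarith
        have t3 : |pk 0 x - pk 0 y| * |f (yk 0 y) - c| ≤ (y - x) / 4 * (Λ * (1 / 2)) :=
          mul_le_mul hd t2 (abs_nonneg _) (by linarith)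
        rw [if_neg (by norm_num : ¬ (0:ℕ) = 1), hc0, add_zero]
        have e2 : Λ * ((y - x) / 4 * pk 0 x + (pk 0 y - pk 0 x) * (1 / 2) + ((y - x) * (3 / 4) * pk 0 x + (y - x) / 8 + (pk 0 x - pk 0 y) / 2)) = pk 0 x * (Λ * ((y - x) * 1)) + (y - x) / 4 * (Λ * (1 / 2)) := by ring
        linarith
      · have : f (yk 1 y) - c = 0 := by rw [hc]; ring
        rw [this, hc1]
        norm_num at t1 ⊢
        have e2 : Λ * ((y - x) / 4 * pk 1 x + (pk 1 y - pk 1 x) * (1 / 2) + -((pk 1 y - pk 1 x) / 2)) = pk 1 x * (Λ * ((y - x) * (1 / 4))) := by ring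
        have e3 : Λ * ((y - x) / 4 * pk 1 x + (pk 1 y - pk 1 x) * (1 / 2) + (pk 1 x - pk 1 y) / 2) = pk 1 x * (Λ * ((y - x) * (1 / 4))) := by ring
        linarith
    · have hk0 : k ≠ 0 := by omega
      have hk1 : k ≠ 1 := by omega
      simp only [hk0, hk1, if_false] at t1 ⊢
      have hm := pk_mono hk hx hxy hy1
      rw [abs_sub_comm (pk k x), abs_of_nonneg (sub_nonneg.2 hm)]
      have t3 := mul_le_mul_of_nonneg_left t2 (sub_nonneg.2 hm)
      have e2 : Λ * ((y - x) / 4 * pk k x + (pk k y - pk k x) * (1 / 2) + 0 + 0) = pk k x * (Λ * ((y - x) * (1 / 4))) + (pk k y - pk k x) * (Λ * (1 / 2)) := by ring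
      linarith
  have hfin := tsum_of_norm_bounded hE hb
  rw [Real.norm_eq_abs] at hfin
  refine hfin.trans ?_
  have hp0 : pk 0 x ≤ 1 / 2 := by
    rw [pk_zero hx]
    apply one_div_le_one_div_of_le (by norm_num) (by linarith)
  have hsum2 : (pk 0 x - pk 0 y) / 2 + c1 ≤ (y - x) / 9 := by
    have hx2 := pk_sum_range x hx 2
    have hy2 := pk_sum_range y hy 2
    simp only [Finset.sum_range_succ, Finset.sum_range_zero, zero_add] at hx2 hy2
    push_cast at hx2 hy2
    have : (pk 0 x - pk 0 y) / 2 + c1 = ((pk 0 x + pk 1 x) - (pk 0 y + pk 1 y)) / 2 := by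
      rw [hc1]; ring
    rw [this, hx2, hy2]
    have h1 : 2 + 1 + x ≠ 0 := by positivity
    have h2 : 2 + 1 + y ≠ 0 := by positivity
    have e3 : (1 - (1 + x) / (2 + 1 + x) - (1 - (1 + y) / (2 + 1 + y))) / 2 = (y - x) / ((2 + 1 + x) * (2 + 1 + y)) := by
      field_simp
      ring
    rw [e3]
    apply div_le_div_of_nonneg_left (by linarith) (by norm_num)
    nlinarith
  have e4 : Λ * ((y - x) / 4 * 1 + (1 - 1) * (1 / 2) + c0 + c1) = Λ * ((y - x) / 4 + (y - x) * (3 / 4) * pk 0 x + (y - x) / 8 + ((pk 0 x - pk 0 y) / 2 + c1)) := by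
    rw [hc0]; ring
  rw [e4]
  have : (y - x) / 4 + (y - x) * (3 / 4) * pk 0 x + (y - x) / 8 + ((pk 0 x - pk 0 y) / 2 + c1) ≤ 31 / 36 * (y - x) := by
    nlinarith
  nlinarith

end LC
namespace LC

lemma yk_inj {k l : ℕ} {x y : ℝ} (hx : x ∈ Set.Ico (0:ℝ) 1) (hy : y ∈ Set.Ico (0:ℝ) 1)
    (h : yk k x = yk l y) : k = l ∧ x = y := by
  unfold yk at h
  have h1 := inv_injective h
  have h2 : (k:ℝ) < l + 1 := by linarith [hx.1, hy.2]
  have h3 : (l:ℝ) < k + 1 := by linarith [hx.2, hy.1]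
  have h2' : k < l + 1 := by exact_mod_cast h2
  have h3' : l < k + 1 := by exact_mod_cast h3
  have : k = l := by omega
  subst this
  exact ⟨rfl, by linarith⟩

lemma iUnion_yk : (⋃ k : ℕ, yk k '' Set.Ico (0:ℝ) 1) = Set.Ioc (0:ℝ) 1 := by
  ext z
  simp only [Set.mem_iUnion, Set.mem_image]
  constructor
  · rintro ⟨k, x, hx, rfl⟩
    exact ⟨yk_pos k hx.1, yk_le_one k hx.1⟩
  · rintro ⟨h0, h1⟩
    have hz : 1 ≤ z⁻¹ := (one_le_inv₀ h0).2 h1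
    refine ⟨⌊z⁻¹ - 1⌋₊, Int.fract (z⁻¹ - 1), ⟨Int.fract_nonneg _, Int.fract_lt_one _⟩, ?_⟩
    unfold yk
    have : ((⌊z⁻¹ - 1⌋₊ : ℕ) : ℝ) = ((⌊z⁻¹ - 1⌋ : ℤ) : ℝ) :=
      natCast_floor_eq_intCast_floor (by linarith)
    rw [this]
    have h3 := Int.floor_add_fract (z⁻¹ - 1)
    have h4 : (⌊z⁻¹ - 1⌋ : ℝ) + 1 + Int.fract (z⁻¹ - 1) = z⁻¹ := by linarith
    rw [h4, inv_inv]

lemma cov (G : ℝ → ENNReal) :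
    ∫⁻ x in Set.Ioo (0:ℝ) 1, G x =
      ∑' k : ℕ, ∫⁻ x in Set.Ioo (0:ℝ) 1, ENNReal.ofReal (1 / (k + 1 + x) ^ 2) * G (yk k x) := by
  have hd : ∀ k : ℕ, ∀ x ∈ Set.Ico (0:ℝ) 1,
      HasDerivWithinAt (yk k) (-1 / (k + 1 + x) ^ 2) (Set.Ico (0:ℝ) 1) x := by
    intro k x hx
    have h0 : (k:ℝ) + 1 + x ≠ 0 := by have := hx.1; positivity
    have h1 : HasDerivAt (fun x : ℝ => (k:ℝ) + 1 + x) 1 x := by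
      simpa using (hasDerivAt_id x).const_add ((k:ℝ) + 1)
    exact (h1.inv h0).hasDerivWithinAt
  have hinj : ∀ k : ℕ, Set.InjOn (yk k) (Set.Ico (0:ℝ) 1) :=
    fun k x hx y hy h => (yk_inj hx hy h).2
  rw [setLIntegral_congr Ioo_ae_eq_Ioc, ← iUnion_yk, lintegral_iUnion]
  · congr 1
    ext k
    rw [lintegral_image_eq_lintegral_abs_deriv_mul measurableSet_Ico (hd k) (hinj k),
      setLIntegral_congr (Ioo_ae_eq_Ico (a := (0:ℝ)) (b := 1)).symm]
    congr 1
    ext x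
    congr 2
    rw [abs_div, abs_neg, abs_one, abs_of_nonneg (by positivity)]
  · intro k
    exact measurableSet_Ico.image_of_continuousOn_injOn
      (fun x hx => (hd k x hx).continuousWithinAt) (hinj k)
  · intro k l hkl
    rw [Function.onFun, Set.disjoint_left]
    rintro _ ⟨x, hx, rfl⟩ ⟨y, hy, h⟩
    exact hkl (yk_inj hx hy h.symm).1

/-- duality of the transfer operator -/
lemma transfer (G : ℝ → ℝ) (hG : Measurable G) :
    ∫⁻ z in Set.Ioo (0:ℝ) 1, ENNReal.ofReal (G z / (1 + z)) =
      ∫⁻ x in Set.Ioo (0:ℝ) 1, ∑' k : ℕ, ENNReal.ofReal (pk k x * G (yk k x) / (1 + x)) := by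
  rw [cov, lintegral_tsum]
  · congr 1
    ext k
    apply setLIntegral_congr_fun measurableSet_Ioo
    intro x hx
    have hx0 := hx.1
    simp only
    rw [← ENNReal.ofReal_mul (by positivity)]
    congr 1
    unfold pk
    have h1 : (k:ℝ) + 1 + x ≠ 0 := by positivity
    have h2 : (k:ℝ) + 2 + x ≠ 0 := by positivity
    have h3 : 1 + x ≠ 0 := by positivity
    have h5 : 1 + yk k x = (k + 2 + x) / (k + 1 + x) := by
      unfold yk; field_simp; ring
    rw [h5]
    generalize G (yk k x) = g
    field_simp
  · intro k
    apply Measurable.aemeasurable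
    apply Measurable.ennreal_ofReal
    exact ((measurable_pk k).mul (hG.comp (measurable_yk k))).div (by fun_prop)

lemma mean_P {f : ℝ → ℝ} (hf : Measurable f) (h0 : ∀ x, 0 < x → x ≤ 1 → 0 ≤ f x)
    (hs : ∀ x, 0 ≤ x → x ≤ 1 → Summable fun k => pk k x * f (yk k x)) :
    ∫⁻ x in Set.Ioo (0:ℝ) 1, ENNReal.ofReal (P f x / (1 + x)) =
      ∫⁻ x in Set.Ioo (0:ℝ) 1, ENNReal.ofReal (f x / (1 + x)) := by
  rw [transfer f hf]
  apply setLIntegral_congr_fun measurableSet_Ioo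
  intro x hx
  have hn : ∀ k, 0 ≤ pk k x * f (yk k x) := fun k =>
    mul_nonneg (pk_nonneg k hx.1.le) (h0 _ (yk_pos k hx.1.le) (yk_le_one k hx.1.le))
  simp only
  rw [P_eq hn, ← tsum_div_const, ENNReal.ofReal_tsum_of_nonneg]
  · intro k
    exact div_nonneg (hn k) (by linarith [hx.1])
  · exact (hs x hx.1.le hx.2.le).div_const _

/-- a summable majorant -/
noncomputable def dk (k : ℕ) : ℝ := √(k + 2) / ((k + 1) * (k + 2))

lemma dk_nonneg (k : ℕ) : 0 ≤ dk k := by unfold dk; positivity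

lemma summable_dk : Summable dk := by
  have h1 : Summable (fun n : ℕ => 1 / ((n + 1 : ℕ) : ℝ) ^ (3 / 2 : ℝ)) :=
    (summable_nat_add_iff 1).2 (Real.summable_one_div_nat_rpow.2 (by norm_num))
  refine Summable.of_nonneg_of_le dk_nonneg (fun k => ?_) h1
  unfold dk
  push_cast
  have hk : (0:ℝ) < k + 1 := by positivity
  have hk2 : (0:ℝ) < k + 2 := by positivity
  have e : ((k:ℝ) + 1) ^ (3 / 2 : ℝ) = (k + 1) * √(k + 1) := by
    rw [show (3 / 2 : ℝ) = 1 + 1 / 2 by norm_num, Real.rpow_add hk, Real.rpow_one, Real.sqrt_eq_rpow]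
  rw [e]
  have h2 : √((k:ℝ) + 2) * √(k + 2) = k + 2 := Real.mul_self_sqrt hk2.le
  have h3 : √((k:ℝ) + 1) ≤ √(k + 2) := Real.sqrt_le_sqrt (by linarith)
  have h4 : 0 < √((k:ℝ) + 1) := Real.sqrt_pos.2 hk
  rw [div_le_div_iff₀ (by positivity) (by positivity)]
  nlinarith [mul_le_mul_of_nonneg_left h3 (mul_nonneg hk.le (Real.sqrt_nonneg ((k:ℝ) + 2)))]

lemma pk_le (k : ℕ) {x : ℝ} (hx : 0 ≤ x) (hx1 : x ≤ 1) : pk k x ≤ 2 / ((k + 1) * (k + 2)) := by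
  unfold pk
  apply div_le_div₀ (by norm_num) (by linarith) (by positivity)
  apply mul_le_mul <;> first | positivity | linarith

lemma pk_diff (k : ℕ) {x y : ℝ} (hx : 0 ≤ x) (hxy : x ≤ y) (hy1 : y ≤ 1) :
    |pk k x - pk k y| ≤ 2 / ((k + 1) * (k + 2)) * (y - x) := by
  have hy : 0 ≤ y := hx.trans hxy
  have h1 : (k:ℝ) + 1 + x ≠ 0 := by positivity
  have h2 : (k:ℝ) + 2 + x ≠ 0 := by positivity
  have h3 : (k:ℝ) + 1 + y ≠ 0 := by positivity
  have h4 : (k:ℝ) + 2 + y ≠ 0 := by positivity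
  have hk : (0:ℝ) ≤ k := Nat.cast_nonneg k
  have e : pk k y - pk k x = (y - x) * (k ^ 2 + k - 1 - x - y - x * y) /
      (((k + 1 + x) * (k + 2 + x)) * ((k + 1 + y) * (k + 2 + y))) := by
    unfold pk
    field_simp
    ring
  have hN : |(k:ℝ) ^ 2 + k - 1 - x - y - x * y| ≤ 2 * (((k:ℝ) + 1) * (k + 2)) := by
    have : x * y ≤ 1 := by nlinarith
    have : 0 ≤ x * y := by positivity
    rw [abs_le]; constructor <;> nlinarith
  rw [abs_sub_comm, e, abs_div, abs_mul, abs_of_nonneg (sub_nonneg.2 hxy),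
    abs_of_nonneg (a := (((k:ℝ) + 1 + x) * (k + 2 + x)) * ((k + 1 + y) * (k + 2 + y))) (by positivity),
    mul_div_assoc, mul_comm]
  apply mul_le_mul_of_nonneg_right _ (sub_nonneg.2 hxy)
  have hD : ((k:ℝ) + 1) * (k + 2) * ((k + 1) * (k + 2)) ≤
      ((k + 1 + x) * (k + 2 + x)) * ((k + 1 + y) * (k + 2 + y)) := by
    have hq : ∀ z : ℝ, 0 ≤ z → ((k:ℝ) + 1) * (k + 2) ≤ (k + 1 + z) * (k + 2 + z) := by
      intro z hz
      apply mul_le_mul <;> first | positivity | linarith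
    exact mul_le_mul (hq x hx) (hq y hy) (by positivity) (by positivity)
  calc _ ≤ 2 * (((k:ℝ) + 1) * (k + 2)) / (((k:ℝ) + 1) * (k + 2) * ((k + 1) * (k + 2))) := by
        apply div_le_div₀ (by positivity) hN (by positivity) hD
    _ = _ := by field_simp

lemma log_le_sqrt (k : ℕ) : Real.log (k + 2) ≤ 2 * √(k + 2) := by
  have h : (0:ℝ) < k + 2 := by positivity
  have h1 := Real.log_le_sub_one_of_pos (Real.sqrt_pos.2 h)
  rw [Real.log_sqrt h.le] at h1
  linarith

lemma one_le_sqrt (k : ℕ) : 1 ≤ √((k:ℝ) + 2) := by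
  rw [Real.one_le_sqrt]
  have : (0:ℝ) ≤ k := Nat.cast_nonneg k
  linarith

/-- the observable -/
noncomputable def phi (x : ℝ) : ℝ := - Real.log x

lemma measurable_phi : Measurable phi := Real.measurable_log.neg

lemma phi_nonneg {x : ℝ} (h : 0 < x) (h1 : x ≤ 1) : 0 ≤ phi x :=
  neg_nonneg.2 (Real.log_nonpos h.le h1)

lemma phi_yk (k : ℕ) (x : ℝ) : phi (yk k x) = Real.log (k + 1 + x) := by
  unfold phi yk; rw [Real.log_inv, neg_neg]

lemma phi_yk_le (k : ℕ) {x : ℝ} (hx : 0 ≤ x) (hx1 : x ≤ 1) : phi (yk k x) ≤ Real.log (k + 2) := by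
  rw [phi_yk]
  exact Real.log_le_log (by positivity) (by linarith)

lemma phi_yk_nonneg (k : ℕ) {x : ℝ} (hx : 0 ≤ x) : 0 ≤ phi (yk k x) :=
  phi_nonneg (yk_pos k hx) (yk_le_one k hx)

lemma summable_phi {x : ℝ} (hx : 0 ≤ x) (hx1 : x ≤ 1) :
    Summable fun k => pk k x * phi (yk k x) := by
  refine Summable.of_nonneg_of_le
    (fun k => mul_nonneg (pk_nonneg k hx) (phi_yk_nonneg k hx)) (fun k => ?_) (summable_dk.mul_left 4)
  calc pk k x * phi (yk k x) ≤ 2 / ((k + 1) * (k + 2)) * (2 * √(k + 2)) :=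
        mul_le_mul (pk_le k hx hx1) ((phi_yk_le k hx hx1).trans (log_le_sqrt k))
          (phi_yk_nonneg k hx) (by positivity)
    _ = 4 * dk k := by unfold dk; ring

lemma lip_P_phi : Lip (P phi) (6 * ∑' k, dk k) := by
  intro x y hx hxy hy1
  have hy : 0 ≤ y := hx.trans hxy
  have hx1 : x ≤ 1 := hxy.trans hy1
  rw [P_eq (fun k => mul_nonneg (pk_nonneg k hx) (phi_yk_nonneg k hx)),
    P_eq (fun k => mul_nonneg (pk_nonneg k hy) (phi_yk_nonneg k hy)),
    ← (summable_phi hx hx1).tsum_sub (summable_phi hy hy1), ← Real.norm_eq_abs]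
  refine tsum_of_norm_bounded ((summable_dk.hasSum.mul_left 6).mul_right (y - x)) (fun k => ?_)
  have e : pk k x * phi (yk k x) - pk k y * phi (yk k y) =
      pk k x * (phi (yk k x) - phi (yk k y)) + (pk k x - pk k y) * phi (yk k y) := by ring
  have hl : |phi (yk k x) - phi (yk k y)| ≤ y - x := by
    rw [phi_yk, phi_yk, abs_sub_comm]
    have hax : (0:ℝ) < k + 1 + x := by positivity
    have hay : (0:ℝ) < k + 1 + y := by positivity
    rw [abs_of_nonneg (sub_nonneg.2 (Real.log_le_log hax (by linarith))),
      ← Real.log_div hay.ne' hax.ne']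
    refine (Real.log_le_sub_one_of_pos (div_pos hay hax)).trans ?_
    have : ((k:ℝ) + 1 + y) / (k + 1 + x) - 1 = (y - x) / (k + 1 + x) := by
      field_simp; ring
    rw [this]
    apply div_le_self (by linarith)
    have : (0:ℝ) ≤ k := Nat.cast_nonneg k
    linarith
  rw [e, Real.norm_eq_abs]
  refine (abs_add_le _ _).trans ?_
  rw [abs_mul, abs_mul, abs_of_nonneg (pk_nonneg k hx), abs_of_nonneg (phi_yk_nonneg k hy)]
  have h1 := mul_le_mul (pk_le k hx hx1) hl (abs_nonneg _) (by positivity)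
  have h2 := mul_le_mul (pk_diff k hx hxy hy1) ((phi_yk_le k hy hy1).trans (log_le_sqrt k))
    (phi_yk_nonneg k hy) (by apply mul_nonneg (by positivity) (by linarith))
  have h3 : 2 / (((k:ℝ) + 1) * (k + 2)) * (y - x) ≤ 2 * dk k * (y - x) := by
    apply mul_le_mul_of_nonneg_right _ (by linarith)
    unfold dk
    rw [← mul_div_assoc]
    apply div_le_div_of_nonneg_right _ (by positivity)
    linarith [one_le_sqrt k]
  have h4 : 2 / (((k:ℝ) + 1) * (k + 2)) * (y - x) * (2 * √(k + 2)) = 4 * dk k * (y - x) := by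
    unfold dk; ring
  linarith

/-- iterates -/
noncomputable def fj (j : ℕ) : ℝ → ℝ := P^[j] phi

lemma fj_succ (j : ℕ) : fj (j + 1) = P (fj j) := Function.iterate_succ_apply' _ _ _

lemma fj_nonneg (j : ℕ) {x : ℝ} (h : 0 < x) (h1 : x ≤ 1) : 0 ≤ fj j x := by
  cases j with
  | zero => exact phi_nonneg h h1
  | succ j => rw [fj_succ]; exact P_nonneg _ _

lemma measurable_fj (j : ℕ) : Measurable (fj j) := by
  induction j with
  | zero => exact measurable_phi
  | succ j ih => rw [fj_succ]; exact measurable_P ih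

lemma lip_fj (j : ℕ) : Lip (fj (j + 1)) ((31 / 36) ^ j * (6 * ∑' k, dk k)) := by
  induction j with
  | zero => simpa [fj_succ, fj] using lip_P_phi
  | succ j ih =>
    rw [fj_succ, pow_succ', mul_assoc]
    apply P_contract ih
    intro x
    rw [fj_succ]
    exact Or.inl (P_nonneg _ _)

lemma summable_fj (j : ℕ) {x : ℝ} (hx : 0 ≤ x) (hx1 : x ≤ 1) :
    Summable fun k => pk k x * fj j (yk k x) := by
  cases j with
  | zero => exact summable_phi hx hx1
  | succ j => exact summable_pk_mul (lip_fj j) hx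

lemma mean_fj (j : ℕ) : ∫⁻ x in Set.Ioo (0:ℝ) 1, ENNReal.ofReal (fj j x / (1 + x)) =
      ∫⁻ x in Set.Ioo (0:ℝ) 1, ENNReal.ofReal (phi x / (1 + x)) := by
  induction j with
  | zero => rfl
  | succ j ih =>
    rw [fj_succ, mean_P (measurable_fj j) (fun x h h1 => fj_nonneg j h h1)
      (fun x h h1 => summable_fj j h h1), ih]

end LC
namespace LC

lemma hs_congr {f g : ℕ → ℝ} {a b : ℝ} (h : HasSum f a) (hf : ∀ j, g j = f j) (hb : b = a) :
    HasSum g b := by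
  have : g = f := funext hf
  rw [this, hb]
  exact h

lemma int_log (n : ℕ) : IntegrableOn (fun x : ℝ => x ^ n * phi x) (Set.Ioo 0 1) ∧
    ∫ x in Set.Ioo (0:ℝ) 1, x ^ n * phi x = 1 / ((n:ℝ) + 1) ^ 2 := by
  set F : ℝ → ℝ := fun x => x ^ (n + 1) / ((n:ℝ) + 1) ^ 2 - x ^ n * (x * Real.log x) / (n + 1) with hF
  have hc : ContinuousOn F (Set.Icc 0 1) := by
    apply Continuous.continuousOn
    have := Real.continuous_mul_log
    rw [hF]
    fun_prop
  have hn : (n:ℝ) + 1 ≠ 0 := by positivity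
  have hd : ∀ x ∈ Set.Ioo (0:ℝ) 1, HasDerivAt F (x ^ n * phi x) x := by
    intro x hx
    have hx0 : x ≠ 0 := hx.1.ne'
    have h1 : HasDerivAt (fun x : ℝ => x ^ (n + 1) / ((n:ℝ) + 1) ^ 2 - x ^ (n + 1) * Real.log x / (n + 1))
        (((n + 1 : ℕ) : ℝ) * x ^ n / ((n:ℝ) + 1) ^ 2 - (((n + 1 : ℕ) : ℝ) * x ^ n * Real.log x + x ^ (n + 1) * x⁻¹) / (n + 1)) x :=
      ((hasDerivAt_pow (n + 1) x).div_const _).sub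
        (((hasDerivAt_pow (n + 1) x).mul (Real.hasDerivAt_log hx0)).div_const _)
    convert h1 using 1
    · rw [hF]; ext z; ring
    · unfold phi
      push_cast
      field_simp
      ring
  have hIntg : IntegrableOn (fun x : ℝ => x ^ n * phi x) (Set.Ioc 0 1) := by
    apply intervalIntegral.integrableOn_deriv_of_nonneg hc hd
    intro x hx
    exact mul_nonneg (pow_nonneg hx.1.le _) (phi_nonneg hx.1 hx.2.le)
  refine ⟨hIntg.mono_set Set.Ioo_subset_Ioc_self, ?_⟩
  rw [← integral_Ioc_eq_integral_Ioo, ← intervalIntegral.integral_of_le zero_le_one,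
    intervalIntegral.integral_eq_sub_of_hasDerivAt_of_le zero_le_one hc hd
      ((intervalIntegrable_iff_integrableOn_Ioc_of_le zero_le_one).2 hIntg)]
  simp [hF]

lemma hasSum_alt : HasSum (fun j : ℕ => 1 / ((2 * j : ℕ) + 1 : ℝ) ^ 2 - 1 / ((2 * j + 1 : ℕ) + 1 : ℝ) ^ 2)
    (π ^ 2 / 12) := by
  have hz := hasSum_zeta_two
  have he : HasSum (fun j : ℕ => 1 / ((2 * j + 1 : ℕ) + 1 : ℝ) ^ 2) (π ^ 2 / 24) := by
    have h1 : HasSum (fun n : ℕ => (1 : ℝ) / ((n + 1 : ℕ) : ℝ) ^ 2) (π ^ 2 / 6) := by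
      rw [hasSum_nat_add_iff (f := fun n : ℕ => (1 : ℝ) / (n : ℝ) ^ 2) 1]
      simpa using hz
    have h2 := h1.mul_left (1 / 4)
    refine hs_congr h2 (fun j => ?_) ?_
    · push_cast
      have : (j:ℝ) + 1 ≠ 0 := by positivity
      rw [show (2 * (j:ℝ) + 1 + 1) = 2 * (j + 1) by ring]
      field_simp
      norm_num
    · ring
  have hall : HasSum (fun n : ℕ => (1 : ℝ) / ((n : ℝ) + 1) ^ 2) (π ^ 2 / 6) := by
    have := (hasSum_nat_add_iff (f := fun n : ℕ => (1 : ℝ) / (n : ℝ) ^ 2) (g := π ^ 2 / 6) 1).2 (by simpa using hz)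
    simpa using this
  have ho : HasSum (fun j : ℕ => 1 / ((2 * j : ℕ) + 1 : ℝ) ^ 2) (π ^ 2 / 8) := by
    have hs : Summable (fun j : ℕ => 1 / ((2 * j : ℕ) + 1 : ℝ) ^ 2) :=
      hall.summable.comp_injective (i := fun j : ℕ => 2 * j) (fun a b h => by simpa using h)
    have h3 := HasSum.even_add_odd (f := fun n : ℕ => (1 : ℝ) / ((n : ℝ) + 1) ^ 2) hs.hasSum he
    have h4 := h3.unique hall
    have h5 : ∑' j : ℕ, 1 / ((2 * j : ℕ) + 1 : ℝ) ^ 2 = π ^ 2 / 8 := by linarith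
    rw [← h5]
    exact hs.hasSum
  have := ho.sub he
  exact hs_congr this (fun j => rfl) (by ring)

lemma mean_phi : ∫⁻ x in Set.Ioo (0:ℝ) 1, ENNReal.ofReal (phi x / (1 + x)) =
    ENNReal.ofReal (π ^ 2 / 12) := by
  have h1 : ∀ j : ℕ, ∫⁻ x in Set.Ioo (0:ℝ) 1, ENNReal.ofReal (x ^ (2 * j) * phi x - x ^ (2 * j + 1) * phi x)
      = ENNReal.ofReal (1 / ((2 * j : ℕ) + 1 : ℝ) ^ 2 - 1 / ((2 * j + 1 : ℕ) + 1 : ℝ) ^ 2) := by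
    intro j
    rw [← (int_log (2 * j)).2, ← (int_log (2 * j + 1)).2,
      ← integral_sub (int_log (2 * j)).1 (int_log (2 * j + 1)).1,
      ofReal_integral_eq_lintegral_ofReal (f := fun x => x ^ (2 * j) * phi x - x ^ (2 * j + 1) * phi x)
        ((int_log (2 * j)).1.sub (int_log (2 * j + 1)).1)]
    · rw [EventuallyLE, ae_restrict_iff' measurableSet_Ioo]
      refine Eventually.of_forall fun x hx => ?_
      have : x ^ (2 * j + 1) ≤ x ^ (2 * j) := pow_le_pow_of_le_one hx.1.le hx.2.le (by omega)
      have := mul_le_mul_of_nonneg_right this (phi_nonneg hx.1 hx.2.le)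
      simpa using this
  rw [← hasSum_alt.tsum_eq, ENNReal.ofReal_tsum_of_nonneg _ hasSum_alt.summable]
  · simp_rw [← h1]
    rw [← lintegral_tsum]
    · apply setLIntegral_congr_fun measurableSet_Ioo
      intro x hx
      simp only
      have hs : HasSum (fun j : ℕ => x ^ (2 * j) * phi x - x ^ (2 * j + 1) * phi x) (phi x / (1 + x)) := by
        have hx2 : x ^ 2 < 1 := by nlinarith [hx.1, hx.2]
        have := (hasSum_geometric_of_lt_one (sq_nonneg x) hx2).mul_right ((1 - x) * phi x)
        refine hs_congr this (fun j => ?_) ?_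
        · rw [pow_succ, pow_mul]; ring
        · have h2 : 1 - x ≠ 0 := by linarith [hx.2]
          have h3 : 1 + x ≠ 0 := by linarith [hx.1]
          rw [show 1 - x ^ 2 = (1 - x) * (1 + x) by ring]
          field_simp
      rw [← hs.tsum_eq, ENNReal.ofReal_tsum_of_nonneg _ hs.summable]
      intro j
      have : x ^ (2 * j + 1) ≤ x ^ (2 * j) := pow_le_pow_of_le_one hx.1.le hx.2.le (by omega)
      have := mul_le_mul_of_nonneg_right this (phi_nonneg hx.1 hx.2.le)
      linarith
    · intro j
      have := measurable_phi
      apply Measurable.aemeasurable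
      fun_prop
  · intro j
    rw [sub_nonneg]
    apply one_div_le_one_div_of_le (by positivity)
    push_cast
    gcongr
    linarith

lemma mean_const (c : ℝ) : ∫⁻ x in Set.Ioo (0:ℝ) 1, ENNReal.ofReal (c / (1 + x)) =
    ENNReal.ofReal (c * Real.log 2) := by
  rcases le_total 0 c with hc | hc
  · have hd : ∀ x ∈ Set.uIcc (0:ℝ) 1, HasDerivAt (fun x => c * Real.log (1 + x)) (c / (1 + x)) x := by
      intro x hx
      rw [Set.uIcc_of_le zero_le_one] at hx
      have h0 : 1 + x ≠ 0 := by linarith [hx.1]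
      have := (((hasDerivAt_id x).const_add 1).log h0).const_mul c
      refine this.congr_deriv ?_
      rw [id, one_div, div_eq_mul_inv]
    have hcont : ContinuousOn (fun x : ℝ => c / (1 + x)) (Set.uIcc 0 1) := by
      apply ContinuousOn.div (by fun_prop) (by fun_prop)
      intro x hx
      rw [Set.uIcc_of_le zero_le_one] at hx
      linarith [hx.1]
    have hIntg : IntervalIntegrable (fun x : ℝ => c / (1 + x)) volume 0 1 :=
      hcont.intervalIntegrable
    have h1 := intervalIntegral.integral_eq_sub_of_hasDerivAt hd hIntg
    rw [intervalIntegral.integral_of_le zero_le_one, integral_Ioc_eq_integral_Ioo] at h1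
    norm_num at h1
    rw [← h1, ofReal_integral_eq_lintegral_ofReal]
    · exact ((intervalIntegrable_iff_integrableOn_Ioc_of_le zero_le_one).1 hIntg).mono_set
        Set.Ioo_subset_Ioc_self
    · rw [EventuallyLE, ae_restrict_iff' measurableSet_Ioo]
      refine Eventually.of_forall fun x hx => ?_
      exact div_nonneg hc (by linarith [hx.1])
  · rw [ENNReal.ofReal_of_nonpos (mul_nonpos_of_nonpos_of_nonneg hc (Real.log_nonneg (by norm_num)))]
    rw [← lintegral_zero (μ := volume.restrict (Set.Ioo (0:ℝ) 1))]
    apply setLIntegral_congr_fun measurableSet_Ioo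
    intro x hx
    exact ENNReal.ofReal_of_nonpos (div_nonpos_of_nonpos_of_nonneg hc (by linarith [hx.1]))

/-- the Levy constant -/
noncomputable def Lv : ℝ := π ^ 2 / (12 * Real.log 2)

lemma Lv_mul : Lv * Real.log 2 = π ^ 2 / 12 := by
  have : Real.log 2 ≠ 0 := (Real.log_pos (by norm_num)).ne'
  unfold Lv
  field_simp

lemma close_of_mean {f : ℝ → ℝ} {D : ℝ} (hf : Lip f D) (hf0 : ∀ x, 0 ≤ f x)
    (hm : ∫⁻ x in Set.Ioo (0:ℝ) 1, ENNReal.ofReal (f x / (1 + x)) = ENNReal.ofReal (π ^ 2 / 12))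
    {x : ℝ} (hx : 0 ≤ x) (hx1 : x ≤ 1) : |f x - Lv| ≤ D := by
  have hD := hf.nonneg
  have hosc : ∀ y ∈ Set.Ioo (0:ℝ) 1, |f x - f y| ≤ D := by
    intro y hy
    refine (hf.abs hx hx1 hy.1.le hy.2.le).trans ?_
    have : |x - y| ≤ 1 := by rw [abs_le]; constructor <;> linarith [hy.1, hy.2]
    nlinarith
  have hl2 : 0 < Real.log 2 := Real.log_pos (by norm_num)
  have hpi : 0 ≤ π ^ 2 / 12 := by positivity
  rw [abs_le]
  constructor
  · have h1 : ENNReal.ofReal (π ^ 2 / 12) ≤ ENNReal.ofReal ((f x + D) * Real.log 2) := by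
      rw [← hm, ← mean_const]
      apply setLIntegral_mono' measurableSet_Ioo
      intro y hy
      apply ENNReal.ofReal_le_ofReal
      apply div_le_div_of_nonneg_right _ (by linarith [hy.1])
      linarith [(abs_le.1 (hosc y hy)).1]
    rw [ENNReal.ofReal_le_ofReal_iff (by have := hf0 x; positivity), ← Lv_mul] at h1
    have := le_of_mul_le_mul_right h1 hl2
    linarith
  · have h1 : ENNReal.ofReal ((f x - D) * Real.log 2) ≤ ENNReal.ofReal (π ^ 2 / 12) := by
      rw [← hm, ← mean_const]
      apply setLIntegral_mono' measurableSet_Ioo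
      intro y hy
      apply ENNReal.ofReal_le_ofReal
      apply div_le_div_of_nonneg_right _ (by linarith [hy.1])
      linarith [(abs_le.1 (hosc y hy)).2]
    rw [ENNReal.ofReal_le_ofReal_iff hpi, ← Lv_mul] at h1
    have := le_of_mul_le_mul_right h1 hl2
    linarith

lemma exists_close {ε : ℝ} (hε : 0 < ε) : ∃ m : ℕ, ∀ x, 0 ≤ x → x ≤ 1 → |fj (m + 1) x - Lv| ≤ ε := by
  have : Tendsto (fun j : ℕ => ((31:ℝ) / 36) ^ j * (6 * ∑' k, dk k)) atTop (𝓝 0) := by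
    have := (tendsto_pow_atTop_nhds_zero_of_lt_one (r := (31:ℝ) / 36) (by norm_num) (by norm_num)).mul_const
      (6 * ∑' k, dk k)
    simpa using this
  obtain ⟨m, hm⟩ := (this.eventually (ge_mem_nhds hε)).exists
  refine ⟨m, fun x hx hx1 => (close_of_mean (lip_fj m) (fun x => ?_) ?_ hx hx1).trans hm⟩
  · rw [fj_succ]; exact P_nonneg _ _
  · rw [mean_fj, mean_phi]

end LC
namespace LC

lemma exp_le_quad (s : ℝ) : Real.exp s ≤ 1 + s + s ^ 2 * Real.exp |s| := by
  have h1 : 1 ≤ Real.exp |s| := Real.one_le_exp (abs_nonneg s)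
  rcases le_total |s| 1 with h | h
  · have := (abs_le.1 (Real.abs_exp_sub_one_sub_id_le h)).2
    nlinarith [sq_nonneg s]
  · rcases le_total 0 s with h0 | h0
    · rw [abs_of_nonneg h0] at h ⊢
      have h2 := Real.exp_pos s
      have h3 : 1 ≤ s ^ 2 := by nlinarith
      have h4 := mul_le_mul_of_nonneg_right h3 h2.le
      linarith
    · rw [abs_of_nonpos h0] at h h1 ⊢
      have : Real.exp s ≤ 1 := Real.exp_le_one_iff.2 h0
      nlinarith [sq_nonneg s]

lemma hasSum_fj (j : ℕ) {x : ℝ} (hx : 0 ≤ x) (hx1 : x ≤ 1) :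
    HasSum (fun k => pk k x * fj j (yk k x)) (fj (j + 1) x) := by
  have h := (summable_fj j hx hx1).hasSum
  rwa [← P_eq (fun k => mul_nonneg (pk_nonneg k hx)
    (fj_nonneg j (yk_pos k hx) (yk_le_one k hx))), ← fj_succ] at h

/-- the approximate solution of the Poisson equation -/
noncomputable def vm (m : ℕ) (x : ℝ) : ℝ := ∑ j ∈ Finset.range m, fj (j + 1) x

lemma measurable_vm (m : ℕ) : Measurable (vm m) := by
  unfold vm
  exact Finset.measurable_fun_sum _ fun j _ => measurable_fj (j + 1)

lemma vm_bound (m : ℕ) : ∃ V : ℝ, 0 ≤ V ∧ ∀ x, 0 ≤ x → x ≤ 1 → |vm m x| ≤ V := by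
  refine ⟨∑ j ∈ Finset.range m, (|fj (j + 1) 0| + (31 / 36) ^ j * (6 * ∑' k, dk k)), ?_, ?_⟩
  · apply Finset.sum_nonneg
    intro j _
    have := (lip_fj j).nonneg
    positivity
  · intro x hx hx1
    unfold vm
    refine (Finset.abs_sum_le_sum_abs _ _).trans (Finset.sum_le_sum fun j _ => ?_)
    exact (lip_fj j).bound hx hx1

/-- increments -/
noncomputable def psi (m k : ℕ) (x : ℝ) : ℝ := phi (yk k x) + vm m (yk k x) - vm m x

lemma hasSum_psi (m : ℕ) {x : ℝ} (hx : 0 ≤ x) (hx1 : x ≤ 1) :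
    HasSum (fun k => pk k x * psi m k x) (fj (m + 1) x) := by
  have h1 := hasSum_fj 0 hx hx1
  have h2 : HasSum (fun k => ∑ j ∈ Finset.range m, pk k x * fj (j + 1) (yk k x))
      (∑ j ∈ Finset.range m, fj (j + 1 + 1) x) :=
    hasSum_sum fun j _ => hasSum_fj (j + 1) hx hx1
  have h3 := (hasSum_pk hx).mul_right (vm m x)
  refine hs_congr ((h1.add h2).sub h3) (fun k => ?_) ?_
  · unfold psi
    rw [← Finset.mul_sum]
    change _ = pk k x * phi (yk k x) + pk k x * vm m (yk k x) - pk k x * vm m x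
    ring
  · have := Finset.sum_range_succ (fun j => fj (j + 1) x) m
    rw [Finset.sum_range_succ' (fun j => fj (j + 1) x) m] at this
    unfold vm
    simp only [zero_add] at this ⊢
    linarith

lemma psi_abs {m : ℕ} {V : ℝ} (hV : ∀ x, 0 ≤ x → x ≤ 1 → |vm m x| ≤ V) (k : ℕ) {x : ℝ}
    (hx : 0 ≤ x) (hx1 : x ≤ 1) : |psi m k x| ≤ Real.log (k + 2) + 2 * V := by
  have h1 := abs_le.1 (hV x hx hx1)
  have h2 := abs_le.1 (hV (yk k x) (yk_pos k hx).le (yk_le_one k hx))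
  have h3 := phi_yk_le k hx hx1
  have h4 := phi_yk_nonneg k hx
  unfold psi
  rw [abs_le]; constructor <;> linarith

lemma term_bound {m : ℕ} {V : ℝ} (hV : ∀ x, 0 ≤ x → x ≤ 1 → |vm m x| ≤ V) (k : ℕ) {x t : ℝ}
    (hx : 0 ≤ x) (hx1 : x ≤ 1) (ht : |t| ≤ 1 / 4) :
    pk k x * Real.exp (t * psi m k x) ≤
      pk k x + t * (pk k x * psi m k x) + t ^ 2 * (64 * Real.exp V * dk k) := by
  set p := psi m k x with hp
  have hpa := psi_abs hV k hx hx1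
  rw [← hp] at hpa
  have h1 := exp_le_quad (t * p)
  have h2 : p ^ 2 ≤ 32 * Real.exp (|p| / 4) := by
    have := Real.quadratic_le_exp_of_nonneg (x := |p| / 4) (by positivity)
    have h5 : p ^ 2 = |p| ^ 2 := (sq_abs p).symm
    rw [h5]
    nlinarith [abs_nonneg p]
  have h3 : Real.exp |t * p| ≤ Real.exp (|p| / 4) := by
    apply Real.exp_le_exp.2
    rw [abs_mul]
    nlinarith [abs_nonneg p]
  have h4 : Real.exp (|p| / 4) * Real.exp (|p| / 4) ≤ √(k + 2) * Real.exp V := by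
    rw [← Real.exp_add]
    have : √((k:ℝ) + 2) = Real.exp (Real.log (k + 2) / 2) := by
      rw [← Real.log_sqrt (by positivity), Real.exp_log (Real.sqrt_pos.2 (by positivity))]
    rw [this, ← Real.exp_add]
    apply Real.exp_le_exp.2
    linarith
  have h5 : p ^ 2 * Real.exp |t * p| ≤ 32 * (√(k + 2) * Real.exp V) := by
    calc p ^ 2 * Real.exp |t * p| ≤ (32 * Real.exp (|p| / 4)) * Real.exp (|p| / 4) :=
          mul_le_mul h2 h3 (Real.exp_pos _).le (by positivity)
      _ = 32 * (Real.exp (|p| / 4) * Real.exp (|p| / 4)) := by ring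
      _ ≤ _ := by linarith
  have h6 : Real.exp (t * p) ≤ 1 + t * p + t ^ 2 * (32 * (√(k + 2) * Real.exp V)) := by
    have := mul_le_mul_of_nonneg_left h5 (sq_nonneg t)
    have e : (t * p) ^ 2 * Real.exp |t * p| = t ^ 2 * (p ^ 2 * Real.exp |t * p|) := by ring
    linarith
  have h7 := mul_le_mul_of_nonneg_left h6 (pk_nonneg k hx)
  have h8 : pk k x * (t ^ 2 * (32 * (√(k + 2) * Real.exp V))) ≤ t ^ 2 * (64 * Real.exp V * dk k) := by
    calc _ ≤ 2 / (((k:ℝ) + 1) * (k + 2)) * (t ^ 2 * (32 * (√(k + 2) * Real.exp V))) :=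
          mul_le_mul_of_nonneg_right (pk_le k hx hx1) (by positivity)
      _ = _ := by unfold dk; ring
  have e : pk k x * (1 + t * p + t ^ 2 * (32 * (√(k + 2) * Real.exp V))) =
    pk k x + t * (pk k x * p) + pk k x * (t ^ 2 * (32 * (√(k + 2) * Real.exp V))) := by ring
  linarith

/-- one step bound -/
lemma step_bound {m : ℕ} {V ε : ℝ} (hV : ∀ x, 0 ≤ x → x ≤ 1 → |vm m x| ≤ V)
    (hm : ∀ x, 0 ≤ x → x ≤ 1 → |fj (m + 1) x - Lv| ≤ ε) {x t : ℝ}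
    (hx : 0 ≤ x) (hx1 : x ≤ 1) (ht : |t| ≤ 1 / 4) :
    ∑' k, ENNReal.ofReal (pk k x * Real.exp (t * psi m k x)) ≤
      ENNReal.ofReal (Real.exp (t * Lv + |t| * ε + t ^ 2 * (64 * Real.exp V * ∑' k, dk k))) := by
  have hs : HasSum (fun k => pk k x + t * (pk k x * psi m k x) + t ^ 2 * (64 * Real.exp V * dk k))
      (1 + t * fj (m + 1) x + t ^ 2 * (64 * Real.exp V * ∑' k, dk k)) :=
    ((hasSum_pk hx).add ((hasSum_psi m hx hx1).mul_left t)).add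
      ((summable_dk.hasSum.mul_left _).mul_left _)
  calc _ ≤ ∑' k, ENNReal.ofReal (pk k x + t * (pk k x * psi m k x) + t ^ 2 * (64 * Real.exp V * dk k)) :=
        ENNReal.tsum_le_tsum fun k => ENNReal.ofReal_le_ofReal (term_bound hV k hx hx1 ht)
    _ = ENNReal.ofReal (1 + t * fj (m + 1) x + t ^ 2 * (64 * Real.exp V * ∑' k, dk k)) := by
        rw [← hs.tsum_eq, ENNReal.ofReal_tsum_of_nonneg _ hs.summable]
        intro k
        exact (mul_nonneg (pk_nonneg k hx) (Real.exp_pos _).le).trans (term_bound hV k hx hx1 ht)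
    _ ≤ _ := by
        apply ENNReal.ofReal_le_ofReal
        have h1 := Real.add_one_le_exp (t * Lv + |t| * ε + t ^ 2 * (64 * Real.exp V * ∑' k, dk k))
        have h2 : t * (fj (m + 1) x - Lv) ≤ |t| * ε := by
          refine (le_abs_self _).trans ?_
          rw [abs_mul]
          exact mul_le_mul_of_nonneg_left (hm x hx hx1) (abs_nonneg t)
        linarith

/-- Birkhoff sums -/
noncomputable def S (n : ℕ) (x : ℝ) : ℝ := ∑ i ∈ Finset.range n, phi (gaussMap^[i] x)

lemma measurable_gaussMap : Measurable gaussMap := by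
  unfold gaussMap
  exact measurable_fract.comp measurable_inv

lemma measurable_S (n : ℕ) : Measurable (S n) := by
  unfold S
  exact Finset.measurable_fun_sum _ fun j _ => measurable_phi.comp (measurable_gaussMap.iterate j)

lemma S_succ (n : ℕ) (x : ℝ) : S (n + 1) x = phi x + S n (gaussMap x) := by
  unfold S
  rw [Finset.sum_range_succ', add_comm]
  rfl

lemma gaussMap_yk (k : ℕ) {x : ℝ} (hx : x ∈ Set.Ioo (0:ℝ) 1) : gaussMap (yk k x) = x := by
  unfold gaussMap yk
  rw [inv_inv, show (k:ℝ) + 1 + x = x + ((k + 1 : ℕ) : ℝ) by push_cast; ring, Int.fract_add_natCast]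
  exact Int.fract_eq_self.2 ⟨hx.1.le, hx.2⟩

/-- weighted moment generating function -/
noncomputable def I (m : ℕ) (t : ℝ) (n : ℕ) : ENNReal :=
  ∫⁻ z in Set.Ioo (0:ℝ) 1, ENNReal.ofReal (Real.exp (t * (S n z + vm m z)) / (1 + z))

lemma I_succ {m : ℕ} {V ε : ℝ} (hV : ∀ x, 0 ≤ x → x ≤ 1 → |vm m x| ≤ V)
    (hm : ∀ x, 0 ≤ x → x ≤ 1 → |fj (m + 1) x - Lv| ≤ ε) {t : ℝ} (ht : |t| ≤ 1 / 4) (n : ℕ) :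
    I m t (n + 1) ≤
      ENNReal.ofReal (Real.exp (t * Lv + |t| * ε + t ^ 2 * (64 * Real.exp V * ∑' k, dk k))) * I m t n := by
  have hmeas : ∀ n, Measurable fun z => Real.exp (t * (S n z + vm m z)) := fun n =>
    Real.measurable_exp.comp (((measurable_S n).add (measurable_vm m)).const_mul t)
  unfold I
  rw [transfer (fun z => Real.exp (t * (S (n + 1) z + vm m z))) (hmeas (n + 1)), ← lintegral_const_mul]
  · apply setLIntegral_mono' measurableSet_Ioo
    intro x hx
    have hk : ∀ k, ENNReal.ofReal (pk k x * Real.exp (t * (S (n + 1) (yk k x) + vm m (yk k x))) / (1 + x)) =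
        ENNReal.ofReal (pk k x * Real.exp (t * psi m k x)) *
        ENNReal.ofReal (Real.exp (t * (S n x + vm m x)) / (1 + x)) := by
      intro k
      rw [← ENNReal.ofReal_mul (mul_nonneg (pk_nonneg k hx.1.le) (Real.exp_pos _).le)]
      congr 1
      rw [← mul_div_assoc, mul_assoc, ← Real.exp_add, S_succ, gaussMap_yk k hx]
      unfold psi
      congr 3
      ring
    simp_rw [hk]
    rw [ENNReal.tsum_mul_right]
    gcongr
    exact step_bound hV hm hx.1.le hx.2.le ht
  · exact ((hmeas n).div (by fun_prop)).ennreal_ofReal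

lemma I_zero {m : ℕ} {V : ℝ} (hV : ∀ x, 0 ≤ x → x ≤ 1 → |vm m x| ≤ V)
    {t : ℝ} (ht : |t| ≤ 1 / 4) : I m t 0 ≤ ENNReal.ofReal (Real.exp V) := by
  unfold I
  calc _ ≤ ∫⁻ z in Set.Ioo (0:ℝ) 1, ENNReal.ofReal (Real.exp V) := by
        apply setLIntegral_mono' measurableSet_Ioo
        intro x hx
        apply ENNReal.ofReal_le_ofReal
        refine (div_le_self (Real.exp_pos _).le (by linarith [hx.1])).trans (Real.exp_le_exp.2 ?_)
        have := hV x hx.1.le hx.2.le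
        simp only [S, Finset.sum_range_zero, zero_add]
        refine (le_abs_self _).trans ?_
        rw [abs_mul]
        nlinarith [abs_nonneg t, abs_nonneg (vm m x)]
    _ = _ := by simp

lemma I_le {m : ℕ} {V ε : ℝ} (hV : ∀ x, 0 ≤ x → x ≤ 1 → |vm m x| ≤ V)
    (hm : ∀ x, 0 ≤ x → x ≤ 1 → |fj (m + 1) x - Lv| ≤ ε) {t : ℝ} (ht : |t| ≤ 1 / 4) (n : ℕ) :
    I m t n ≤ ENNReal.ofReal
      (Real.exp (n * (t * Lv + |t| * ε + t ^ 2 * (64 * Real.exp V * ∑' k, dk k)) + V)) := by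
  induction n with
  | zero => simpa using I_zero hV ht
  | succ n ih =>
    refine (I_succ hV hm ht n).trans ((mul_le_mul_right ih _).trans ?_)
    rw [← ENNReal.ofReal_mul (Real.exp_pos _).le, ← Real.exp_add]
    apply le_of_eq
    congr 2
    push_cast
    ring

lemma deviation {ε : ℝ} (hε : 0 < ε) : ∃ V K : ℝ, 0 ≤ V ∧ 0 ≤ K ∧ ∀ t : ℝ, |t| ≤ 1 / 4 →
    ∀ (n : ℕ) (c : ℝ), volume {x : ℝ | x ∈ Set.Ioo (0:ℝ) 1 ∧ |t| * n * c ≤ t * (S n x - n * Lv)} ≤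
      ENNReal.ofReal (2 * Real.exp (2 * V) * Real.exp (n * (|t| * ε + t ^ 2 * K - |t| * c))) := by
  obtain ⟨m, hm⟩ := exists_close hε
  obtain ⟨V, hV0, hV⟩ := vm_bound m
  refine ⟨V, 64 * Real.exp V * ∑' k, dk k, hV0,
    mul_nonneg (by positivity) (tsum_nonneg dk_nonneg), fun t ht n c => ?_⟩
  set K := 64 * Real.exp V * ∑' k, dk k with hK
  set κ : ℝ := Real.exp (t * (n * Lv) + |t| * n * c - V) / 2 with hκ
  have hκ0 : 0 < κ := by positivity
  have hmeas : Measurable fun z => ENNReal.ofReal (Real.exp (t * (S n z + vm m z)) / (1 + z)) :=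
    ((Real.measurable_exp.comp (((measurable_S n).add (measurable_vm m)).const_mul t)).div
      (by fun_prop)).ennreal_ofReal
  have hmk := mul_meas_ge_le_lintegral (μ := volume.restrict (Set.Ioo (0:ℝ) 1)) hmeas (ENNReal.ofReal κ)
  have hsub : {x : ℝ | x ∈ Set.Ioo (0:ℝ) 1 ∧ |t| * n * c ≤ t * (S n x - n * Lv)} ⊆
      {x | ENNReal.ofReal κ ≤ ENNReal.ofReal (Real.exp (t * (S n x + vm m x)) / (1 + x))} ∩ Set.Ioo (0:ℝ) 1 := by
    rintro x ⟨hx, h⟩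
    refine ⟨?_, hx⟩
    apply ENNReal.ofReal_le_ofReal
    apply div_le_div₀ (Real.exp_pos _).le _ (by linarith [hx.1]) (by linarith [hx.2])
    apply Real.exp_le_exp.2
    have h2 : |t * vm m x| ≤ V := by
      rw [abs_mul]
      have := hV x hx.1.le hx.2.le
      nlinarith [abs_nonneg t, abs_nonneg (vm m x)]
    have h3 := (abs_le.1 h2).1
    nlinarith
  have h1 : volume {x : ℝ | x ∈ Set.Ioo (0:ℝ) 1 ∧ |t| * n * c ≤ t * (S n x - n * Lv)} ≤
      (volume.restrict (Set.Ioo (0:ℝ) 1))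
        {x | ENNReal.ofReal κ ≤ ENNReal.ofReal (Real.exp (t * (S n x + vm m x)) / (1 + x))} := by
    rw [Measure.restrict_apply' measurableSet_Ioo]
    exact measure_mono hsub
  have h2 : ENNReal.ofReal κ * volume {x : ℝ | x ∈ Set.Ioo (0:ℝ) 1 ∧ |t| * n * c ≤ t * (S n x - n * Lv)}
      ≤ ENNReal.ofReal (Real.exp (n * (t * Lv + |t| * ε + t ^ 2 * K) + V)) :=
    ((mul_le_mul_right h1 _).trans hmk).trans (I_le hV hm ht n)
  have h3 : ENNReal.ofReal (Real.exp (n * (t * Lv + |t| * ε + t ^ 2 * K) + V)) = ENNReal.ofReal κ *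
      ENNReal.ofReal (2 * Real.exp (2 * V) * Real.exp (n * (|t| * ε + t ^ 2 * K - |t| * c))) := by
    rw [← ENNReal.ofReal_mul hκ0.le, hκ]
    congr 1
    have e : Real.exp (t * (n * Lv) + |t| * n * c - V) / 2 * (2 * Real.exp (2 * V) * Real.exp (n * (|t| * ε + t ^ 2 * K - |t| * c)))
      = Real.exp (t * (n * Lv) + |t| * n * c - V) * Real.exp (2 * V) * Real.exp (n * (|t| * ε + t ^ 2 * K - |t| * c)) := by ring
    rw [e, ← Real.exp_add, ← Real.exp_add]
    congr 1
    ring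
  rw [h3] at h2
  exact (ENNReal.mul_le_mul_iff_right (ENNReal.ofReal_pos.2 hκ0).ne' ENNReal.ofReal_ne_top).1 h2

/-! ### denominators -/

lemma gaussMap_mem {x : ℝ} (h : Irrational x) :
    gaussMap x ∈ Set.Ioo (0:ℝ) 1 ∧ Irrational (gaussMap x) := by
  have h1 : Irrational (gaussMap x) := by
    unfold gaussMap
    rw [Int.fract]
    exact (irrational_inv_iff.2 h).sub_intCast _
  refine ⟨⟨lt_of_le_of_ne (Int.fract_nonneg _) (fun h0 => ?_), Int.fract_lt_one _⟩, h1⟩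
  exact h1.ne_zero h0.symm

lemma iter_mem {x : ℝ} (hx : x ∈ Set.Ioo (0:ℝ) 1) (h : Irrational x) (i : ℕ) :
    gaussMap^[i] x ∈ Set.Ioo (0:ℝ) 1 ∧ Irrational (gaussMap^[i] x) := by
  induction i with
  | zero => exact ⟨hx, h⟩
  | succ i ih =>
    rw [Function.iterate_succ_apply']
    exact gaussMap_mem ih.2

lemma pq_spec {x : ℝ} (hx : x ∈ Set.Ioo (0:ℝ) 1) (h : Irrational x) (n : ℕ) :
    1 ≤ pq x (n + 1) ∧ ((pq x (n + 1) : ℕ) : ℝ) + gaussMap^[n + 1] x = (gaussMap^[n] x)⁻¹ := by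
  have hm := (iter_mem hx h n).1
  have h1 : 1 ≤ (gaussMap^[n] x)⁻¹ := (one_le_inv₀ hm.1).2 hm.2.le
  have h2 : 1 ≤ ⌊(gaussMap^[n] x)⁻¹⌋ := Int.le_floor.2 (by simpa using h1)
  unfold pq
  rw [Nat.add_sub_cancel]
  refine ⟨by omega, ?_⟩
  have h3 : ((⌊(gaussMap^[n] x)⁻¹⌋.toNat : ℕ) : ℝ) = (⌊(gaussMap^[n] x)⁻¹⌋ : ℝ) := by
    exact_mod_cast Int.toNat_of_nonneg (by omega : 0 ≤ ⌊(gaussMap^[n] x)⁻¹⌋)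
  rw [h3, Function.iterate_succ_apply']
  exact Int.floor_add_fract _

/-- product of the orbit -/
noncomputable def Pr (n : ℕ) (x : ℝ) : ℝ := ∏ i ∈ Finset.range n, gaussMap^[i] x

lemma cfQ_identity {x : ℝ} (hx : x ∈ Set.Ioo (0:ℝ) 1) (h : Irrational x) (n : ℕ) :
    (cfQ (pq x) (n + 1) : ℝ) * Pr n x + (cfQ (pq x) n : ℝ) * Pr (n + 1) x = 1 := by
  induction n with
  | zero => simp [cfQ, Pr]
  | succ n ih =>
    have hs := (pq_spec hx h n).2
    have h0 : gaussMap^[n] x ≠ 0 := (iter_mem hx h n).1.1.ne'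
    have e1 : Pr (n + 1) x = Pr n x * gaussMap^[n] x := Finset.prod_range_succ _ _
    have e2 : Pr (n + 2) x = Pr (n + 1) x * gaussMap^[n + 1] x := Finset.prod_range_succ _ _
    have e3 : gaussMap^[n] x * (((pq x (n + 1) : ℕ) : ℝ) + gaussMap^[n + 1] x) = 1 := by
      rw [hs, mul_inv_cancel₀ h0]
    have e4 : (cfQ (pq x) (n + 1 + 1) : ℝ) =
        ((pq x (n + 1) : ℕ) : ℝ) * cfQ (pq x) (n + 1) + cfQ (pq x) n := by
      have : cfQ (pq x) (n + 2) = (pq x (n + 1) : ℤ) * cfQ (pq x) (n + 1) + cfQ (pq x) n := rfl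
      rw [this]; push_cast; ring
    rw [e4, e2]
    rw [e1] at ih ⊢
    linear_combination ih + (cfQ (pq x) (n + 1) : ℝ) * Pr n x * e3

lemma cfQ_mono {x : ℝ} (hx : x ∈ Set.Ioo (0:ℝ) 1) (h : Irrational x) (n : ℕ) :
    0 ≤ cfQ (pq x) n ∧ cfQ (pq x) n ≤ cfQ (pq x) (n + 1) := by
  induction n with
  | zero => simp [cfQ]
  | succ n ih =>
    have hs : (1:ℤ) ≤ pq x (n + 1) := by exact_mod_cast (pq_spec hx h n).1
    have e : cfQ (pq x) (n + 1 + 1) = (pq x (n + 1) : ℤ) * cfQ (pq x) (n + 1) + cfQ (pq x) n := rfl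
    refine ⟨ih.1.trans ih.2, ?_⟩
    rw [e]
    nlinarith [ih.1, ih.2]

lemma log_qden {x : ℝ} (hx : x ∈ Set.Ioo (0:ℝ) 1) (h : Irrational x) (n : ℕ) :
    |Real.log (qden x n : ℝ) - S n x| ≤ Real.log 2 := by
  have hid := cfQ_identity hx h n
  obtain ⟨hq0, hq1⟩ := cfQ_mono hx h n
  have hq0' : (0:ℝ) ≤ cfQ (pq x) n := by exact_mod_cast hq0
  have hq1' : (cfQ (pq x) n : ℝ) ≤ cfQ (pq x) (n + 1) := by exact_mod_cast hq1
  have hP : 0 < Pr n x := Finset.prod_pos fun i _ => (iter_mem hx h i).1.1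
  have hP1 : Pr (n + 1) x = Pr n x * gaussMap^[n] x := Finset.prod_range_succ _ _
  have hm := (iter_mem hx h n).1
  have hP2 : Pr (n + 1) x ≤ Pr n x := by rw [hP1]; nlinarith [hm.2]
  have hP3 : 0 < Pr (n + 1) x := by rw [hP1]; exact mul_pos hP hm.1
  have hS : S n x = - Real.log (Pr n x) := by
    unfold S Pr phi
    rw [Real.log_prod (fun i _ => (iter_mem hx h i).1.1.ne'), Finset.sum_neg_distrib]
  have hq : qden x n = cfQ (pq x) (n + 1) := rfl
  rw [hq, hS]
  set q : ℝ := (cfQ (pq x) (n + 1) : ℝ) with hqdef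
  have hle : q * Pr n x ≤ 1 := by nlinarith
  have hge : 1 / 2 ≤ q * Pr n x := by
    have := mul_le_mul hq1' hP2 hP3.le (hq0'.trans hq1')
    linarith
  have hqpos : 0 < q := by
    by_contra hneg
    nlinarith
  have e : Real.log q - - Real.log (Pr n x) = Real.log (q * Pr n x) := by
    rw [Real.log_mul hqpos.ne' hP.ne']; ring
  rw [e, abs_le]
  constructor
  · have := Real.log_le_log (by norm_num) hge
    rwa [one_div, Real.log_inv] at this
  · exact (Real.log_nonpos (by positivity) hle).trans (Real.log_nonneg (by norm_num))

end LC
/-- **Chernoff-type estimate for the Lévy constant.** For every `δ > 0` there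
are `N > 0`, `B > 0`, `α > 0` such that for all `n ≥ N`, the Lebesgue measure of
the set of irrational `x ∈ [0,1)` with
`|(1/n) log q_n(x) − π²/(12 log 2)| ≥ δ` is at most `B exp(−α n)`. -/
theorem levy_chernoff (δ : ℝ) (hδ : 0 < δ) :
    ∃ (N : ℕ) (B α : ℝ), 0 < N ∧ 0 < B ∧ 0 < α ∧ ∀ n : ℕ, N ≤ n →
      volume {x : ℝ | x ∈ Set.Ico (0:ℝ) 1 ∧ Irrational x ∧
          δ ≤ |(1 / (n : ℝ)) * Real.log ((qden x n : ℝ)) - π ^ 2 / (12 * Real.log 2)|} ≤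
        ENNReal.ofReal (B * Real.exp (-α * n)) := by
  obtain ⟨V, K, hV, hK, hdev⟩ := LC.deviation (ε := δ / 8) (by positivity)
  set s : ℝ := min (1 / 4) (δ / (8 * (K + 1))) with hs
  have hs0 : 0 < s := lt_min (by norm_num) (by positivity)
  have hs1 : s ≤ 1 / 4 := min_le_left _ _
  have hs2 : s * K ≤ δ / 8 := by
    have h1 : s ≤ δ / (8 * (K + 1)) := min_le_right _ _
    rw [le_div_iff₀ (by positivity)] at h1
    nlinarith
  obtain ⟨N, hN⟩ := exists_nat_ge (2 * Real.log 2 / δ)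
  have hexp : ∀ n : ℕ, 2 * Real.exp (2 * V) * Real.exp (n * (s * (δ / 8) + s ^ 2 * K - s * (δ / 2))) ≤
      2 * Real.exp (2 * V) * Real.exp (-(s * δ / 4) * n) := by
    intro n
    apply mul_le_mul_of_nonneg_left _ (by positivity)
    apply Real.exp_le_exp.2
    have h1 : s * (δ / 8) + s ^ 2 * K - s * (δ / 2) ≤ -(s * δ / 4) := by nlinarith
    have h2 := mul_le_mul_of_nonneg_left h1 (Nat.cast_nonneg n : (0:ℝ) ≤ n)
    linarith
  refine ⟨N + 1, 2 * (2 * Real.exp (2 * V)), s * δ / 4, Nat.succ_pos N, by positivity, by positivity,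
    fun n hn => ?_⟩
  have hn0 : (0:ℝ) < n := by exact_mod_cast (Nat.succ_pos N).trans_le hn
  have hnN : (N:ℝ) ≤ n := by exact_mod_cast (Nat.le_succ N).trans hn
  have hlog : Real.log 2 ≤ n * (δ / 2) := by
    have := hN.trans hnN
    rw [div_le_iff₀ hδ] at this
    linarith
  have hd1 := hdev s (by rwa [abs_of_pos hs0]) n (δ / 2)
  have hd2 := hdev (-s) (by rwa [abs_neg, abs_of_pos hs0]) n (δ / 2)
  rw [abs_neg, neg_sq] at hd2
  rw [abs_of_pos hs0] at hd1 hd2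
  have hsub : {x : ℝ | x ∈ Set.Ico (0:ℝ) 1 ∧ Irrational x ∧
          δ ≤ |(1 / (n : ℝ)) * Real.log ((qden x n : ℝ)) - π ^ 2 / (12 * Real.log 2)|} ⊆
      {x : ℝ | x ∈ Set.Ioo (0:ℝ) 1 ∧ s * n * (δ / 2) ≤ s * (LC.S n x - n * LC.Lv)} ∪
      {x : ℝ | x ∈ Set.Ioo (0:ℝ) 1 ∧ s * n * (δ / 2) ≤ -s * (LC.S n x - n * LC.Lv)} := by
    rintro x ⟨hx, hirr, hdel⟩
    have hx' : x ∈ Set.Ioo (0:ℝ) 1 := ⟨lt_of_le_of_ne hx.1 (fun h => hirr.ne_zero h.symm), hx.2⟩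
    have hq := abs_le.1 (LC.log_qden hx' hirr n)
    change δ ≤ |(1 / (n : ℝ)) * Real.log ((qden x n : ℝ)) - LC.Lv| at hdel
    have e : (1 / (n : ℝ)) * Real.log ((qden x n : ℝ)) - LC.Lv =
        (Real.log ((qden x n : ℝ)) - n * LC.Lv) / n := by field_simp
    rw [e, abs_div, abs_of_pos hn0, le_div_iff₀ hn0] at hdel
    rcases le_abs.1 hdel with h | h
    · left
      refine ⟨hx', ?_⟩
      rw [mul_assoc]
      apply mul_le_mul_of_nonneg_left _ hs0.le
      linarith [hq.2]
    · right
      refine ⟨hx', ?_⟩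
      rw [mul_assoc, neg_mul, ← mul_neg]
      apply mul_le_mul_of_nonneg_left _ hs0.le
      linarith [hq.1]
  refine (measure_mono hsub).trans ((measure_union_le _ _).trans ((add_le_add hd1 hd2).trans ?_))
  rw [← ENNReal.ofReal_add (by positivity) (by positivity)]
  apply ENNReal.ofReal_le_ofReal
  have := hexp n
  linarith
end

section
/- Suppose the coordinate process {A_n, n ≥ 1} is ψ-mixing and that E(A_1^t) < ∞ for each 0 < t < 1. Then for every δ > 0 there exist N > 0, B > 0 and α > 0 such that for all n ≥ N, P(|(1/n)·log Q_n + ∫ log X dP| ≥ δ) ≤ B·exp(−α·n). -/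
open Filter MeasureTheory Real Topology

instance : MeasurableSpace ℕ+ := ⊤

/-- `cfP a n` is the continued fraction numerator `P_{n-1}` of the sequence
`a 1, a 2, …` (so `cfP a 0 = P_{-1} = 1`, `cfP a 1 = P_0 = 0`, and
`P_n = a_n P_{n-1} + P_{n-2}` for `n ≥ 1`). -/
def cfP (a : ℕ → ℕ) : ℕ → ℤ
  | 0 => 1
  | 1 => 0
  | n + 2 => (a (n + 1) : ℤ) * cfP a (n + 1) + cfP a n

/-- The `n`-th convergent `P_n / Q_n = [a_1, …, a_n]`. -/
noncomputable def cfConv (a : ℕ → ℕ) (n : ℕ) : ℝ :=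
  (cfP a (n + 1) : ℝ) / (cfQ a (n + 1) : ℝ)

/-- The value `[a_1, a_2, …]` of the infinite continued fraction, as the limit
of the convergents. -/
noncomputable def cfVal (a : ℕ → ℕ) : ℝ := limUnder atTop (cfConv a)

/-- The left shift on `{1,2,3,…}^ℕ` (coordinate `n-1` of `ω` is `A_n(ω)`). -/
def shiftS : (ℕ → ℕ+) → (ℕ → ℕ+) := fun ω n => ω (n + 1)

/-- `Xtail ω k = X_k(ω) = [A_k(ω), A_{k+1}(ω), …]` for `k ≥ 1`, where
`A_n(ω) = ω (n-1)`. -/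
noncomputable def Xtail (ω : ℕ → ℕ+) (k : ℕ) : ℝ :=
  cfVal (fun i => (ω (i + k - 2) : ℕ))

/-- `Qent ω n = Q_n(ω)`, the denominator of the convergent `[A_1(ω), …, A_n(ω)]`. -/
def Qent (ω : ℕ → ℕ+) (n : ℕ) : ℤ := cfQ (fun i => (ω (i - 1) : ℕ)) (n + 1)

/-- The σ-algebra `σ(A_1, …, A_m)` generated by the first `m` coordinates. -/
def finAlg (m : ℕ) : MeasurableSpace (ℕ → ℕ+) :=
  MeasurableSpace.comap (fun ω (i : Fin m) => ω i) inferInstance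

/-- The σ-algebra `σ(A_{j+1}, A_{j+2}, …)` generated by the coordinates of
index `≥ j`, i.e. by `A_{j+1}, A_{j+2}, …`. -/
def tailAlg (j : ℕ) : MeasurableSpace (ℕ → ℕ+) :=
  MeasurableSpace.comap (fun ω (i : ℕ) => ω (i + j)) inferInstance

/-- The process `{A_n, n ≥ 1}` is ψ-mixing: it is stationary (the left shift
preserves `P`) and there is `ψ : ℕ → [0,∞)` with `ψ(n) → 0` such that
`|E(fg) − E(f)E(g)| ≤ ψ(n) E|f| E|g|` for all `m, n ≥ 1`, every integrable
`f ∈ σ(A_1,…,A_m)` and every integrable `g ∈ σ(A_{m+n}, A_{m+n+1}, …)`. -/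
def PsiMixing (P : Measure (ℕ → ℕ+)) : Prop :=
  MeasurePreserving shiftS P P ∧
  ∃ ψ : ℕ → ℝ, (∀ n, 0 ≤ ψ n) ∧ Tendsto ψ atTop (𝓝 0) ∧
    ∀ m n : ℕ, 1 ≤ m → 1 ≤ n → ∀ f g : (ℕ → ℕ+) → ℝ,
      Integrable f P → Integrable g P →
      Measurable[finAlg m] f → Measurable[tailAlg (m + n - 1)] g →
      |(∫ ω, f ω * g ω ∂P) - (∫ ω, f ω ∂P) * (∫ ω, g ω ∂P)| ≤
        ψ n * (∫ ω, |f ω| ∂P) * (∫ ω, |g ω| ∂P)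

/-- `Q_n` as a real number. -/
noncomputable def qq (ω : ℕ → ℕ+) (n : ℕ) : ℝ := (Qent ω n : ℝ)

lemma qq_zero (ω : ℕ → ℕ+) : qq ω 0 = 1 := by simp [qq, Qent, cfQ]

lemma qq_one (ω : ℕ → ℕ+) : qq ω 1 = ((ω 0 : ℕ) : ℝ) := by simp [qq, Qent, cfQ]

lemma qq_add_two (ω : ℕ → ℕ+) (n : ℕ) :
    qq ω (n + 2) = ((ω (n + 1) : ℕ) : ℝ) * qq ω (n + 1) + qq ω n := by
  simp [qq, Qent, cfQ]

lemma one_le_coord (ω : ℕ → ℕ+) (i : ℕ) : (1 : ℝ) ≤ ((ω i : ℕ) : ℝ) := by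
  exact_mod_cast (ω i).pos

lemma qq_mono_one (ω : ℕ → ℕ+) (n : ℕ) : 1 ≤ qq ω n ∧ qq ω n ≤ qq ω (n + 1) := by
  induction n with
  | zero => rw [qq_zero, qq_one]; exact ⟨le_rfl, one_le_coord ω 0⟩
  | succ n ih =>
    refine ⟨ih.1.trans ih.2, ?_⟩
    rw [qq_add_two]
    have := one_le_coord ω (n + 1)
    nlinarith [ih.1, ih.2]

lemma one_le_qq (ω : ℕ → ℕ+) (n : ℕ) : 1 ≤ qq ω n := (qq_mono_one ω n).1

lemma qq_pos (ω : ℕ → ℕ+) (n : ℕ) : 0 < qq ω n := zero_lt_one.trans_le (one_le_qq ω n)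

lemma qq_mono (ω : ℕ → ℕ+) : Monotone (qq ω) :=
  monotone_nat_of_le_succ fun n => (qq_mono_one ω n).2

lemma shift_iter (k : ℕ) (ω : ℕ → ℕ+) (n : ℕ) : (shiftS^[k] ω) n = ω (n + k) := by
  induction k generalizing ω with
  | zero => rfl
  | succ k ih => rw [Function.iterate_succ_apply, ih]; simp [shiftS, add_assoc]

lemma qq_split (ω : ℕ → ℕ+) (m n : ℕ) :
    qq ω m * qq (shiftS^[m] ω) n ≤ qq ω (m + n) ∧
      qq ω (m + n) ≤ 2 * (qq ω m * qq (shiftS^[m] ω) n) := by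
  induction n using Nat.twoStepInduction with
  | zero => simp only [qq_zero, add_zero]; constructor <;> linarith [qq_pos ω m]
  | one =>
    rw [qq_one, shift_iter, zero_add]
    rcases m with _ | m
    · simp only [qq_zero, zero_add, qq_one]; constructor <;> linarith [one_le_coord ω 0]
    · rw [show m + 1 + 1 = m + 2 from rfl, qq_add_two]
      have := one_le_coord ω (m + 1)
      have h2 := qq_mono_one ω m
      constructor <;> nlinarith
  | more n h1 h2 =>
    rw [show m + (n + 2) = (m + n) + 2 by ring, qq_add_two, qq_add_two, shift_iter,
      show n + 1 + m = m + n + 1 by ring, show m + n + 1 = m + (n + 1) by ring]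
    have := one_le_coord ω (m + (n + 1))
    constructor <;> nlinarith

lemma log_qq_split (ω : ℕ → ℕ+) (m n : ℕ) :
    log (qq ω m) + log (qq (shiftS^[m] ω) n) ≤ log (qq ω (m + n)) ∧
      log (qq ω (m + n)) ≤ log (qq ω m) + log (qq (shiftS^[m] ω) n) + log 2 := by
  have h := qq_split ω m n
  have h1 := qq_pos ω m
  have h2 := qq_pos (shiftS^[m] ω) n
  rw [← log_mul h1.ne' h2.ne', ← log_mul (by positivity) (by norm_num)]
  exact ⟨log_le_log (by positivity) h.1, log_le_log (qq_pos _ _) (by linarith)⟩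

lemma log_qq_blocks (ω : ℕ → ℕ+) (L k : ℕ) :
    ∑ j ∈ Finset.range k, log (qq (shiftS^[j * L] ω) L) ≤ log (qq ω (k * L)) ∧
      log (qq ω (k * L)) ≤ ∑ j ∈ Finset.range k, log (qq (shiftS^[j * L] ω) L) + k * log 2 := by
  induction k with
  | zero => simp [qq_zero]
  | succ k ih =>
    rw [Finset.sum_range_succ, show (k + 1) * L = k * L + L by ring]
    have := log_qq_split ω (k * L) L
    push_cast
    constructor <;> linarith [ih.1, ih.2]

lemma cfP_eq (ω : ℕ → ℕ+) (n : ℕ) :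
    ((cfP (fun i => (ω (i - 1) : ℕ)) (n + 2) : ℤ) : ℝ) = qq (shiftS ω) n := by
  induction n using Nat.twoStepInduction with
  | zero => simp [cfP, qq_zero]
  | one => simp [cfP, qq_one, shiftS]
  | more n h1 h2 =>
    rw [qq_add_two, ← h1, ← h2, show n + 2 + 2 = (n + 2) + 2 from rfl, cfP]
    simp [shiftS]

/-- The convergents `P_{n+1}/Q_{n+1}`. -/
noncomputable def cv (ω : ℕ → ℕ+) (n : ℕ) : ℝ := qq (shiftS ω) n / qq ω (n + 1)

lemma cv_eq (ω : ℕ → ℕ+) (n : ℕ) : cfConv (fun i => (ω (i - 1) : ℕ)) (n + 1) = cv ω n := by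
  rw [cfConv, cv, cfP_eq]; rfl

lemma cv_bounds (ω : ℕ → ℕ+) (n : ℕ) :
    1 / (2 * ((ω 0 : ℕ) : ℝ)) ≤ cv ω n ∧ cv ω n ≤ 1 := by
  have h := qq_split ω 1 n
  rw [qq_one, Function.iterate_one, add_comm 1 n] at h
  have h0 := one_le_coord ω 0
  have h1 := qq_pos (shiftS ω) n
  have h2 := qq_pos ω (n + 1)
  unfold cv
  constructor
  · rw [div_le_div_iff₀ (by positivity) h2]; linarith
  · rw [div_le_one h2]; nlinarith

lemma qq_det (ω : ℕ → ℕ+) (n : ℕ) :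
    qq (shiftS ω) (n + 1) * qq ω (n + 1) - qq (shiftS ω) n * qq ω (n + 2) = (-1) ^ (n + 1) := by
  induction n with
  | zero => rw [qq_add_two, qq_one, qq_one, qq_zero, qq_zero]; simp [shiftS]
  | succ n ih =>
    rw [qq_add_two ω (n + 1), qq_add_two (shiftS ω) n]
    have : (shiftS ω) (n + 1) = ω (n + 1 + 1) := rfl
    rw [this, pow_succ, ← ih]
    ring_nf

lemma qq_growth (ω : ℕ → ℕ+) (n : ℕ) : 2 ^ n ≤ qq ω (n + 1) * qq ω (n + 2) := by
  induction n with
  | zero => nlinarith [one_le_qq ω 1, one_le_qq ω 2]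
  | succ n ih =>
    rw [qq_add_two ω (n + 1), pow_succ]
    have h1 := one_le_coord ω (n + 1 + 1)
    have h2 := (qq_mono_one ω (n + 1)).2
    have h3 := qq_pos ω (n + 1)
    have h4 := qq_pos ω (n + 1 + 1)
    rw [show n + 1 + 1 = n + 2 from rfl] at *
    have : qq ω (n + 2) ≤ ((ω (n + 2) : ℕ) : ℝ) * qq ω (n + 2) := by nlinarith
    nlinarith

lemma cv_tendsto (ω : ℕ → ℕ+) : Tendsto (cv ω) atTop (𝓝 (Xtail ω 1)) := by
  have hc : CauchySeq (cv ω) := by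
    apply cauchySeq_of_le_geometric (1 / 2) 1 (by norm_num)
    intro n
    have h1 := qq_pos ω (n + 1)
    have h2 := qq_pos ω (n + 2)
    rw [dist_comm, Real.dist_eq]
    have : cv ω (n + 1) - cv ω n = (-1) ^ (n + 1) / (qq ω (n + 1) * qq ω (n + 2)) := by
      rw [← qq_det, cv, cv]; field_simp
    rw [this, abs_div, abs_pow, abs_neg, abs_one, one_pow, one_mul, one_div_pow,
      abs_of_pos (by positivity)]
    exact one_div_le_one_div_of_le (by positivity) (qq_growth ω n)
  obtain ⟨x, hx⟩ := cauchySeq_tendsto_of_complete hc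
  have h3 : Tendsto (cfConv (fun i => (ω (i - 1) : ℕ))) atTop (𝓝 x) := by
    rw [← tendsto_add_atTop_iff_nat 1]
    simpa only [cv_eq] using hx
  have : Xtail ω 1 = x := h3.limUnder_eq
  rwa [this]

/-! ### Measurability -/

lemma coord_meas_fin {L i : ℕ} (hi : i < L) :
    Measurable[finAlg L] (fun ω : ℕ → ℕ+ => ((ω i : ℕ) : ℝ)) := by
  have h1 : Measurable[finAlg L] (fun ω : ℕ → ℕ+ => (fun j : Fin L => ω j)) :=
    comap_measurable _
  have h2 : Measurable (fun v : Fin L → ℕ+ => ((v ⟨i, hi⟩ : ℕ) : ℝ)) :=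
    (measurable_from_top (f := fun p : ℕ+ => ((p : ℕ) : ℝ))).comp (measurable_pi_apply _)
  exact h2.comp h1

lemma qq_meas_fin (L n : ℕ) (hn : n ≤ L) : Measurable[finAlg L] (fun ω => qq ω n) := by
  induction n using Nat.twoStepInduction with
  | zero => simp only [qq_zero]; exact @measurable_const _ _ _ (finAlg L) _
  | one => simp only [qq_one]; exact coord_meas_fin (by omega)
  | more n h1 h2 =>
    simp only [qq_add_two]
    exact ((coord_meas_fin (by omega)).mul (h2 (by omega))).add (h1 (by omega))

lemma shift_meas : Measurable shiftS :=
  measurable_pi_lambda _ fun _ => measurable_pi_apply _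

lemma finAlg_le (L : ℕ) : finAlg L ≤ (inferInstance : MeasurableSpace (ℕ → ℕ+)) := by
  rw [finAlg]
  apply Measurable.comap_le
  exact measurable_pi_lambda _ fun _ => measurable_pi_apply _

lemma qq_meas (n : ℕ) : Measurable (fun ω => qq ω n) :=
  (qq_meas_fin n n le_rfl).mono (finAlg_le n) le_rfl

lemma tail_meas {R : ℕ} {h : (ℕ → ℕ+) → ℝ} (hh : Measurable h) :
    Measurable[tailAlg R] (fun ω => h (shiftS^[R] ω)) := by
  have h1 : Measurable[tailAlg R] (fun ω : ℕ → ℕ+ => (fun i => ω (i + R))) :=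
    comap_measurable _
  have : (fun ω => h (shiftS^[R] ω)) = h ∘ (fun ω : ℕ → ℕ+ => (fun i => ω (i + R))) := by
    funext ω
    simp only [Function.comp]
    congr 1
    funext i
    exact shift_iter R ω i
  rw [this]
  exact hh.comp h1

/-! ### Mixing -/

/-- The mixing inequality, with coefficient function `ψ`. -/
def MixWith (P : Measure (ℕ → ℕ+)) (ψ : ℕ → ℝ) : Prop :=
  ∀ m n : ℕ, 1 ≤ m → 1 ≤ n → ∀ f g : (ℕ → ℕ+) → ℝ,
      Integrable f P → Integrable g P →
      Measurable[finAlg m] f → Measurable[tailAlg (m + n - 1)] g →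
      |(∫ ω, f ω * g ω ∂P) - (∫ ω, f ω ∂P) * (∫ ω, g ω ∂P)| ≤
        ψ n * (∫ ω, |f ω| ∂P) * (∫ ω, |g ω| ∂P)

lemma mix_mul {P : Measure (ℕ → ℕ+)} [IsProbabilityMeasure P] {ψ : ℕ → ℝ}
    (hψ0 : ∀ n, 0 ≤ ψ n) (hmix : MixWith P ψ) {m n : ℕ} (hm : 1 ≤ m) (hn : 1 ≤ n)
    {f g : (ℕ → ℕ+) → ℝ} (hf0 : ∀ ω, 0 ≤ f ω) (hg0 : ∀ ω, 0 ≤ g ω)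
    (hf : Integrable f P) (hg : Integrable g P)
    (hfm : Measurable[finAlg m] f) (hgm : Measurable[tailAlg (m + n - 1)] g) :
    Integrable (fun ω => f ω * g ω) P ∧
      ∫ ω, f ω * g ω ∂P ≤ (1 + ψ n) * ((∫ ω, f ω ∂P) * ∫ ω, g ω ∂P) := by
  set C := (1 + ψ n) * ((∫ ω, f ω ∂P) * ∫ ω, g ω ∂P) with hC
  have hIf : 0 ≤ ∫ ω, f ω ∂P := integral_nonneg hf0
  have hIg : 0 ≤ ∫ ω, g ω ∂P := integral_nonneg hg0
  have hC0 : 0 ≤ C := by have := hψ0 n; positivity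
  have hfm' : Measurable f := hfm.mono (finAlg_le m) le_rfl
  have htr : ∀ k : ℕ, Integrable (fun ω => min (f ω) k * g ω) P ∧
      ∫ ω, min (f ω) k * g ω ∂P ≤ C := by
    intro k
    have h0 : ∀ ω, 0 ≤ min (f ω) k := fun ω => le_min (hf0 ω) (Nat.cast_nonneg k)
    have hmm : Measurable (fun ω => min (f ω) (k : ℝ)) := hfm'.min measurable_const
    have hi : Integrable (fun ω => min (f ω) (k : ℝ)) P := by
      refine hf.mono' hmm.aestronglyMeasurable (Eventually.of_forall fun ω => ?_)
      rw [Real.norm_eq_abs, abs_of_nonneg (h0 ω)]; exact min_le_left _ _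
    have hmm2 : Measurable[finAlg m] (fun ω => min (f ω) (k : ℝ)) :=
      hfm.min (@measurable_const _ _ _ (finAlg m) _)
    have key := hmix m n hm hn _ g hi hg hmm2 hgm
    simp only [abs_of_nonneg (h0 _), abs_of_nonneg (hg0 _)] at key
    have hle : ∫ ω, min (f ω) (k : ℝ) ∂P ≤ ∫ ω, f ω ∂P :=
      integral_mono hi hf fun ω => min_le_left _ _
    have hge : 0 ≤ ∫ ω, min (f ω) (k : ℝ) ∂P := integral_nonneg h0
    constructor
    · refine hg.bdd_mul (c := k) hmm.aestronglyMeasurable (Eventually.of_forall fun ω => ?_)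
      rw [Real.norm_eq_abs, abs_of_nonneg (h0 ω)]; exact min_le_right _ _
    · have h1 := (abs_le.1 key).2
      have h2 : (1 + ψ n) * ((∫ ω, min (f ω) (k : ℝ) ∂P) * ∫ ω, g ω ∂P) ≤ C := by
        have := hψ0 n
        rw [hC]; gcongr
      linarith
  have hL : ∫⁻ ω, ENNReal.ofReal (f ω * g ω) ∂P ≤ ENNReal.ofReal C := by
    have hlim : ∀ ω, ENNReal.ofReal (f ω * g ω) =
        liminf (fun k : ℕ => ENNReal.ofReal (min (f ω) k * g ω)) atTop := by
      intro ω
      symm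
      apply Tendsto.liminf_eq
      apply tendsto_const_nhds.congr'
      obtain ⟨K, hK⟩ := exists_nat_ge (f ω)
      filter_upwards [eventually_ge_atTop K] with k hk
      rw [min_eq_left]
      exact hK.trans (by exact_mod_cast hk)
    simp_rw [hlim]
    refine (lintegral_liminf_le' fun k => ?_).trans ?_
    · exact (htr k).1.aestronglyMeasurable.aemeasurable.ennreal_ofReal
    · refine liminf_le_of_frequently_le' (Eventually.of_forall fun k => ?_).frequently
      rw [← ofReal_integral_eq_lintegral_ofReal (htr k).1]
      · exact ENNReal.ofReal_le_ofReal (htr k).2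
      · exact Eventually.of_forall fun ω =>
          mul_nonneg (le_min (hf0 ω) (Nat.cast_nonneg k)) (hg0 ω)
  have hnn : 0 ≤ᵐ[P] fun ω => f ω * g ω :=
    Eventually.of_forall fun ω => mul_nonneg (hf0 ω) (hg0 ω)
  have hfgi : Integrable (fun ω => f ω * g ω) P := by
    refine ⟨hf.aestronglyMeasurable.mul hg.aestronglyMeasurable, ?_⟩
    rw [hasFiniteIntegral_iff_ofReal hnn]
    exact hL.trans_lt ENNReal.ofReal_lt_top
  refine ⟨hfgi, ?_⟩
  rw [← ofReal_integral_eq_lintegral_ofReal hfgi hnn] at hL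
  exact (ENNReal.ofReal_le_ofReal_iff hC0).1 hL

lemma shift_integral {P : Measure (ℕ → ℕ+)} (hP : MeasurePreserving shiftS P P) (k : ℕ)
    {h : (ℕ → ℕ+) → ℝ} (hh : Measurable h) (hi : Integrable h P) :
    Integrable (fun ω => h (shiftS^[k] ω)) P ∧
      ∫ ω, h (shiftS^[k] ω) ∂P = ∫ ω, h ω ∂P := by
  have hk := hP.iterate k
  refine ⟨hk.integrable_comp_of_integrable hi, ?_⟩
  have := integral_map (μ := P) hk.measurable.aemeasurable (f := h)
    hh.aestronglyMeasurable
  rw [hk.map_eq] at this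
  exact this.symm

/-- Products over separated blocks. -/
lemma mix_prod {P : Measure (ℕ → ℕ+)} [IsProbabilityMeasure P]
    (hP : MeasurePreserving shiftS P P) {ψ : ℕ → ℝ}
    (hψ0 : ∀ n, 0 ≤ ψ n) (hmix : MixWith P ψ) {L n : ℕ} (hL : 1 ≤ L) (hn : 1 ≤ n)
    {W : (ℕ → ℕ+) → ℝ} (hW0 : ∀ ω, 0 ≤ W ω) (hW : Integrable W P)
    (hWm : Measurable[finAlg L] W) (M : ℕ) :
    Integrable (fun ω => ∏ i ∈ Finset.range M, W (shiftS^[i * (L + n - 1)] ω)) P ∧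
      ∫ ω, ∏ i ∈ Finset.range M, W (shiftS^[i * (L + n - 1)] ω) ∂P ≤
        ((1 + ψ n) * ∫ ω, W ω ∂P) ^ M := by
  have hWm' : Measurable W := hWm.mono (finAlg_le L) le_rfl
  have hIW : 0 ≤ ∫ ω, W ω ∂P := integral_nonneg hW0
  have hψn := hψ0 n
  induction M with
  | zero => simp
  | succ M ih =>
    set h : (ℕ → ℕ+) → ℝ := fun ω => ∏ i ∈ Finset.range M, W (shiftS^[i * (L + n - 1)] ω) with hh
    have hhm : Measurable h := by
      apply Finset.measurable_prod
      intro i _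
      exact hWm'.comp (shift_meas.iterate _)
    have hh0 : ∀ ω, 0 ≤ h ω := fun ω => Finset.prod_nonneg fun i _ => hW0 _
    have hs := shift_integral hP (L + n - 1) hhm ih.1
    have key := mix_mul hψ0 hmix hL hn hW0 (fun ω => hh0 (shiftS^[L + n - 1] ω)) hW hs.1 hWm
      (tail_meas hhm)
    have he : (fun ω => ∏ i ∈ Finset.range (M + 1), W (shiftS^[i * (L + n - 1)] ω)) =
        fun ω => W ω * h (shiftS^[L + n - 1] ω) := by
      funext ω
      rw [Finset.prod_range_succ', mul_comm]
      simp only [zero_mul, Function.iterate_zero, id, hh]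
      congr 1
      refine Finset.prod_congr rfl fun i _ => ?_
      rw [← Function.iterate_add_apply]
      congr 3
      ring
    simp only [he]
    refine ⟨key.1, key.2.trans ?_⟩
    rw [hs.2, pow_succ]
    calc (1 + ψ n) * ((∫ ω, W ω ∂P) * ∫ ω, h ω ∂P)
        = (∫ ω, h ω ∂P) * ((1 + ψ n) * ∫ ω, W ω ∂P) := by ring
      _ ≤ _ := mul_le_mul_of_nonneg_right ih.2 (by positivity)

lemma exists_mgf_lt_one {P : Measure (ℕ → ℕ+)} [IsProbabilityMeasure P] {Z : (ℕ → ℕ+) → ℝ}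
    (hZ : 0 ∈ interior (ProbabilityTheory.integrableExpSet Z P)) (hneg : ∫ ω, Z ω ∂P < 0) :
    ∃ s : ℝ, 0 < s ∧ Integrable (fun ω => exp (s * Z ω)) P ∧ ∫ ω, exp (s * Z ω) ∂P < 1 := by
  have hd := ProbabilityTheory.hasDerivAt_mgf hZ
  simp only [zero_mul, exp_zero, mul_one] at hd
  have h1 : ∀ᶠ s in 𝓝[>] (0 : ℝ), slope (ProbabilityTheory.mgf Z P) 0 s < 0 :=
    (hd.hasDerivWithinAt (s := Set.Ioi 0)).limsup_slope_le' (by simp) hneg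
  have h2 : ∀ᶠ s in 𝓝[>] (0 : ℝ), s ∈ ProbabilityTheory.integrableExpSet Z P :=
    mem_nhdsWithin_of_mem_nhds (mem_interior_iff_mem_nhds.1 hZ)
  obtain ⟨s, hs1, hs2, hs3⟩ := (h1.and (h2.and self_mem_nhdsWithin)).exists
  have hs3' : 0 < s := hs3
  refine ⟨s, hs3', hs2, ?_⟩
  rw [slope_def_field, ProbabilityTheory.mgf_zero, sub_zero, div_neg_iff] at hs1
  have : ProbabilityTheory.mgf Z P s < 1 := by
    rcases hs1 with h | h
    · linarith [h.2]
    · linarith [h.1]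
  exact this

lemma sum_range_classes (z : ℕ → ℝ) (r M : ℕ) :
    ∑ j ∈ Finset.range (M * r), z j =
      ∑ c ∈ Finset.range r, ∑ i ∈ Finset.range M, z (i * r + c) := by
  induction M with
  | zero => simp
  | succ M ih =>
    rw [Nat.succ_mul, Finset.sum_range_add, ih, ← Finset.sum_add_distrib]
    exact Finset.sum_congr rfl fun c _ => (Finset.sum_range_succ _ _).symm

/-- Exponential decay for sums over consecutive blocks of length `L`. -/
lemma block_chernoff {P : Measure (ℕ → ℕ+)} [IsProbabilityMeasure P]
    (hP : MeasurePreserving shiftS P P) {ψ : ℕ → ℝ}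
    (hψ0 : ∀ n, 0 ≤ ψ n) (hψ : Tendsto ψ atTop (𝓝 0)) (hmix : MixWith P ψ)
    {L : ℕ} (hL : 1 ≤ L) {Z : (ℕ → ℕ+) → ℝ} (hZm : Measurable[finAlg L] Z)
    (hZ : 0 ∈ interior (ProbabilityTheory.integrableExpSet Z P)) (hneg : ∫ ω, Z ω ∂P < 0) :
    ∃ (r : ℕ) (ρ : ℝ), 1 ≤ r ∧ 0 < ρ ∧ ρ < 1 ∧ ∀ M : ℕ,
      P {ω | 0 ≤ ∑ j ∈ Finset.range (M * r), Z (shiftS^[j * L] ω)} ≤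
        ENNReal.ofReal (r * ρ ^ M) := by
  obtain ⟨s, hs, hsi, hs1⟩ := exists_mgf_lt_one hZ hneg
  have hZm' : Measurable Z := hZm.mono (finAlg_le L) le_rfl
  set W : (ℕ → ℕ+) → ℝ := fun ω => exp (s * Z ω) with hW
  set w := ∫ ω, W ω ∂P with hw
  have hw0 : 0 < w := integral_exp_pos hsi
  have hWm : Measurable[finAlg L] W := measurable_exp.comp (hZm.const_mul s)
  have hlim : Tendsto (fun r : ℕ => (1 + ψ ((r - 1) * L + 1)) * w) atTop (𝓝 ((1 + 0) * w)) := by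
    refine Tendsto.mul_const _ (tendsto_const_nhds.add (hψ.comp ?_))
    refine tendsto_atTop_mono (fun r => ?_) (tendsto_id (α := ℕ))
    simp only [id]
    have : (r - 1) * 1 ≤ (r - 1) * L := Nat.mul_le_mul_left _ hL
    omega
  have hev := hlim.eventually (gt_mem_nhds (show (1 + 0) * w < 1 by linarith))
  obtain ⟨r, hr, hr1⟩ := (hev.and (eventually_ge_atTop 1)).exists
  set n := (r - 1) * L + 1 with hn
  have hgap : L + n - 1 = r * L := by
    obtain ⟨k, rfl⟩ : ∃ k, r = k + 1 := ⟨r - 1, by omega⟩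
    rw [hn]; simp; ring
  refine ⟨r, (1 + ψ n) * w, hr1, by have := hψ0 n; positivity, hr, fun M => ?_⟩
  set ρ := (1 + ψ n) * w with hρ
  have hρ0 : 0 < ρ := by have := hψ0 n; positivity
  -- one residue class
  set E : Set (ℕ → ℕ+) := {ω | 0 ≤ ∑ i ∈ Finset.range M, Z (shiftS^[i * (r * L)] ω)} with hE
  have hsm : Measurable (fun ω => ∑ i ∈ Finset.range M, Z (shiftS^[i * (r * L)] ω)) :=
    Finset.measurable_sum _ fun i _ => hZm'.comp (shift_meas.iterate _)
  have hEm : MeasurableSet E := measurableSet_le measurable_const hsm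
  have hEP : P E ≤ ENNReal.ofReal (ρ ^ M) := by
    have hp := mix_prod hP hψ0 hmix hL (n := n) (by omega) (W := W) (fun ω => (exp_pos _).le)
      hsi hWm M
    rw [hgap] at hp
    have hexp : (fun ω => ∏ i ∈ Finset.range M, W (shiftS^[i * (r * L)] ω)) =
        fun ω => exp (s * ∑ i ∈ Finset.range M, Z (shiftS^[i * (r * L)] ω)) := by
      funext ω
      simp only [hW]
      rw [← exp_sum, Finset.mul_sum]
    have h1 := ProbabilityTheory.measure_ge_le_exp_mul_mgf (μ := P)
      (X := fun ω => ∑ i ∈ Finset.range M, Z (shiftS^[i * (r * L)] ω)) (t := s) 0 hs.le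
      (by rw [← hexp]; exact hp.1)
    rw [mul_zero, exp_zero, one_mul, ProbabilityTheory.mgf, ← hexp] at h1
    have h2 := h1.trans hp.2
    rw [← ENNReal.ofReal_toReal (measure_ne_top P E)]
    exact ENNReal.ofReal_le_ofReal h2
  have hsub : {ω | 0 ≤ ∑ j ∈ Finset.range (M * r), Z (shiftS^[j * L] ω)} ⊆
      ⋃ c ∈ Finset.range r, (shiftS^[c * L]) ⁻¹' E := by
    intro ω hω
    simp only [Set.mem_setOf_eq] at hω
    by_contra hcon
    simp only [Set.mem_iUnion, not_exists] at hcon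
    rw [sum_range_classes (fun j => Z (shiftS^[j * L] ω))] at hω
    have : ∑ c ∈ Finset.range r, ∑ i ∈ Finset.range M, Z (shiftS^[(i * r + c) * L] ω) <
        ∑ c ∈ Finset.range r, (0 : ℝ) := by
      apply Finset.sum_lt_sum_of_nonempty
      · exact Finset.nonempty_range_iff.2 (by omega)
      · intro c hc
        have := hcon c hc
        simp only [hE, Set.mem_preimage, Set.mem_setOf_eq, not_le,
          ← Function.iterate_add_apply] at this
        convert this using 6
        ring
    simp only [Finset.sum_const_zero] at this
    linarith
  calc _ ≤ P (⋃ c ∈ Finset.range r, (shiftS^[c * L]) ⁻¹' E) := measure_mono hsub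
    _ ≤ ∑ c ∈ Finset.range r, P ((shiftS^[c * L]) ⁻¹' E) := measure_biUnion_finset_le _ _
    _ = ∑ c ∈ Finset.range r, P E := by
        refine Finset.sum_congr rfl fun c _ => ?_
        exact (hP.iterate (c * L)).measure_preimage hEm.nullMeasurableSet
    _ = r * P E := by simp
    _ ≤ r * ENNReal.ofReal (ρ ^ M) := by gcongr
    _ = ENNReal.ofReal (r * ρ ^ M) := by
        rw [ENNReal.ofReal_mul (by positivity), ENNReal.ofReal_natCast]

/-! ### Moments -/

lemma qq_sqrt_integrable {P : Measure (ℕ → ℕ+)} [IsProbabilityMeasure P]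
    (hP : MeasurePreserving shiftS P P) {ψ : ℕ → ℝ}
    (hψ0 : ∀ n, 0 ≤ ψ n) (hmix : MixWith P ψ)
    (hA : Integrable (fun ω : ℕ → ℕ+ => ((ω 0 : ℕ) : ℝ) ^ (1 / 2 : ℝ)) P) (n : ℕ) :
    Integrable (fun ω => qq ω n ^ (1 / 2 : ℝ)) P := by
  induction n with
  | zero => simp [qq_zero]
  | succ n ih =>
    have hm : Measurable (fun ω => qq ω n ^ (1 / 2 : ℝ)) := (qq_meas n).pow_const _
    have hs := shift_integral hP 1 hm ih
    have key := mix_mul hψ0 hmix (m := 1) (n := 1) le_rfl le_rfl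
      (f := fun ω : ℕ → ℕ+ => ((ω 0 : ℕ) : ℝ) ^ (1 / 2 : ℝ))
      (g := fun ω => qq (shiftS^[1] ω) n ^ (1 / 2 : ℝ)) (fun ω => by positivity)
      (fun ω => rpow_nonneg (qq_pos _ _).le _) hA hs.1
      ((coord_meas_fin (by norm_num)).pow_const _) (tail_meas hm)
    refine (key.1.const_mul ((2 : ℝ) ^ (1 / 2 : ℝ))).mono'
      ((qq_meas (n + 1)).pow_const _).aestronglyMeasurable (Eventually.of_forall fun ω => ?_)
    have h1 := qq_pos ω (n + 1)
    have h2 := qq_pos (shiftS^[1] ω) n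
    rw [Real.norm_eq_abs, abs_of_nonneg (rpow_nonneg h1.le _),
      ← mul_rpow (by positivity) h2.le, ← mul_rpow (by norm_num) (by positivity)]
    refine rpow_le_rpow h1.le ?_ (by norm_num)
    have := (qq_split ω 1 n).2
    rwa [qq_one, add_comm 1 n] at this

lemma exp_set_interior {P : Measure (ℕ → ℕ+)} [IsProbabilityMeasure P] {n : ℕ}
    (hi : Integrable (fun ω => qq ω n ^ (1 / 2 : ℝ)) P) (ε c : ℝ) (hε : |ε| ≤ 1) :
    0 ∈ interior (ProbabilityTheory.integrableExpSet (fun ω => ε * log (qq ω n) + c) P) := by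
  rw [mem_interior_iff_mem_nhds]
  refine mem_of_superset (Ioo_mem_nhds (show -(1 / 2 : ℝ) < 0 by norm_num)
    (show (0 : ℝ) < 1 / 2 by norm_num)) fun t ht => ?_
  change Integrable (fun ω => exp (t * (ε * log (qq ω n) + c))) P
  refine (hi.const_mul (exp (t * c))).mono' ?_ (Eventually.of_forall fun ω => ?_)
  · refine Measurable.aestronglyMeasurable ?_
    exact measurable_exp.comp ((((measurable_log.comp (qq_meas n)).const_mul ε).add_const c).const_mul t)
  · have h1 := qq_pos ω n
    have h2 : 0 ≤ log (qq ω n) := log_nonneg (one_le_qq ω n)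
    rw [Real.norm_eq_abs, abs_of_pos (exp_pos _), rpow_def_of_pos h1, ← exp_add, exp_le_exp]
    have h3 : t * ε ≤ 1 / 2 := by
      have h4 : |t| ≤ 1 / 2 := abs_le.2 ⟨ht.1.le, ht.2.le⟩
      calc t * ε ≤ |t * ε| := le_abs_self _
        _ = |t| * |ε| := abs_mul _ _
        _ ≤ 1 / 2 * 1 := mul_le_mul h4 hε (abs_nonneg _) (by norm_num)
        _ = 1 / 2 := by norm_num
    nlinarith

lemma log_qq_integrable {P : Measure (ℕ → ℕ+)} [IsProbabilityMeasure P] {n : ℕ}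
    (hi : Integrable (fun ω => qq ω n ^ (1 / 2 : ℝ)) P) :
    Integrable (fun ω => log (qq ω n)) P := by
  have := ProbabilityTheory.integrable_of_mem_interior_integrableExpSet
    (exp_set_interior hi 1 0 (by simp))
  simpa using this

lemma mean_tendsto {P : Measure (ℕ → ℕ+)} [IsProbabilityMeasure P]
    (hP : MeasurePreserving shiftS P P)
    (hi : ∀ n, Integrable (fun ω => qq ω n ^ (1 / 2 : ℝ)) P) :
    Tendsto (fun n : ℕ => (n : ℝ)⁻¹ * ∫ ω, log (qq ω n) ∂P) atTop
      (𝓝 (-∫ ω, log (Xtail ω 1) ∂P)) := by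
  have hli := fun n => log_qq_integrable (hi n)
  have hlm : ∀ n, Measurable fun ω => log (qq ω n) := fun n => measurable_log.comp (qq_meas n)
  have hcv : ∀ n ω, log (cv ω n) = log (qq (shiftS^[1] ω) n) - log (qq ω (n + 1)) := by
    intro n ω
    exact log_div (qq_pos _ _).ne' (qq_pos _ _).ne'
  have hstep : ∀ n, ∫ ω, log (cv ω n) ∂P =
      ∫ ω, log (qq ω n) ∂P - ∫ ω, log (qq ω (n + 1)) ∂P := by
    intro n
    have hs := shift_integral hP 1 (hlm n) (hli n)
    simp_rw [hcv]
    rw [integral_sub hs.1 (hli _), hs.2]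
  have hlim : Tendsto (fun n => ∫ ω, log (cv ω n) ∂P) atTop (𝓝 (∫ ω, log (Xtail ω 1) ∂P)) := by
    refine tendsto_integral_of_dominated_convergence
      (fun ω => log 2 + log (qq ω 1)) (fun n => ?_) ((integrable_const _).add (hli 1))
      (fun n => Eventually.of_forall fun ω => ?_) (Eventually.of_forall fun ω => ?_)
    · simp_rw [hcv]
      exact (((hlm n).comp (shift_meas.iterate 1)).sub (hlm (n + 1))).aestronglyMeasurable
    · have hb := cv_bounds ω n
      have h0 := one_le_coord ω 0
      have hpos : 0 < 1 / (2 * ((ω 0 : ℕ) : ℝ)) := by positivity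
      have hl := log_le_log hpos hb.1
      have hu := log_nonpos (hpos.trans_le hb.1).le hb.2
      rw [one_div, log_inv, log_mul (by norm_num) (by positivity)] at hl
      rw [qq_one, Real.norm_eq_abs, abs_of_nonpos hu]
      linarith
    · have hpos : 0 < 1 / (2 * ((ω 0 : ℕ) : ℝ)) := by
        have h0 := one_le_coord ω 0
        positivity
      have hx : 1 / (2 * ((ω 0 : ℕ) : ℝ)) ≤ Xtail ω 1 :=
        ge_of_tendsto' (cv_tendsto ω) fun n => (cv_bounds ω n).1
      exact (continuousAt_log (hpos.trans_le hx).ne').tendsto.comp (cv_tendsto ω)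
  have hces := hlim.neg.cesaro
  refine hces.congr fun n => ?_
  congr 1
  simp_rw [hstep, neg_sub]
  rw [Finset.sum_range_sub (fun i => ∫ ω, log (qq ω i) ∂P)]
  simp [qq_zero]

lemma decay {r R : ℕ} {ρ : ℝ} (hr : 1 ≤ r) (hR : 1 ≤ R) (h0 : 0 < ρ) (h1 : ρ < 1) :
    ∃ B α : ℝ, 0 < B ∧ 0 < α ∧ ∀ n M : ℕ, n ≤ (M + 1) * R →
      r * ρ ^ M ≤ B * exp (-α * n) := by
  have hl : log ρ < 0 := log_neg h0 h1
  have hr' : (0 : ℝ) < r := by exact_mod_cast hr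
  have hR' : (0 : ℝ) < R := by exact_mod_cast hR
  refine ⟨r * exp (-log ρ), -log ρ / R, by positivity, div_pos (by linarith) hR', ?_⟩
  intro n M hn
  have hn' : (n : ℝ) ≤ (M + 1) * R := by exact_mod_cast hn
  rw [mul_assoc, ← exp_add]
  have : ρ ^ M = exp (M * log ρ) := by rw [exp_nat_mul, exp_log h0]
  rw [this]
  gcongr
  have h3 : (n : ℝ) / R ≤ M + 1 := by rwa [div_le_iff₀ hR']
  have h4 : -(-log ρ / R) * n = log ρ * (n / R) := by ring
  rw [h4]
  nlinarith

lemma Z_integral {P : Measure (ℕ → ℕ+)} [IsProbabilityMeasure P] {n : ℕ}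
    (hi : Integrable (fun ω => log (qq ω n)) P) (ε c : ℝ) :
    ∫ ω, (ε * log (qq ω n) + c) ∂P = ε * ∫ ω, log (qq ω n) ∂P + c := by
  rw [integral_add (hi.const_mul ε) (integrable_const c), integral_const_mul]
  simp

/-- Upper and lower tails. -/
lemma tails {P : Measure (ℕ → ℕ+)} [IsProbabilityMeasure P]
    (hP : MeasurePreserving shiftS P P) {ψ : ℕ → ℝ}
    (hψ0 : ∀ n, 0 ≤ ψ n) (hψ : Tendsto ψ atTop (𝓝 0)) (hmix : MixWith P ψ)
    (hi : ∀ n, Integrable (fun ω => qq ω n ^ (1 / 2 : ℝ)) P) {lam δ : ℝ} (hδ : 0 < δ)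
    (hlam : Tendsto (fun n : ℕ => (n : ℝ)⁻¹ * ∫ ω, log (qq ω n) ∂P) atTop (𝓝 lam)) :
    (∃ (N : ℕ) (B α : ℝ), 0 < B ∧ 0 < α ∧ ∀ n : ℕ, N ≤ n →
      P {ω | n * (lam + δ) ≤ log (qq ω n)} ≤ ENNReal.ofReal (B * exp (-α * n))) ∧
    (∃ (N : ℕ) (B α : ℝ), 0 < B ∧ 0 < α ∧ ∀ n : ℕ, N ≤ n →
      P {ω | log (qq ω n) ≤ n * (lam - δ)} ≤ ENNReal.ofReal (B * exp (-α * n))) := by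
  have hδ8 : 0 < δ / 8 := by linarith
  have hlog2 : Tendsto (fun n : ℕ => log 2 / (n : ℝ)) atTop (𝓝 0) :=
    tendsto_const_div_atTop_nhds_zero_nat _
  obtain ⟨L, ⟨⟨hL1, hL2⟩, hL3⟩, hL⟩ := (((hlam.eventually (Ioo_mem_nhds
    (show lam - δ / 8 < lam by linarith) (show lam < lam + δ / 8 by linarith))).and
    (hlog2.eventually (gt_mem_nhds hδ8))).and (eventually_ge_atTop 1)).exists
  set μ := ∫ ω, log (qq ω L) ∂P with hμ
  have hLpos : (0 : ℝ) < L := by exact_mod_cast hL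
  rw [lt_inv_mul_iff₀ hLpos] at hL1
  rw [inv_mul_lt_iff₀ hLpos] at hL2
  rw [div_lt_iff₀ hLpos] at hL3
  have hlogm : Measurable[finAlg L] fun ω => log (qq ω L) :=
    measurable_log.comp (qq_meas_fin L L le_rfl)
  have hZm : ∀ ε c : ℝ, Measurable[finAlg L] fun ω => ε * log (qq ω L) + c := fun ε c =>
    (hlogm.const_mul ε).add_const c
  have hli := log_qq_integrable (hi L)
  have hLd : 0 < L * (δ / 8) := by positivity
  constructor
  · obtain ⟨r, ρ, hr, hρ0, hρ1, hb⟩ := block_chernoff hP hψ0 hψ hmix hL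
      (hZm 1 (-μ - L * (δ / 8))) (exp_set_interior (hi L) 1 _ (by simp))
      (by rw [Z_integral hli, ← hμ]; linarith)
    have hR : 1 ≤ r * L := Nat.mul_pos hr hL
    obtain ⟨B, α, hB, hα, hdec⟩ := decay hr hR hρ0 hρ1
    obtain ⟨N, hN⟩ := exists_nat_gt ((r * L * (|lam| + δ)) / (δ / 2))
    refine ⟨N, B, α, hB, hα, fun n hn => ?_⟩
    rw [div_lt_iff₀ (by linarith)] at hN
    have hdm := Nat.div_add_mod n (r * L)
    have hmod := Nat.mod_lt n hR
    set M := n / (r * L) with hM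
    have hle : n ≤ (M + 1) * (r * L) := by
      rw [add_mul, one_mul, mul_comm M]; omega
    have hge : M * (r * L) ≤ n := by rw [mul_comm M]; omega
    refine le_trans (measure_mono ?_) ((hb (M + 1)).trans
      (ENNReal.ofReal_le_ofReal (hdec n (M + 1) (hle.trans ?_))))
    · intro ω hω
      simp only [Set.mem_setOf_eq] at hω ⊢
      by_contra hcon
      rw [not_le, Finset.sum_add_distrib, Finset.sum_const, Finset.card_range, nsmul_eq_mul] at hcon
      simp only [one_mul] at hcon
      have h1 := (log_qq_blocks ω L ((M + 1) * r)).2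
      have h2 : log (qq ω n) ≤ log (qq ω ((M + 1) * r * L)) :=
        log_le_log (qq_pos _ _) (qq_mono ω (by rw [mul_assoc]; exact hle))
      have hK : (0 : ℝ) ≤ (((M + 1) * r : ℕ) : ℝ) := Nat.cast_nonneg _
      have h3 : (((M + 1) * r : ℕ) : ℝ) * (μ + L * (δ / 8) + log 2) ≤
          (((M + 1) * r : ℕ) : ℝ) * (L * (lam + 3 * (δ / 8))) :=
        mul_le_mul_of_nonneg_left (by linarith) hK
      have hle' : (n : ℝ) ≤ (((M + 1) * r : ℕ) : ℝ) * L := by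
        rw [mul_assoc] at *; exact_mod_cast (by rw [mul_assoc]; exact hle)
      have hge' : (((M + 1) * r : ℕ) : ℝ) * L ≤ n + r * L := by
        have : (M + 1) * r * L ≤ n + r * L := by
          rw [add_mul, add_mul, one_mul, mul_assoc]; omega
        exact_mod_cast this
      have h4 : ((((M + 1) * r : ℕ) : ℝ) * L - n) * (lam + 3 * (δ / 8)) ≤
          r * L * (|lam| + δ) := by
        have h5 : lam + 3 * (δ / 8) ≤ |lam| + δ := by linarith [le_abs_self lam]
        have h6 : 0 ≤ |lam| + δ := by positivity
        refine (mul_le_mul_of_nonneg_left h5 (by linarith)).trans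
          (mul_le_mul_of_nonneg_right (by linarith) h6)
      have hn' : (N : ℝ) ≤ n := by exact_mod_cast hn
      nlinarith
    · exact Nat.mul_le_mul_right _ (by omega)
  · obtain ⟨r, ρ, hr, hρ0, hρ1, hb⟩ := block_chernoff hP hψ0 hψ hmix hL
      (hZm (-1) (μ - L * (δ / 8))) (exp_set_interior (hi L) (-1) _ (by simp))
      (by rw [Z_integral hli, ← hμ]; linarith)
    have hR : 1 ≤ r * L := Nat.mul_pos hr hL
    obtain ⟨B, α, hB, hα, hdec⟩ := decay hr hR hρ0 hρ1
    obtain ⟨N, hN⟩ := exists_nat_gt ((r * L * (|lam| + δ)) / (δ / 2))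
    refine ⟨N, B, α, hB, hα, fun n hn => ?_⟩
    rw [div_lt_iff₀ (by linarith)] at hN
    have hdm := Nat.div_add_mod n (r * L)
    have hmod := Nat.mod_lt n hR
    set M := n / (r * L) with hM
    have hle : n ≤ (M + 1) * (r * L) := by
      rw [add_mul, one_mul, mul_comm M]; omega
    have hge : M * (r * L) ≤ n := by rw [mul_comm M]; omega
    refine le_trans (measure_mono ?_) ((hb M).trans
      (ENNReal.ofReal_le_ofReal (hdec n M hle)))
    intro ω hω
    simp only [Set.mem_setOf_eq] at hω ⊢
    by_contra hcon
    rw [not_le, Finset.sum_add_distrib, Finset.sum_const, Finset.card_range, nsmul_eq_mul,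
      ← Finset.mul_sum] at hcon
    have h1 := (log_qq_blocks ω L (M * r)).1
    have h2 : log (qq ω (M * r * L)) ≤ log (qq ω n) :=
      log_le_log (qq_pos _ _) (qq_mono ω (by rw [mul_assoc]; exact hge))
    have hK : (0 : ℝ) ≤ ((M * r : ℕ) : ℝ) := Nat.cast_nonneg _
    have h3 : ((M * r : ℕ) : ℝ) * (L * (lam - 2 * (δ / 8))) ≤
        ((M * r : ℕ) : ℝ) * (μ - L * (δ / 8)) :=
      mul_le_mul_of_nonneg_left (by linarith) hK
    have hge' : ((M * r : ℕ) : ℝ) * L ≤ n := by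
      have : M * r * L ≤ n := by rw [mul_assoc]; exact hge
      exact_mod_cast this
    have hle' : (n : ℝ) ≤ ((M * r : ℕ) : ℝ) * L + r * L := by
      have : n ≤ M * r * L + r * L := by
        rw [mul_assoc]; rw [add_mul, one_mul] at hle; exact hle
      exact_mod_cast this
    have h4 : (n - ((M * r : ℕ) : ℝ) * L) * (lam - 2 * (δ / 8)) ≤
        r * L * (|lam| + δ) := by
      have h5 : lam - 2 * (δ / 8) ≤ |lam| + δ := by linarith [le_abs_self lam]
      have h6 : 0 ≤ |lam| + δ := by positivity
      refine (mul_le_mul_of_nonneg_left h5 (by linarith)).trans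
        (mul_le_mul_of_nonneg_right (by linarith) h6)
    have hn' : (N : ℝ) ≤ n := by exact_mod_cast hn
    nlinarith

/-- **Chernoff-type estimate for random continued fractions.** If `{A_n}` is
ψ-mixing and `E(A_1^t) < ∞` for each `0 < t < 1`, then for every `δ > 0` there
exist `N > 0`, `B > 0`, `α > 0` such that for all `n ≥ N`,
`P(|(1/n) log Q_n + ∫ log X dP| ≥ δ) ≤ B exp(−α n)`. -/
theorem random_levy_chernoff (P : Measure (ℕ → ℕ+)) [IsProbabilityMeasure P]
    (hmix : PsiMixing P)
    (hmom : ∀ t : ℝ, 0 < t → t < 1 →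
      Integrable (fun ω : ℕ → ℕ+ => ((ω 0 : ℕ) : ℝ) ^ t) P)
    (δ : ℝ) (hδ : 0 < δ) :
    ∃ (N : ℕ) (B α : ℝ), 0 < N ∧ 0 < B ∧ 0 < α ∧ ∀ n : ℕ, N ≤ n →
      P {ω : ℕ → ℕ+ |
          δ ≤ |(1 / (n : ℝ)) * Real.log ((Qent ω n : ℝ)) +
                ∫ ω', Real.log (Xtail ω' 1) ∂P|} ≤
        ENNReal.ofReal (B * Real.exp (-α * n)) := by
  obtain ⟨hP, ψ, hψ0, hψ, hm⟩ := hmix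
  have hA := hmom (1 / 2) (by norm_num) (by norm_num)
  have hi := qq_sqrt_integrable hP hψ0 hm hA
  have hlam := mean_tendsto hP hi
  obtain ⟨⟨N1, B1, α1, hB1, hα1, h1⟩, ⟨N2, B2, α2, hB2, hα2, h2⟩⟩ :=
    tails hP hψ0 hψ hm hi hδ hlam
  set I := ∫ ω, log (Xtail ω 1) ∂P with hI
  refine ⟨N1 + N2 + 1, B1 + B2, min α1 α2, by omega, by linarith, lt_min hα1 hα2,
    fun n hn => ?_⟩
  have hn0 : (0 : ℝ) < n := by exact_mod_cast (by omega : 0 < n)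
  have hsub : {ω : ℕ → ℕ+ | δ ≤ |(1 / (n : ℝ)) * Real.log ((Qent ω n : ℝ)) + I|} ⊆
      {ω | n * (-I + δ) ≤ log (qq ω n)} ∪ {ω | log (qq ω n) ≤ n * (-I - δ)} := by
    intro ω hω
    have hω' : δ ≤ |(1 / (n : ℝ)) * log (qq ω n) + I| := hω
    have he : (1 / (n : ℝ)) * log (qq ω n) = log (qq ω n) / n := by ring
    rw [he] at hω'
    rcases le_abs.1 hω' with h | h
    · left
      have h3 : -I + δ ≤ log (qq ω n) / n := by linarith
      rw [le_div_iff₀ hn0] at h3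
      change n * (-I + δ) ≤ log (qq ω n)
      linarith
    · right
      have h3 : log (qq ω n) / n ≤ -I - δ := by linarith
      rw [div_le_iff₀ hn0] at h3
      change log (qq ω n) ≤ n * (-I - δ)
      linarith
  refine (measure_mono hsub).trans ((measure_union_le _ _).trans ?_)
  refine le_trans (b := ENNReal.ofReal (B1 * exp (-α1 * n)) + ENNReal.ofReal (B2 * exp (-α2 * n)))
    (by gcongr; exacts [h1 n (by omega), h2 n (by omega)]) ?_
  rw [← ENNReal.ofReal_add (by positivity) (by positivity)]
  refine ENNReal.ofReal_le_ofReal ?_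
  rw [add_mul]
  gcongr
  · exact min_le_left _ _
  · exact min_le_right _ _
end
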